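/- There is an absolute constant C > 0 such that for every integer t ≥ 2, every K_t-free string graph on n > 2 vertices has chromatic number at most (log₂ n)^{C·log₂ t}. -/

import Mathlib

/-- A curve in the plane: the image of a continuous map from `[0,1]` to `ℝ²`. -/
def IsCurve (c : Set (ℝ × ℝ)) : Prop :=
  ∃ f : ℝ → ℝ × ℝ, ContinuousOn f (Set.Icc 0 1) ∧ c = f '' Set.Icc 0 1

/-- A string graph: an intersection graph of curves in the plane. -/
def IsStringGraph {V : Type*} (G : SimpleGraph V) : Prop :=
  ∃ γ : V → Set (ℝ × ℝ), (∀ v, IsCurve (γ v)) ∧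
    ∀ u v : V, u ≠ v → (G.Adj u v ↔ (γ u ∩ γ v).Nonempty)

/-!
Strings may be drawn as lists of neighboring lattice points, fine enough to keep disjoint ones
apart. Every string graph on `m` vertices without a large complete bipartite subgraph has a sparse
cut. Without a sparse cut it is an expander, so that any two strings are joined by a short route
and no string lies on many routes. If few pairs of strings met, five random strings would have
pairwise routes that cross nowhere, and these would draw a `K₅`. Hence a fraction `1 / polylog n`
of all pairs meet.

In such a dense family there are two disjoint initial pieces of strings between which many strings
have connecting pieces; as `K₅` is not planar, a positive proportion of the connectors still
crosses. Repeating this with connectors in place of strings, one gets connectors of connectors, all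
reachable from a common base. By the nonplanarity of `K₃,₃`, disjoint ones are comparable in a
partial order, and disjointness is comparability. Finally, a partial order with a fraction
`1 / polylog n` of incomparable pairs has a large biclique in its incomparability graph.

One can thus recurse along sparse cuts, losing a constant factor in total, or to the side of a
biclique with the smaller clique number, losing a factor `polylog n` while `t` is halved. This gives
independent sets of size `|U| / (log n) ^ O(log t)` in every vertex set `U`, which become the color
classes of a greedy coloring.
-/

namespace StringGraph

/-! ### Planarity of the square lattice -/

/-- The points of the square lattice, on which strings are drawn after discretization. -/
abbrev Point := ℤ × ℤ

/-- Reflexive adjacency in the square lattice. -/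
def Near (a b : Point) : Prop := (a.1 - b.1).natAbs + (a.2 - b.2).natAbs ≤ 1

lemma Near.symm {a b : Point} (h : Near a b) : Near b a := by
  unfold Near at *
  omega

lemma Near.refl (a : Point) : Near a a := by simp [Near]

/-- A step of the lattice to the right or upwards. -/
def IsForwardStep (a b : Point) : Prop :=
  (b.1 = a.1 + 1 ∧ b.2 = a.2) ∨ (b.1 = a.1 ∧ b.2 = a.2 + 1)

lemma Near.eq_or_isForwardStep {a b : Point} (h : Near a b) :
    a = b ∨ IsForwardStep a b ∨ IsForwardStep b a := by
  unfold Near at h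
  unfold IsForwardStep
  rw [Prod.ext_iff]
  omega

/-- The number of crossings of the step `ab` with the ray that leaves `v + (0, 1/2)` to the
right. -/
def stepCrossing (a b v : Point) : ℤ :=
  if a.2 ≠ b.2 ∧ min a.2 b.2 = v.2 ∧ v.1 < a.1 then 1 else 0

/-- The indicator of a linear order on the lattice: by rows upwards, and in each row from right to
left. It accounts for the displacement of the rays of `stepCrossing` from their lattice points. -/
def rowOrder (p q : Point) : ℤ :=
  if p.2 < q.2 ∨ (p.2 = q.2 ∧ q.1 < p.1) then 1 else 0

lemma rowOrder_add_rowOrder {a b : Point} (h : a ≠ b) : rowOrder a b + rowOrder b a = 1 := by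
  rw [Ne, Prod.ext_iff] at h
  unfold rowOrder
  split_ifs <;> omega

lemma stepCrossing_self (a v : Point) : stepCrossing a a v = 0 := by simp [stepCrossing]

lemma stepCrossing_comm {a b : Point} (h : Near a b) (v : Point) :
    stepCrossing a b v = stepCrossing b a v := by
  unfold stepCrossing Near at *
  split_ifs <;> omega

/-- The correction term of the parity lemmas for a walk from `a` to `b` and one from `c` to `d`. -/
def endpointOrder (a b c d : Point) : ℤ :=
  rowOrder c a + rowOrder c b + rowOrder d a + rowOrder d b

lemma stepCrossing_right (x y : ℤ) (v : Point) : stepCrossing (x, y) (x + 1, y) v = 0 := by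
  simp [stepCrossing]

lemma stepCrossing_up (x y : ℤ) (v : Point) :
    stepCrossing (x, y) (x, y + 1) v = if v.2 = y ∧ v.1 < x then 1 else 0 := by
  simp [stepCrossing, eq_comm]

lemma even_crossings_of_isForwardStep {a b c d : Point} (hab : IsForwardStep a b)
    (hcd : IsForwardStep c d) (hac : a ≠ c) (had : a ≠ d) (hbc : b ≠ c) (hbd : b ≠ d) :
    Even (stepCrossing a b c + stepCrossing a b d + stepCrossing c d a + stepCrossing c d b -
      endpointOrder a b c d) := by
  obtain ⟨a₁, a₂⟩ := a
  obtain ⟨b₁, b₂⟩ := b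
  obtain ⟨c₁, c₂⟩ := c
  obtain ⟨d₁, d₂⟩ := d
  simp only [ne_eq, Prod.mk.injEq] at hac had hbc hbd
  dsimp only [IsForwardStep] at hab hcd
  rcases hab with ⟨rfl, rfl⟩ | ⟨rfl, rfl⟩ <;>
  rcases hcd with ⟨rfl, rfl⟩ | ⟨rfl, rfl⟩ <;>
  simp only [stepCrossing_right, stepCrossing_up, endpointOrder, rowOrder, Int.even_iff] <;>
  omega

lemma even_crossings_of_near {a b c d : Point} (hab : Near a b) (hcd : Near c d)
    (hac : a ≠ c) (had : a ≠ d) (hbc : b ≠ c) (hbd : b ≠ d) :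
    Even (stepCrossing a b c + stepCrossing a b d + stepCrossing c d a + stepCrossing c d b -
      endpointOrder a b c d) := by
  wlog hab' : a = b ∨ IsForwardStep a b generalizing a b
  · have hba := hab.eq_or_isForwardStep.resolve_left (hab' ∘ Or.inl)
    have := this hab.symm hbc hbd hac had (.inr (hba.resolve_left (hab' ∘ Or.inr)))
    rw [stepCrossing_comm hab, stepCrossing_comm hab]
    unfold endpointOrder at *
    grind
  wlog hcd' : c = d ∨ IsForwardStep c d generalizing c d
  · have hdc := hcd.eq_or_isForwardStep.resolve_left (hcd' ∘ Or.inl)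
    have := this hcd.symm had hac hbd hbc (.inr (hdc.resolve_left (hcd' ∘ Or.inr)))
    rw [stepCrossing_comm hcd, stepCrossing_comm hcd]
    unfold endpointOrder at *
    grind
  rcases hab' with rfl | hab'
  · simp only [stepCrossing_self, endpointOrder]
    grind
  rcases hcd' with rfl | hcd'
  · simp only [stepCrossing_self, endpointOrder]
    grind
  exact even_crossings_of_isForwardStep hab' hcd' hac had hbc hbd

/-- Lattice walks in `S` from one point to another, indexed by the function that maps `v` to the
number of crossings of the walk with the ray of `v`. -/
inductive IsWalk (S : Set Point) : Point → Point → (Point → ℤ) → Prop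
  | nil {a : Point} (ha : a ∈ S) : IsWalk S a a (fun _ ↦ 0)
  | cons {a b c : Point} {r : Point → ℤ} (ha : a ∈ S) (hab : Near a b) (h : IsWalk S b c r) :
      IsWalk S a c (fun v ↦ stepCrossing a b v + r v)

lemma IsWalk.mem_left {S : Set Point} {a b : Point} {r : Point → ℤ} (h : IsWalk S a b r) :
    a ∈ S := by
  cases h <;> assumption

lemma IsWalk.even_crossings_of_near {S : Set Point} {a b c d : Point} {r : Point → ℤ}
    (h : IsWalk S c d r) (hab : Near a b) (ha : a ∉ S) (hb : b ∉ S) :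
    Even (stepCrossing a b c + stepCrossing a b d + r a + r b - endpointOrder a b c d) := by
  induction h with
  | nil => simp only [endpointOrder]; grind
  | cons hc hcd h ih =>
    have hd := h.mem_left
    have := StringGraph.even_crossings_of_near hab hcd
      (ne_of_mem_of_not_mem hc ha).symm (ne_of_mem_of_not_mem hd ha).symm
      (ne_of_mem_of_not_mem hc hb).symm (ne_of_mem_of_not_mem hd hb).symm
    unfold endpointOrder at *
    grind

/-- Disjoint walks cross evenly often, where crossings are counted through the rays of the
endpoints. -/
lemma IsWalk.even_crossings {S T : Set Point} (hST : Disjoint S T) {a b c d : Point}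
    {r s : Point → ℤ} (h : IsWalk S a b r) (h' : IsWalk T c d s) :
    Even (r c + r d + s a + s b - endpointOrder a b c d) := by
  induction h with
  | nil => simp only [endpointOrder]; grind
  | cons ha hab h ih =>
    have := h'.even_crossings_of_near hab (Set.disjoint_left.1 hST ha)
      (Set.disjoint_left.1 hST h.mem_left)
    unfold endpointOrder at *
    grind

/-- The points `a` and `b` are joined by a lattice walk in `S`. -/
inductive ConnectedIn (S : Set Point) : Point → Point → Prop
  | refl {a : Point} (ha : a ∈ S) : ConnectedIn S a a
  | step {a b c : Point} (ha : a ∈ S) (hab : Near a b) (h : ConnectedIn S b c) :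
      ConnectedIn S a c

namespace ConnectedIn

variable {S T : Set Point} {a b c : Point}

lemma mem_left (h : ConnectedIn S a b) : a ∈ S := by cases h <;> assumption

lemma mem_right (h : ConnectedIn S a b) : b ∈ S := by induction h <;> assumption

lemma trans (h : ConnectedIn S a b) (h' : ConnectedIn S b c) : ConnectedIn S a c := by
  induction h with
  | refl => exact h'
  | step ha hab _ ih => exact step ha hab (ih h')

lemma of_near (ha : a ∈ S) (hb : b ∈ S) (h : Near a b) : ConnectedIn S a b :=
  step ha h (refl hb)

lemma symm (h : ConnectedIn S a b) : ConnectedIn S b a := by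
  induction h with
  | refl ha => exact refl ha
  | step ha hab h ih => exact ih.trans (of_near h.mem_left ha hab.symm)

lemma mono (hST : S ⊆ T) (h : ConnectedIn S a b) : ConnectedIn T a b := by
  induction h with
  | refl ha => exact refl (hST ha)
  | step ha hab _ ih => exact step (hST ha) hab ih

lemma exists_isWalk (h : ConnectedIn S a b) : ∃ r, IsWalk S a b r := by
  induction h with
  | refl ha => exact ⟨_, .nil ha⟩
  | step ha hab _ ih => exact ih.imp' _ fun _ h ↦ .cons ha hab h

end ConnectedIn

lemma not_even_crossings_K5 {v : Fin 5 → Point} (hv : v.Injective) (r : Fin 5 → Fin 5 → Point → ℤ) :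
    ¬ ∀ i j k l, i < j → k < l → [i, j, k, l].Nodup →
      Even (r i j (v k) + r i j (v l) + r k l (v i) + r k l (v j) -
        endpointOrder (v i) (v j) (v k) (v l)) := by
  intro h
  have hv (i j) (hij : i ≠ j) := rowOrder_add_rowOrder (hv.ne hij)
  simp only [endpointOrder, Int.even_iff] at h
  -- In the sum over all pairs of independent edges, each `r i j (v k)` occurs twice.
  have := h 0 1 2 3 (by decide) (by decide) (by decide)
  have := h 0 2 1 3 (by decide) (by decide) (by decide)
  have := h 0 3 1 2 (by decide) (by decide) (by decide)
  have := h 0 1 2 4 (by decide) (by decide) (by decide)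
  have := h 0 2 1 4 (by decide) (by decide) (by decide)
  have := h 0 4 1 2 (by decide) (by decide) (by decide)
  have := h 0 1 3 4 (by decide) (by decide) (by decide)
  have := h 0 3 1 4 (by decide) (by decide) (by decide)
  have := h 0 4 1 3 (by decide) (by decide) (by decide)
  have := h 0 2 3 4 (by decide) (by decide) (by decide)
  have := h 0 3 2 4 (by decide) (by decide) (by decide)
  have := h 0 4 2 3 (by decide) (by decide) (by decide)
  have := h 1 2 3 4 (by decide) (by decide) (by decide)
  have := h 1 3 2 4 (by decide) (by decide) (by decide)
  have := h 1 4 2 3 (by decide) (by decide) (by decide)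
  have := hv 0 1 (by decide)
  have := hv 0 2 (by decide)
  have := hv 0 3 (by decide)
  have := hv 0 4 (by decide)
  have := hv 1 2 (by decide)
  have := hv 1 3 (by decide)
  have := hv 1 4 (by decide)
  have := hv 2 3 (by decide)
  have := hv 2 4 (by decide)
  have := hv 3 4 (by decide)
  omega

lemma exists_independent_edges {i j : Fin 5} (hij : i ≠ j) :
    ∃ k l m n : Fin 5, k < l ∧ m < n ∧ [k, l, m, n].Nodup ∧ (i = k ∨ i = l) ∧ (j = m ∨ j = n) := by
  decide +revert

/-- Nonplanarity of `K₅`: the edge `i j` is drawn in `S i j`, for `i < j`. -/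
theorem not_disjoint_drawing_K5 {v : Fin 5 → Point} {S : Fin 5 → Fin 5 → Set Point}
    (hS : ∀ i j, i < j → ConnectedIn (S i j) (v i) (v j)) :
    ¬ ∀ i j k l, i < j → k < l → [i, j, k, l].Nodup → Disjoint (S i j) (S k l) := by
  intro hd
  have hv : v.Injective := by
    refine fun i j hv_eq ↦ by_contra fun hij ↦ ?_
    obtain ⟨k, l, m, n, hkl, hmn, hnodup, hi, hj⟩ := exists_independent_edges hij
    have hvi : v i ∈ S k l := by
      rcases hi with rfl | rfl
      exacts [(hS _ _ hkl).mem_left, (hS _ _ hkl).mem_right]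
    have hvj : v j ∈ S m n := by
      rcases hj with rfl | rfl
      exacts [(hS _ _ hmn).mem_left, (hS _ _ hmn).mem_right]
    exact Set.disjoint_left.1 (hd k l m n hkl hmn hnodup) hvi (hv_eq ▸ hvj)
  choose! r hr using fun i j (hij : i < j) ↦ (hS i j hij).exists_isWalk
  exact not_even_crossings_K5 hv r fun i j k l hij hkl hnodup ↦
    (hr i j hij).even_crossings (hd i j k l hij hkl hnodup) (hr k l hkl)

lemma not_even_crossings_K33 {a b : Fin 3 → Point} (ha : a.Injective) (hb : b.Injective)
    (hab : ∀ i j, a i ≠ b j) (r : Fin 3 → Fin 3 → Point → ℤ) :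
    ¬ ∀ i j k l, i ≠ k → j ≠ l →
      Even (r i j (a k) + r i j (b l) + r k l (a i) + r k l (b j) -
        endpointOrder (a i) (b j) (a k) (b l)) := by
  intro h
  have ha (i j) (hij : i ≠ j) := rowOrder_add_rowOrder (ha.ne hij)
  have hb (i j) (hij : i ≠ j) := rowOrder_add_rowOrder (hb.ne hij)
  have hab (i j) := rowOrder_add_rowOrder (hab i j)
  simp only [endpointOrder, Int.even_iff] at h
  have := h 0 0 1 1 (by decide) (by decide)
  have := h 0 0 1 2 (by decide) (by decide)
  have := h 0 1 1 0 (by decide) (by decide)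
  have := h 0 1 1 2 (by decide) (by decide)
  have := h 0 2 1 0 (by decide) (by decide)
  have := h 0 2 1 1 (by decide) (by decide)
  have := h 0 0 2 1 (by decide) (by decide)
  have := h 0 0 2 2 (by decide) (by decide)
  have := h 0 1 2 0 (by decide) (by decide)
  have := h 0 1 2 2 (by decide) (by decide)
  have := h 0 2 2 0 (by decide) (by decide)
  have := h 0 2 2 1 (by decide) (by decide)
  have := h 1 0 2 1 (by decide) (by decide)
  have := h 1 0 2 2 (by decide) (by decide)
  have := h 1 1 2 0 (by decide) (by decide)
  have := h 1 1 2 2 (by decide) (by decide)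
  have := h 1 2 2 0 (by decide) (by decide)
  have := h 1 2 2 1 (by decide) (by decide)
  have := ha 0 1 (by decide)
  have := hb 0 1 (by decide)
  have := ha 0 2 (by decide)
  have := hb 0 2 (by decide)
  have := ha 1 2 (by decide)
  have := hb 1 2 (by decide)
  have := hab 0 0
  have := hab 0 1
  have := hab 0 2
  have := hab 1 0
  have := hab 1 1
  have := hab 1 2
  have := hab 2 0
  have := hab 2 1
  have := hab 2 2
  omega

/-- Nonplanarity of `K₃,₃`: the edge from `a i` to `b j` is drawn in `S i j`. -/
theorem not_disjoint_drawing_K33 {a b : Fin 3 → Point} {S : Fin 3 → Fin 3 → Set Point}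
    (hS : ∀ i j, ConnectedIn (S i j) (a i) (b j)) :
    ¬ ∀ i j k l, i ≠ k → j ≠ l → Disjoint (S i j) (S k l) := by
  intro hd
  have hother : ∀ i : Fin 3, ∃ j, i ≠ j := by decide
  have ha : a.Injective := fun i k h ↦ by_contra fun hik ↦
    Set.disjoint_left.1 (hd i 0 k 1 hik (by decide)) (hS i 0).mem_left (h ▸ (hS k 1).mem_left)
  have hb : b.Injective := fun j l h ↦ by_contra fun hjl ↦
    Set.disjoint_left.1 (hd 0 j 1 l (by decide) hjl) (hS 0 j).mem_right (h ▸ (hS 1 l).mem_right)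
  have hab (i j) : a i ≠ b j := by
    obtain ⟨k, hik⟩ := hother i
    obtain ⟨l, hjl⟩ := hother j
    exact fun h ↦ Set.disjoint_left.1 (hd i l k j hik hjl.symm)
      (hS i l).mem_left (h ▸ (hS k j).mem_right)
  choose r hr using fun i j ↦ (hS i j).exists_isWalk
  exact not_even_crossings_K33 ha hb hab r fun i j k l hik hjl ↦
    (hr i j).even_crossings (hd i j k l hik hjl) (hr k l)

/-! ### First and last hits along a list -/

section Lists

variable {α : Type*} {a : α} {l m A B C : List α}

/-- Two lists share an element. For lists of lattice points this is the intersection relation of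
strings. -/
def Meets (l m : List α) : Prop := ∃ p ∈ l, p ∈ m

lemma Meets.symm (h : Meets l m) : Meets m l := by
  obtain ⟨p, hl, hm⟩ := h
  exact ⟨p, hm, hl⟩

lemma meets_comm : Meets l m ↔ Meets m l := ⟨.symm, .symm⟩

lemma Meets.mono_left (hl : l ⊆ m) (h : Meets l A) : Meets m A := by
  obtain ⟨p, hpl, hpA⟩ := h
  exact ⟨p, hl hpl, hpA⟩

lemma Meets.mono_right (hl : l ⊆ m) (h : Meets A l) : Meets A m := (h.symm.mono_left hl).symm

@[simp] lemma not_meets_nil_left : ¬ Meets [] A := by simp [Meets]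

@[simp] lemma meets_reverse_left : Meets l.reverse A ↔ Meets l A := by simp [Meets]

variable [DecidableEq α]

/-- The index of the first element of `l` in `A`; it is the length of `l` if there is none. -/
def firstHit (l A : List α) : ℕ := l.findIdx (· ∈ A)

/-- The initial part of `l` before its first element in `A`. -/
def before (l A : List α) : List α := l.take (firstHit l A)

/-- The final part of `l` after its last element in `A`. -/
def afterLast (l A : List α) : List α := (before l.reverse A).reverse

/-- The part of `l` before its first element in `B`, and after the last element in `A` before
that. -/
def between (l A B : List α) : List α := afterLast (before l B) A

lemma firstHit_lt_length_iff : firstHit l A < l.length ↔ Meets l A := by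
  simp [firstHit, List.findIdx_lt_length, Meets]

lemma getElem_firstHit_mem (h : firstHit l A < l.length) : l[firstHit l A] ∈ A :=
  of_decide_eq_true (List.findIdx_getElem (w := h))

lemma before_prefix (l A : List α) : before l A <+: l := List.take_prefix _ _

lemma before_subset (l A : List α) : before l A ⊆ l := (before_prefix l A).subset

lemma meets_before_iff : Meets (before l A) B ↔ firstHit l B < firstHit l A := by
  constructor
  · rintro ⟨p, hp, hB⟩
    obtain ⟨i, hi, hil, rfl⟩ := List.mem_take_iff_getElem.1 hp
    refine lt_of_le_of_lt (not_lt.1 fun hlt ↦ ?_) (lt_min_iff.1 hi).1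
    exact absurd hB (by simpa using List.not_of_lt_findIdx hlt)
  · intro h
    have hlen := h.trans_le (List.findIdx_le_length)
    exact ⟨l[firstHit l B], List.mem_take_iff_getElem.2 ⟨_, by omega, rfl⟩,
      getElem_firstHit_mem hlen⟩

lemma not_meets_before (l A : List α) : ¬ Meets (before l A) A := by
  simp [meets_before_iff]

lemma notMem_of_mem_before (h : a ∈ before l A) : a ∉ A :=
  fun hA ↦ not_meets_before l A ⟨a, h, hA⟩

lemma firstHit_ne (hAB : ¬ Meets A B) (hA : Meets l A) : firstHit l A ≠ firstHit l B := by
  intro h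
  have hlen := firstHit_lt_length_iff.2 hA
  have hB : l[firstHit l A] ∈ B := by
    simp only [h] at hlen ⊢
    exact getElem_firstHit_mem hlen
  exact hAB ⟨_, getElem_firstHit_mem hlen, hB⟩

lemma exists_eq_before_append (h : Meets l A) :
    ∃ a rest, a ∈ A ∧ l = before l A ++ a :: rest := by
  have hlen := firstHit_lt_length_iff.2 h
  refine ⟨_, l.drop (firstHit l A + 1), getElem_firstHit_mem hlen, ?_⟩
  rw [before, List.getElem_cons_drop, List.take_append_drop]

lemma exists_eq_append_afterLast (h : Meets l A) :
    ∃ start a, a ∈ A ∧ l = start ++ a :: afterLast l A := by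
  obtain ⟨a, rest, ha, hl⟩ := exists_eq_before_append (meets_reverse_left.2 h)
  refine ⟨rest.reverse, a, ha, ?_⟩
  rw [afterLast, ← List.reverse_inj, hl]
  simp [← hl]

lemma exists_eq_append_between (hB : Meets l B) (hA : Meets (before l B) A) :
    ∃ start a b rest, a ∈ A ∧ b ∈ B ∧ l = start ++ a :: (between l A B ++ b :: rest) := by
  obtain ⟨b, rest, hb, hl⟩ := exists_eq_before_append hB
  obtain ⟨start, a, ha, hu⟩ := exists_eq_append_afterLast hA
  refine ⟨start, a, b, rest, ha, hb, ?_⟩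
  conv_lhs => rw [hl, hu]
  simp [between]

lemma afterLast_suffix (l A : List α) : afterLast l A <:+ l := by
  simpa [afterLast] using List.reverse_suffix.2 (before_prefix l.reverse A)

lemma between_infix (l A B : List α) : between l A B <:+: l :=
  (afterLast_suffix _ _).isInfix.trans (before_prefix l B).isInfix

lemma notMem_left_of_mem_between (h : a ∈ between l A B) : a ∉ A :=
  notMem_of_mem_before (List.mem_reverse.1 h)

lemma notMem_right_of_mem_between (h : a ∈ between l A B) : a ∉ B :=
  notMem_of_mem_before ((afterLast_suffix _ _).subset h)

lemma meets_afterLast_total (hAB : ¬ Meets A B) (hA : Meets l A) :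
    Meets (afterLast l A) B ∨ Meets (afterLast l B) A := by
  have hne := firstHit_ne hAB (meets_reverse_left.2 hA)
  simp only [afterLast, meets_reverse_left, meets_before_iff]
  omega

lemma exists_last_hit {ι : Type*} [Finite ι] [Nonempty ι] {h : ι → List α}
    (hdisj : Pairwise fun i j ↦ ¬ Meets (h i) (h j)) (hl : ∀ i, Meets l (h i)) :
    ∃ i, ∀ j ≠ i, Meets (before l (h i)) (h j) := by
  obtain ⟨i, hi⟩ := Finite.exists_max fun i ↦ firstHit l (h i)
  refine ⟨i, fun j hj ↦ meets_before_iff.2 ((hi j).lt_of_ne ?_)⟩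
  exact firstHit_ne (hdisj hj) (hl j)

/-- `l` runs from `A` to `B`, meeting `C` on the way. -/
def Runs (l A B C : List α) : Prop :=
  Meets l B ∧ Meets (before l B) A ∧ Meets (between l A B) C

lemma exists_perm_runs {h : Fin 3 → List α} (hdisj : Pairwise fun i j ↦ ¬ Meets (h i) (h j))
    (hl : ∀ i, Meets l (h i)) :
    ∃ σ : Equiv.Perm (Fin 3), Runs l (h (σ 0)) (h (σ 1)) (h (σ 2)) := by
  obtain ⟨j, hlast⟩ := exists_last_hit hdisj hl
  suffices H : ∃ i k, i ≠ j ∧ k ≠ j ∧ i ≠ k ∧ Runs l (h i) (h j) (h k) by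
    obtain ⟨i, k, hij, hkj, hik, hr⟩ := H
    obtain ⟨σ, rfl, rfl, rfl⟩ : ∃ σ : Equiv.Perm (Fin 3), σ 0 = i ∧ σ 1 = j ∧ σ 2 = k := by
      clear hlast hr
      revert i j k
      decide
    exact ⟨σ, hr⟩
  obtain ⟨i, k, hij, hkj, hik⟩ : ∃ i k : Fin 3, i ≠ j ∧ k ≠ j ∧ i ≠ k := by
    clear hlast
    revert j
    decide
  have hi := hlast i hij
  have hk := hlast k hkj
  rcases meets_afterLast_total (hdisj hik) hi with hr | hr
  · exact ⟨i, k, hij, hkj, hik, hl j, hi, hr⟩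
  · exact ⟨k, i, hkj, hij, hik.symm, hl j, hk, hr⟩

lemma exists_rel_head_between {R : α → α → Prop} (hl : l.IsChain R) (hB : Meets l B)
    (hA : Meets (before l B) A) {p : α} (hp : p ∈ (between l A B).head?) : ∃ a ∈ A, R a p := by
  obtain ⟨start, a, b, rest, ha, -, e⟩ := exists_eq_append_between hB hA
  rw [e] at hl
  refine ⟨a, ha, hl.right_of_append.rel_head? ?_⟩
  rw [List.head?_append]
  simp [Option.mem_def.1 hp]

lemma exists_rel_getLast_between {R : α → α → Prop} (hl : l.IsChain R) (hB : Meets l B)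
    (hA : Meets (before l B) A) {p : α} (hp : p ∈ (between l A B).getLast?) : ∃ b ∈ B, R p b := by
  obtain ⟨start, a, b, rest, -, hb, e⟩ := exists_eq_append_between hB hA
  rw [e] at hl
  exact ⟨b, hb, (List.isChain_append.1 hl.right_of_append.tail).2.2 p hp b (by simp)⟩

end Lists

/-- The set of points of a string. -/
def points (l : List Point) : Set Point := {p | p ∈ l}

lemma connectedIn_points {l : List Point} (hl : l.IsChain Near) {a b : Point} (ha : a ∈ l)
    (hb : b ∈ l) : ConnectedIn (points l) a b := by
  induction l generalizing a b with
  | nil => simp at ha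
  | cons c l ih =>
    have hlift {x y : Point} (hx : x ∈ l) (hy : y ∈ l) : ConnectedIn (points (c :: l)) x y :=
      (ih hl.tail hx hy).mono fun _ ↦ List.mem_cons_of_mem c
    have hc {x : Point} (hx : x ∈ l) : ConnectedIn (points (c :: l)) c x := by
      obtain ⟨y, l, rfl⟩ := List.exists_cons_of_ne_nil (List.ne_nil_of_mem hx)
      exact .step (b := y) (by simp [points]) (hl.rel_head? (by simp)) (hlift (by simp) hx)
    rcases List.mem_cons.1 ha with rfl | ha' <;> rcases List.mem_cons.1 hb with rfl | hb'
    · exact .refl (by simp [points])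
    · exact hc hb'
    · exact (hc ha').symm
    · exact hlift ha' hb'

/-! ### Densities of predicates on finite types -/

section Density

open Finset Fintype

variable {Ω Ω' ι : Type*} [Fintype Ω] [Fintype Ω'] {P Q : Ω → Prop} {a b c d : ℝ}

open scoped Classical in
/-- The probability that a uniformly random element of `Ω` satisfies `P`; it is `0` for empty
`Ω`. -/
noncomputable def density (P : Ω → Prop) : ℝ := (#{x | P x} : ℝ) / card Ω

lemma density_eq_card_div [DecidablePred P] : density P = (#{x | P x} : ℝ) / card Ω := by
  rw [density]
  congr!

lemma density_eq_sum_div [DecidablePred P] :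
    density P = (∑ x, if P x then (1 : ℝ) else 0) / card Ω := by
  rw [density_eq_card_div, sum_boole]

lemma le_density_iff [Nonempty Ω] [DecidablePred P] :
    c ≤ density P ↔ c * card Ω ≤ #{x | P x} := by
  rw [density_eq_card_div, le_div_iff₀ (by positivity)]

lemma density_le_iff [Nonempty Ω] [DecidablePred P] :
    density P ≤ c ↔ #{x | P x} ≤ c * card Ω := by
  rw [density_eq_card_div, div_le_iff₀ (by positivity)]

lemma density_nonneg (P : Ω → Prop) : 0 ≤ density P := by
  unfold density
  positivity

lemma density_le_one (P : Ω → Prop) : density P ≤ 1 := by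
  classical
  rw [density_eq_card_div]
  exact div_le_one_of_le₀ (by exact_mod_cast card_filter_le _ _) (by positivity)

lemma density_mono (h : ∀ x, P x → Q x) : density P ≤ density Q := by
  unfold density
  gcongr with x
  exact h x

lemma exists_of_density_pos (h : 0 < density P) : ∃ x, P x := by
  by_contra! hP
  simp [density, hP] at h

lemma exists_not_of_density_lt_one [Nonempty Ω] (h : density P < 1) : ∃ x, ¬ P x := by
  by_contra! hP
  simp [density, hP] at h

lemma density_comp_equiv (e : Ω ≃ Ω') (P : Ω' → Prop) :
    density (fun x ↦ P (e x)) = density P := by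
  classical
  rw [density_eq_sum_div, density_eq_sum_div, Fintype.card_congr e,
    Equiv.sum_comp e fun x ↦ if P x then (1 : ℝ) else 0]

lemma density_or_le (P Q : Ω → Prop) :
    density (fun x ↦ P x ∨ Q x) ≤ density P + density Q := by
  classical
  simp only [density_eq_card_div, filter_or, ← add_div]
  gcongr
  exact_mod_cast card_union_le _ _

lemma density_exists_le (s : Finset ι) (P : ι → Ω → Prop) :
    density (fun x ↦ ∃ i ∈ s, P i x) ≤ ∑ i ∈ s, density (P i) := by
  induction s using Finset.cons_induction with
  | empty => simp [density]
  | cons i s hi ih =>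
    rw [sum_cons]
    simp only [mem_cons, exists_eq_or_imp]
    exact (density_or_le _ _).trans (by gcongr)

lemma exists_div_card_le_density [Fintype ι] [Nonempty ι] (P : ι → Ω → Prop)
    (hQ : c ≤ density Q) (h : ∀ x, Q x → ∃ i, P i x) : ∃ i, c / card ι ≤ density (P i) := by
  by_contra! hc
  have hlt : ∑ i, density (P i) < ∑ _i : ι, c / card ι :=
    sum_lt_sum_of_nonempty univ_nonempty fun i _ ↦ hc i
  have hle : density Q ≤ ∑ i, density (P i) :=
    (density_mono fun x hx ↦ by simpa using h x hx).trans (density_exists_le univ P)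
  rw [sum_const, card_univ, nsmul_eq_mul, mul_div_cancel₀ _ (by positivity)] at hlt
  linarith

lemma sub_le_density_and_not (hP : a ≤ density P) (hQ : density Q ≤ b) :
    a - b ≤ density (fun x ↦ P x ∧ ¬ Q x) := by
  have hle : density P ≤ density (fun x ↦ (P x ∧ ¬ Q x) ∨ Q x) :=
    density_mono fun x hx ↦ by tauto
  linarith [density_or_le (fun x ↦ P x ∧ ¬ Q x) Q]

lemma density_prod (P : Ω × Ω' → Prop) :
    density P = (∑ x, density fun y ↦ P (x, y)) / card Ω := by
  classical
  simp only [density_eq_sum_div, Fintype.sum_prod_type, ← sum_div, card_prod]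
  rw [div_div, Nat.cast_mul, mul_comm]

lemma exists_le_density_of_prod [Nonempty Ω] {P : Ω × Ω' → Prop} (h : c ≤ density P) :
    ∃ x, c ≤ density fun y ↦ P (x, y) := by
  by_contra! hc
  rw [density_prod, le_div_iff₀ (by positivity)] at h
  have hlt := sum_lt_sum_of_nonempty (univ_nonempty (α := Ω)) fun x _ ↦ hc x
  rw [sum_const, card_univ, nsmul_eq_mul] at hlt
  linarith

lemma density_prod_le [Nonempty Ω] {P : Ω × Ω' → Prop} (h : ∀ x, density (fun y ↦ P (x, y)) ≤ c) :
    density P ≤ c := by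
  obtain ⟨x, hx⟩ := exists_le_density_of_prod (P := P) le_rfl
  exact hx.trans (h x)

lemma mul_le_density_prod {P : Ω × Ω' → Prop} (hc : 0 ≤ c)
    (h : d ≤ density fun x ↦ c ≤ density fun y ↦ P (x, y)) : c * d ≤ density P := by
  classical
  rw [density_prod]
  calc c * d ≤ c * density fun x ↦ c ≤ density fun y ↦ P (x, y) := by gcongr
    _ = (∑ x, c * if c ≤ density fun y ↦ P (x, y) then (1 : ℝ) else 0) / card Ω := by
      rw [density_eq_sum_div, ← mul_sum, mul_div_assoc]
    _ ≤ _ := by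
      gcongr with x
      split_ifs with hx
      · simpa using hx
      · simpa using density_nonneg _

lemma density_snd [Nonempty Ω] (P : Ω' → Prop) :
    density (fun x : Ω × Ω' ↦ P x.2) = density P := by
  simp only [density_prod, sum_const, card_univ, nsmul_eq_mul]
  exact mul_div_cancel_left₀ _ (by positivity)

lemma density_fst [Nonempty Ω'] (P : Ω → Prop) :
    density (fun x : Ω × Ω' ↦ P x.1) = density P := by
  rw [← density_snd (Ω := Ω') P]
  exact density_comp_equiv (Equiv.prodComm Ω Ω') fun x ↦ P x.2

lemma density_pi [Fintype ι] [DecidableEq ι] (P : ι → Ω → Prop) :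
    density (fun f : ι → Ω ↦ ∀ i, P i (f i)) = ∏ i, density (P i) := by
  classical
  simp only [density_eq_card_div, prod_div_distrib]
  congr 1
  · rw [← Nat.cast_prod, ← card_piFinset]
    congr 2
    ext f
    simp
  · simp

lemma density_pow_le_density_forall (m : ℕ) [Nonempty Ω] (R : Ω → Ω' → Prop) :
    density (fun x : Ω × Ω' ↦ R x.1 x.2) ^ m ≤
      density fun x : Ω × (Fin m → Ω') ↦ ∀ i, R x.1 (x.2 i) := by
  have hpow (x : Ω) : density (fun y : Fin m → Ω' ↦ ∀ i, R x (y i)) =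
      density (fun y ↦ R x y) ^ m := by
    rw [density_pi fun _ ↦ R x]
    simp
  have hjensen := Real.pow_arith_mean_le_arith_mean_pow univ (fun _ : Ω ↦ 1 / (card Ω : ℝ))
    (fun x ↦ density fun y ↦ R x y) (fun _ _ ↦ by positivity) (by simp)
    (fun _ _ ↦ density_nonneg _) m
  simp only [density_prod, hpow, div_eq_inv_mul]
  simpa [← mul_sum] using hjensen

lemma density_pow_le_density_star (m : ℕ) [Nonempty Ω] (R : Ω → Ω → Prop) :
    density (fun x : Ω × Ω ↦ R x.1 x.2) ^ m ≤
      density fun f : Fin (m + 1) → Ω ↦ ∀ i ≠ 0, R (f 0) (f i) := by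
  refine (density_pow_le_density_forall m R).trans ?_
  rw [← density_comp_equiv (Fin.consEquiv fun _ : Fin (m + 1) ↦ Ω)]
  refine density_mono fun x hx i hi ↦ ?_
  obtain ⟨j, rfl⟩ := Fin.exists_succ_eq.2 hi
  exact hx j

lemma density_comp_injective {κ : Type*} [Fintype ι] [DecidableEq ι] [Fintype κ] [DecidableEq κ]
    [Nonempty Ω] {e : κ → ι} (he : Function.Injective e) (P : (κ → Ω) → Prop) :
    density (fun f : ι → Ω ↦ P (fun k ↦ f (e k))) = density P := by
  classical
  let split := Equiv.piEquivPiSubtypeProd (· ∈ Set.range e) (fun _ : ι ↦ Ω)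
  let reindex : ({i // i ∈ Set.range e} → Ω) ≃ (κ → Ω) :=
    Equiv.arrowCongr (Equiv.ofInjective e he).symm (Equiv.refl Ω)
  rw [← density_comp_equiv reindex,
    ← density_fst (Ω' := {i // i ∉ Set.range e} → Ω) fun x ↦ P (reindex x)]
  exact density_comp_equiv split fun x ↦ P (reindex x.1)

lemma density_pair [Fintype ι] [DecidableEq ι] [Nonempty Ω] {p q : ι} (hpq : p ≠ q)
    (R : Ω → Ω → Prop) :
    density (fun f : ι → Ω ↦ R (f p) (f q)) = density fun x : Ω × Ω ↦ R x.1 x.2 := by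
  rw [← density_comp_equiv (finTwoArrowEquiv Ω)]
  refine density_comp_injective (e := ![p, q]) ?_ fun f ↦ R (f 0) (f 1)
  simpa [Function.Injective, Fin.forall_fin_two] using ⟨hpq, hpq.symm⟩

lemma density_update [Fintype ι] [DecidableEq ι] [Nonempty Ω] (k : ι) (P : (ι → Ω) → Prop) :
    density (fun x : (ι → Ω) × Ω ↦ P (Function.update x.1 k x.2)) = density P := by
  let swap : (ι → Ω) × Ω ≃ (ι → Ω) × Ω :=
    { toFun := fun x ↦ (Function.update x.1 k x.2, x.1 k)
      invFun := fun x ↦ (Function.update x.1 k x.2, x.1 k)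
      left_inv := fun x ↦ by ext <;> simp
      right_inv := fun x ↦ by ext <;> simp }
  rw [← density_fst (Ω' := Ω) P]
  exact density_comp_equiv swap fun x ↦ P x.1

lemma density_le_of_update [Fintype ι] [DecidableEq ι] [Nonempty Ω] (k : ι)
    {P : (ι → Ω) → Prop} (h : ∀ f, density (fun x ↦ P (Function.update f k x)) ≤ c) :
    density P ≤ c := by
  rw [← density_update k]
  exact density_prod_le h

lemma exists_le_density_update [Fintype ι] [DecidableEq ι] [Nonempty Ω] (k : ι)
    {P : Ω' × (ι → Ω) → Prop} (h : c ≤ density P) :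
    ∃ f, c ≤ density fun x : Ω' × Ω ↦ P (x.1, Function.update f k x.2) := by
  have hresample : density (fun x : Ω' × (ι → Ω) × Ω ↦ P (x.1, Function.update x.2.1 k x.2.2)) =
      density P := by
    rw [density_prod, density_prod]
    congr! 2 with x
    exact density_update k fun f ↦ P (x, f)
  let reorder : (ι → Ω) × Ω' × Ω ≃ Ω' × (ι → Ω) × Ω :=
    { toFun := fun x ↦ (x.2.1, x.1, x.2.2)
      invFun := fun x ↦ (x.2.1, x.1, x.2.2) }
  have hreorder := density_comp_equiv reorder
    fun x ↦ P (x.1, Function.update x.2.1 k x.2.2)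
  exact exists_le_density_of_prod
    (P := fun x : (ι → Ω) × Ω' × Ω ↦ P (x.2.1, Function.update x.1 k x.2.2))
    (h.trans_eq (hresample.symm.trans hreorder.symm))

end Density

/-! ### Finding a string that crosses three disjoint hairs -/

section Ramsey

open Finset

variable {α : Type*}

lemma exists_isNClique_succ {G : SimpleGraph α} {s N : Finset α} {v : α} {k : ℕ} (hv : v ∈ s)
    (hN : N ⊆ s) (hadj : ∀ a ∈ N, G.Adj v a) (h : ∃ t ⊆ N, G.IsNClique k t) :
    ∃ t ⊆ s, G.IsNClique (k + 1) t := by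
  classical
  obtain ⟨t, htN, ht⟩ := h
  exact ⟨insert v t, insert_subset hv (htN.trans hN), ht.insert fun a ha ↦ hadj a (htN ha)⟩

/-- The bound of Erdős and Szekeres for Ramsey numbers. -/
theorem exists_isNClique_or_isNClique_compl (G : SimpleGraph α) (k m : ℕ) (s : Finset α)
    (hs : (k + m).choose k ≤ #s) :
    (∃ t ⊆ s, G.IsNClique (k + 1) t) ∨ ∃ t ⊆ s, Gᶜ.IsNClique (m + 1) t := by
  classical
  obtain ⟨v, hv⟩ : s.Nonempty := card_pos.1 ((Nat.choose_pos (by omega)).trans_le hs)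
  induction hn : k + m generalizing k m s v with
  | zero => exact .inl ⟨{v}, by simpa, by simp [show k = 0 by omega]⟩
  | succ n ih =>
  rcases k with - | k
  · exact .inl ⟨{v}, by simpa, by simp⟩
  rcases m with - | m
  · exact .inr ⟨{v}, by simpa, by simp⟩
  have hcard : #{a ∈ s.erase v | G.Adj v a} + #{a ∈ s.erase v | ¬ G.Adj v a} = #(s.erase v) :=
    card_filter_add_card_filter_not _
  rw [card_erase_of_mem hv] at hcard
  rw [hn, Nat.choose_succ_succ', show n = k + (m + 1) by omega] at hs
  have hsub (p : α → Prop) [DecidablePred p] : {a ∈ s.erase v | p a} ⊆ s :=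
    (filter_subset _ _).trans (erase_subset _ _)
  rcases le_or_gt ((k + (m + 1)).choose k) #{a ∈ s.erase v | G.Adj v a} with h | h
  · obtain ⟨w, hw⟩ := card_pos.1 ((Nat.choose_pos (by omega)).trans_le h)
    refine (ih k (m + 1) _ h w hw (by omega)).imp ?_
      fun ⟨t, hts, ht⟩ ↦ ⟨t, hts.trans (hsub _), ht⟩
    exact exists_isNClique_succ hv (hsub _) fun a ha ↦ (mem_filter.1 ha).2
  · have hpos := card_pos.2 ⟨v, hv⟩
    have h' : (k + 1 + m).choose (k + 1) ≤ #{a ∈ s.erase v | ¬ G.Adj v a} := by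
      rw [show k + 1 + m = k + (m + 1) by ring]
      omega
    obtain ⟨w, hw⟩ := card_pos.1 ((Nat.choose_pos (by omega)).trans_le h')
    refine (ih (k + 1) m _ h' w hw (by omega)).imp
      (fun ⟨t, hts, ht⟩ ↦ ⟨t, hts.trans (hsub _), ht⟩) ?_
    refine exists_isNClique_succ hv (hsub _) fun a ha ↦ ?_
    obtain ⟨hav, hnadj⟩ := mem_filter.1 ha
    exact (SimpleGraph.compl_adj _ _ _).2 ⟨(ne_of_mem_erase hav).symm, hnadj⟩

lemma exists_lt_lt_of_card_eq_five {t : Finset α} (ht : #t = 5) {F : α → α → ℕ}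
    (hF : ∀ x ∈ t, ∀ i ∈ t, ∀ j ∈ t, i ≠ j → i ≠ x → j ≠ x → F x i ≠ F x j) :
    ∃ x ∈ t, ∃ y ∈ t, ∃ z ∈ t, ∃ c ∈ t, [x, y, z, c].Nodup ∧
      F x z < F x c ∧ F x z < F x y ∧ F y z < F y c := by
  classical
  obtain ⟨x, hx⟩ := card_pos.1 (by omega : 0 < #t)
  obtain ⟨z, hz, hmin⟩ := exists_min_image (t.erase x) (F x)
    (card_pos.1 (by rw [card_erase_of_mem hx]; omega))
  obtain ⟨a, b, c, hab, hac, hbc, habc⟩ : ∃ a b c, a ≠ b ∧ a ≠ c ∧ b ≠ c ∧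
      (t.erase x).erase z = {a, b, c} :=
    card_eq_three.1 (by rw [card_erase_of_mem hz, card_erase_of_mem hx, ht])
  have hmem (i : α) : i ∈ (t.erase x).erase z ↔ i = a ∨ i = b ∨ i = c := by simp [habc]
  simp only [mem_erase] at hz hmem hmin
  obtain ⟨haz, hax, ha⟩ := (hmem a).2 (by simp)
  obtain ⟨hbz, hbx, hb⟩ := (hmem b).2 (by simp)
  obtain ⟨hcz, hcx, hc⟩ := (hmem c).2 (by simp)
  have hlt {i : α} (hi : i ∈ t) (hix : i ≠ x) (hiz : i ≠ z) : F x z < F x i :=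
    (hmin i ⟨hix, hi⟩).lt_of_ne (hF x hx z hz.2 i hi hiz.symm hz.1 hix)
  by_contra! hcon
  have hlast {y i : α} (hy : y ∈ t) (hi : i ∈ t) (hyi : y ≠ i) (hyx : y ≠ x) (hyz : y ≠ z)
      (hix : i ≠ x) (hiz : i ≠ z) : F y i < F y z :=
    (hcon x hx y hy z hz.2 i hi (by simp [hyx.symm, hz.1.symm, hix.symm, hyz, hyi, hiz.symm])
      (hlt hi hix hiz) (hlt hy hyx hyz)).lt_of_ne
        (hF y hy i hi z hz.2 hiz hyi.symm hyz.symm)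
  rcases lt_or_gt_of_ne (hF a ha b hb c hc hbc hab.symm hac.symm) with h | h
  · exact (hlast hc hb hbc.symm hcx hcz hbx hbz).not_ge
      (hcon a ha c hc b hb z hz.2
        (by simp [hac, hab, haz, hbc.symm, hcz, hbz]) (hlast ha hb hab hax haz hbx hbz) h)
  · exact (hlast hb hc hbc hbx hbz hcx hcz).not_ge
      (hcon a ha b hb c hc z hz.2
        (by simp [hac, hab, haz, hbc, hcz, hbz]) (hlast ha hc hac hax haz hcx hcz) h)

end Ramsey

section Tripods

open Finset Fintype

/-- Some pair of sets of size at least `s` is completely related by `r`. -/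
def HasBiclique {V : Type*} (r : V → V → Prop) (s : ℝ) : Prop :=
  ∃ A B : Finset V, s ≤ #A ∧ s ≤ #B ∧ ∀ a ∈ A, ∀ b ∈ B, r a b

lemma HasBiclique.mono {V : Type*} {r r' : V → V → Prop} {s s' : ℝ} (h : HasBiclique r s)
    (hs : s' ≤ s) (hr : ∀ a b, r a b → r' a b) : HasBiclique r' s' := by
  obtain ⟨A, B, hA, hB, hAB⟩ := h
  exact ⟨A, B, hs.trans hA, hs.trans hB, fun a ha b hb ↦ hr a b (hAB a ha b hb)⟩

variable {V α : Type*} [Fintype V] [DecidableEq α] {l : V → List α} {κ δ ε : ℝ} {x y z c : V}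

lemma density_firstHit_eq_le
    (hl : ¬ HasBiclique (fun x y ↦ Meets (l x) (l y)) (δ * card V)) (h : Meets (l x) (l z)) :
    density (fun c ↦ firstHit (l x) (l z) = firstHit (l x) (l c)) ≤ δ := by
  classical
  have : Nonempty V := ⟨x⟩
  rw [density_le_iff]
  by_contra! hlt
  refine hl ⟨_, _, hlt.le, hlt.le, ?_⟩
  have hlen := firstHit_lt_length_iff.2 h
  have hmem {c : V} (hc : firstHit (l x) (l z) = firstHit (l x) (l c)) :
      (l x)[firstHit (l x) (l z)] ∈ l c := by
    simp only [hc] at hlen ⊢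
    exact getElem_firstHit_mem hlen
  intro a ha b hb
  exact ⟨_, hmem (mem_filter.1 ha).2, hmem (mem_filter.1 hb).2⟩

lemma density_small_gap_le (hκ : 0 ≤ κ) (g : V → ℕ) (m : ℕ) :
    density (fun c ↦ m < g c ∧ density (fun w ↦ m < g w ∧ g w ≤ g c) < κ) ≤ κ := by
  classical
  set S : Finset V := {c | m < g c ∧ density (fun w ↦ m < g w ∧ g w ≤ g c) < κ} with hS
  obtain hempty | hne := S.eq_empty_or_nonempty
  · rwa [density_eq_card_div, ← hS, hempty, Finset.card_empty, Nat.cast_zero, zero_div]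
  · obtain ⟨c, hc, hmax⟩ := exists_max_image S g hne
    exact (density_mono fun d hd ↦ ⟨hd.1, hmax d (by simpa [hS])⟩).trans
      (mem_filter.1 hc).2.2.le

lemma density_small_end_le (hκ : 0 ≤ κ) (hδ : 0 ≤ δ)
    (hl : ¬ HasBiclique (fun x y ↦ Meets (l x) (l y)) (δ * card V)) (x : V) :
    density (fun z ↦ Meets (l x) (l z) ∧
      density (fun w ↦ firstHit (l x) (l z) < firstHit (l x) (l w)) < κ) ≤ κ + δ := by
  classical
  set S : Finset V := {z | Meets (l x) (l z) ∧
    density (fun w ↦ firstHit (l x) (l z) < firstHit (l x) (l w)) < κ} with hS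
  obtain hempty | hne := S.eq_empty_or_nonempty
  · rw [density_eq_card_div, ← hS, hempty, Finset.card_empty, Nat.cast_zero, zero_div]
    positivity
  · obtain ⟨c, hc, hmin⟩ := exists_min_image S (fun z ↦ firstHit (l x) (l z)) hne
    obtain ⟨hmeets, hlt⟩ := (mem_filter.1 hc).2
    have htie := density_firstHit_eq_le hl hmeets
    refine (density_mono fun d hd ↦ lt_or_eq_of_le (hmin d ?_)).trans
      ((density_or_le _ _).trans (add_le_add hlt.le htie))
    simpa [hS] using hd

/-- On the string of `x`, the first hit of `z` coincides with that of `y`, or it comes later but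
only for a small proportion of strings the first hit lies between these two. -/
def IsBadTriple (l : V → List α) (κ : ℝ) (x y z : V) : Prop :=
  (Meets (l x) (l y) ∧ firstHit (l x) (l y) = firstHit (l x) (l z)) ∨
    (firstHit (l x) (l y) < firstHit (l x) (l z) ∧
      density (fun w ↦ firstHit (l x) (l y) < firstHit (l x) (l w) ∧
        firstHit (l x) (l w) ≤ firstHit (l x) (l z)) < κ)

/-- The string of `x` meets that of `y`, and its first hit comes later for only a small proportion
of strings. -/
def IsBadPair (l : V → List α) (κ : ℝ) (x y : V) : Prop :=
  Meets (l x) (l y) ∧ density (fun w ↦ firstHit (l x) (l y) < firstHit (l x) (l w)) < κ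

lemma density_isBadTriple_le (hκ : 0 ≤ κ) (hδ : 0 ≤ δ)
    (hl : ¬ HasBiclique (fun x y ↦ Meets (l x) (l y)) (δ * card V)) (x y : V) :
    density (IsBadTriple l κ x y) ≤ κ + δ := by
  have hgap := density_small_gap_le hκ (fun c ↦ firstHit (l x) (l c)) (firstHit (l x) (l y))
  by_cases hxy : Meets (l x) (l y)
  · have htie := density_firstHit_eq_le hl hxy
    rw [add_comm]
    exact (density_mono fun z hz ↦ hz.imp_left And.right).trans
      ((density_or_le _ _).trans (add_le_add htie hgap))
  · refine (density_mono fun z hz ↦ ?_).trans (hgap.trans (le_add_of_nonneg_right hδ))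
    exact hz.resolve_left fun h ↦ hxy h.1

/-- A tuple of strings without bad pairs and triples. -/
def IsGeneric {ι : Type*} (l : V → List α) (κ : ℝ) (f : ι → V) : Prop :=
  (∀ i j k, i ≠ k → j ≠ k → ¬ IsBadTriple l κ (f i) (f j) (f k)) ∧
    ∀ i j, i ≠ j → ¬ IsBadPair l κ (f i) (f j)

lemma density_isBadTriple_apply_le {ι : Type*} [Fintype ι] [DecidableEq ι] [Nonempty V]
    (hκ : 0 ≤ κ) (hδ : 0 ≤ δ)
    (hl : ¬ HasBiclique (fun x y ↦ Meets (l x) (l y)) (δ * card V)) {i j k : ι} (hik : i ≠ k)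
    (hjk : j ≠ k) :
    density (fun f : ι → V ↦ IsBadTriple l κ (f i) (f j) (f k)) ≤ κ + δ := by
  refine density_le_of_update k fun f ↦ ?_
  simpa only [Function.update_of_ne hik, Function.update_of_ne hjk, Function.update_self] using
    density_isBadTriple_le hκ hδ hl (f i) (f j)

lemma density_isBadPair_apply_le {ι : Type*} [Fintype ι] [DecidableEq ι] [Nonempty V]
    (hκ : 0 ≤ κ) (hδ : 0 ≤ δ)
    (hl : ¬ HasBiclique (fun x y ↦ Meets (l x) (l y)) (δ * card V)) {i j : ι} (hij : i ≠ j) :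
    density (fun f : ι → V ↦ IsBadPair l κ (f i) (f j)) ≤ κ + δ := by
  refine density_le_of_update j fun f ↦ ?_
  simpa only [IsBadPair, Function.update_of_ne hij, Function.update_self] using
    density_small_end_le hκ hδ hl (f i)

lemma density_not_isGeneric_le {ι : Type*} [Fintype ι] [DecidableEq ι] [Nonempty V]
    (hκ : 0 ≤ κ) (hδ : 0 ≤ δ)
    (hl : ¬ HasBiclique (fun x y ↦ Meets (l x) (l y)) (δ * card V)) :
    density (fun f : ι → V ↦ ¬ IsGeneric l κ f) ≤
      (card ι ^ 3 + card ι ^ 2) * (κ + δ) := by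
  let triples : Finset (ι × ι × ι) := {t | t.1 ≠ t.2.2 ∧ t.2.1 ≠ t.2.2}
  let pairs : Finset (ι × ι) := {t | t.1 ≠ t.2}
  have htriples : (#triples : ℝ) ≤ card ι ^ 3 := by
    exact_mod_cast (card_le_univ triples).trans_eq (by simp; ring)
  have hpairs : (#pairs : ℝ) ≤ card ι ^ 2 := by
    exact_mod_cast (card_le_univ pairs).trans_eq (by simp; ring)
  have hbad : density (fun f : ι → V ↦ ¬ IsGeneric l κ f) ≤ density fun f : ι → V ↦
      (∃ t ∈ triples, IsBadTriple l κ (f t.1) (f t.2.1) (f t.2.2)) ∨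
        ∃ t ∈ pairs, IsBadPair l κ (f t.1) (f t.2) := by
    refine density_mono fun f hf ↦ ?_
    by_contra! hgood
    exact hf ⟨fun i j k hik hjk ↦ hgood.1 (i, j, k) (by simp [triples, hik, hjk]),
      fun i j hij ↦ hgood.2 (i, j) (by simp [pairs, hij])⟩
  have hsum₃ : ∑ t ∈ triples, density (fun f : ι → V ↦
      IsBadTriple l κ (f t.1) (f t.2.1) (f t.2.2)) ≤ #triples * (κ + δ) := by
    rw [← nsmul_eq_mul]
    refine sum_le_card_nsmul _ _ _ fun t ht ↦ ?_
    exact density_isBadTriple_apply_le hκ hδ hl (mem_filter.1 ht).2.1 (mem_filter.1 ht).2.2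
  have hsum₂ : ∑ t ∈ pairs, density (fun f : ι → V ↦ IsBadPair l κ (f t.1) (f t.2)) ≤
      #pairs * (κ + δ) := by
    rw [← nsmul_eq_mul]
    refine sum_le_card_nsmul _ _ _ fun t ht ↦ ?_
    exact density_isBadPair_apply_le hκ hδ hl (mem_filter.1 ht).2
  calc _ ≤ _ := hbad.trans (density_or_le _ _)
    _ ≤ _ := add_le_add (density_exists_le _ _) (density_exists_le _ _)
    _ ≤ #triples * (κ + δ) + #pairs * (κ + δ) := add_le_add hsum₃ hsum₂
    _ ≤ card ι ^ 3 * (κ + δ) + card ι ^ 2 * (κ + δ) := by gcongr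
    _ = _ := by ring

/-- The initial piece of the first string that ends just before it reaches the second one. -/
def hair (l : V → List α) (h : V × V) : List α := before (l h.1) (l h.2)

/-- The string of `z` meets three pairwise disjoint hairs. -/
def IsTripod (l : V → List α) (h : Fin 3 → V × V) (z : V) : Prop :=
  (Pairwise fun i j ↦ ¬ Meets (hair l (h i)) (hair l (h j))) ∧ ∀ i, Meets (l z) (hair l (h i))

lemma pow_three_le_density_isTripod (hκ : 0 ≤ κ) {a : Fin 3 → V} {W : Fin 3 → V → Prop}
    (hW : ∀ i, κ ≤ density (W i)) (hmeets : ∀ i w, W i w → Meets (hair l (a i, w)) (l z))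
    (hdisj : ∀ w : Fin 3 → V, (∀ i, W i (w i)) → ∀ i j, i < j →
      ¬ Meets (hair l (a i, w i)) (hair l (a j, w j))) :
    κ ^ 3 ≤ density fun w : Fin 3 → V ↦ IsTripod l (fun i ↦ (a i, w i)) z := by
  calc κ ^ 3 = ∏ _i : Fin 3, κ := by simp
    _ ≤ ∏ i, density (W i) := prod_le_prod (fun _ _ ↦ hκ) fun i _ ↦ hW i
    _ = density fun w : Fin 3 → V ↦ ∀ i, W i (w i) := (density_pi W).symm
    _ ≤ _ := density_mono fun w hw ↦ ⟨fun i j hij h ↦ ?_, fun i ↦ (hmeets i _ (hw i)).symm⟩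
  rcases hij.lt_or_gt with hlt | hlt
  · exact hdisj w hw i j hlt h
  · exact hdisj w hw j i hlt h.symm

lemma pow_three_le_density_isTripod_of_not_meets (hκ : 0 ≤ κ) {a : Fin 3 → V}
    (hdisj : Pairwise fun i j ↦ ¬ Meets (l (a i)) (l (a j)))
    (hend : ∀ i, κ ≤ density fun w ↦ firstHit (l (a i)) (l z) < firstHit (l (a i)) (l w)) :
    κ ^ 3 ≤ density fun w : Fin 3 → V ↦ IsTripod l (fun i ↦ (a i, w i)) z :=
  pow_three_le_density_isTripod hκ hend (fun _ _ h ↦ meets_before_iff.2 h) fun _ _ _ _ hij h ↦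
    hdisj hij.ne ((h.mono_left (before_subset _ _)).mono_right (before_subset _ _))

lemma not_meets_before_of_firstHit_le {l A B C : List α} (h : firstHit l A ≤ firstHit l B) :
    ¬ Meets (before l A) (before B C) :=
  fun hmeets ↦ h.not_gt (meets_before_iff.1 (hmeets.mono_right (before_subset _ _)))

/-- The hair of `a 0` stops before `a 1` and `a 2`, and the hair of `a 1` stops before `a 2`. -/
lemma pow_three_le_density_isTripod_of_le (hκ : 0 ≤ κ) {a : Fin 3 → V}
    (hx : κ ≤ density fun w ↦ firstHit (l (a 0)) (l z) < firstHit (l (a 0)) (l w) ∧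
      firstHit (l (a 0)) (l w) ≤ min (firstHit (l (a 0)) (l (a 2))) (firstHit (l (a 0)) (l (a 1))))
    (hy : κ ≤ density fun w ↦ firstHit (l (a 1)) (l z) < firstHit (l (a 1)) (l w) ∧
      firstHit (l (a 1)) (l w) ≤ firstHit (l (a 1)) (l (a 2)))
    (hc : κ ≤ density fun w ↦ firstHit (l (a 2)) (l z) < firstHit (l (a 2)) (l w)) :
    κ ^ 3 ≤ density fun w : Fin 3 → V ↦ IsTripod l (fun i ↦ (a i, w i)) z := by
  refine pow_three_le_density_isTripod hκ (W := ![
    fun w ↦ firstHit (l (a 0)) (l z) < firstHit (l (a 0)) (l w) ∧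
      firstHit (l (a 0)) (l w) ≤ min (firstHit (l (a 0)) (l (a 2))) (firstHit (l (a 0)) (l (a 1))),
    fun w ↦ firstHit (l (a 1)) (l z) < firstHit (l (a 1)) (l w) ∧
      firstHit (l (a 1)) (l w) ≤ firstHit (l (a 1)) (l (a 2)),
    fun w ↦ firstHit (l (a 2)) (l z) < firstHit (l (a 2)) (l w)]) ?_ ?_ ?_
  · exact Fin.forall_fin_succ.2 ⟨hx, Fin.forall_fin_two.2 ⟨hy, hc⟩⟩
  · intro i w hw
    refine meets_before_iff.2 ?_
    fin_cases i
    exacts [hw.1, hw.1, hw]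
  · intro w hw i j hij
    have hwx := (hw 0).2
    have hwy := (hw 1).2
    fin_cases i <;> fin_cases j <;> try exact absurd hij (by decide)
    · exact not_meets_before_of_firstHit_le (hwx.trans (min_le_right _ _))
    · exact not_meets_before_of_firstHit_le (hwx.trans (min_le_left _ _))
    · exact not_meets_before_of_firstHit_le hwy

variable {ι : Type*} {f : ι → V}

lemma IsGeneric.le_density_gap (hf : IsGeneric l κ f) {i j k : ι} (hik : i ≠ k) (hjk : j ≠ k)
    (h : firstHit (l (f i)) (l (f j)) < firstHit (l (f i)) (l (f k))) :
    κ ≤ density fun w ↦ firstHit (l (f i)) (l (f j)) < firstHit (l (f i)) (l w) ∧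
      firstHit (l (f i)) (l w) ≤ firstHit (l (f i)) (l (f k)) :=
  not_lt.1 fun hlt ↦ hf.1 i j k hik hjk (.inr ⟨h, hlt⟩)

lemma IsGeneric.le_density_end (hf : IsGeneric l κ f) {i j : ι} (hij : i ≠ j)
    (h : Meets (l (f i)) (l (f j))) :
    κ ≤ density fun w ↦ firstHit (l (f i)) (l (f j)) < firstHit (l (f i)) (l w) :=
  not_lt.1 fun hlt ↦ hf.2 i j hij ⟨h, hlt⟩

lemma IsGeneric.firstHit_ne (hf : IsGeneric l κ f) {i j k : ι} (hik : i ≠ k) (hjk : j ≠ k)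
    (h : Meets (l (f i)) (l (f j))) :
    firstHit (l (f i)) (l (f j)) ≠ firstHit (l (f i)) (l (f k)) :=
  fun heq ↦ hf.1 i j k hik hjk (.inl ⟨h, heq⟩)

/-- The tuples that extend to a tripod in many ways: `g 0` is the crossing string and the three
hairs start on the other strings. -/
def ManyTripods (l : V → List α) (κ : ℝ) (g : Fin 4 → V) : Prop :=
  κ ^ 3 ≤ density fun w : Fin 3 → V ↦ IsTripod l (fun i ↦ (g i.succ, w i)) (g 0)

lemma IsGeneric.exists_manyTripods_of_card_eq_three (hκ : 0 ≤ κ) (hf : IsGeneric l κ f) {o : ι}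
    {t : Finset ι} (ht : #t = 3) (ho : ∀ i ∈ t, i ≠ o ∧ Meets (l (f i)) (l (f o)))
    (hdisj : (t : Set ι).Pairwise fun i j ↦ ¬ Meets (l (f i)) (l (f j))) :
    ∃ e : Fin 4 → ι, e.Injective ∧ ManyTripods l κ fun i ↦ f (e i) := by
  classical
  have a : Fin 3 ≃ t := (t.equivFinOfCardEq ht).symm
  have hinj : Function.Injective fun i ↦ (a i : ι) := Subtype.val_injective.comp a.injective
  refine ⟨Fin.cons o fun i ↦ a i, Fin.cons_injective_iff.2 ⟨?_, hinj⟩, ?_⟩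
  · rintro ⟨i, hi⟩
    exact (ho _ (a i).2).1 hi
  · refine pow_three_le_density_isTripod_of_not_meets hκ (a := fun i ↦ f (a i))
      (fun i j hij ↦ hdisj (a i).2 (a j).2 (hinj.ne hij)) fun i ↦ ?_
    exact hf.le_density_end (ho _ (a i).2).1 (ho _ (a i).2).2

lemma IsGeneric.exists_manyTripods_of_card_eq_five (hκ : 0 ≤ κ) (hf : IsGeneric l κ f)
    {t : Finset ι} (ht : #t = 5)
    (hmeets : (t : Set ι).Pairwise fun i j ↦ Meets (l (f i)) (l (f j))) :
    ∃ e : Fin 4 → ι, e.Injective ∧ ManyTripods l κ fun i ↦ f (e i) := by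
  obtain ⟨x, -, y, -, z, hz, c, hc, hnodup, hxc, hxy, hyc⟩ := exists_lt_lt_of_card_eq_five ht
    (F := fun i j ↦ firstHit (l (f i)) (l (f j))) fun x hx i hi j _ hij hix hjx ↦
      hf.firstHit_ne hjx.symm hij (hmeets hx hi hix.symm)
  simp only [List.nodup_cons, List.mem_cons, not_or, List.not_mem_nil, not_false_iff,
    List.nodup_nil, and_true] at hnodup
  obtain ⟨⟨x_ne_y, x_ne_z, x_ne_c⟩, ⟨y_ne_z, y_ne_c⟩, z_ne_c⟩ := hnodup
  refine ⟨![z, x, y, c], ?_, ?_⟩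
  · intro i j hij
    fin_cases i <;> fin_cases j <;> simp_all
  · have hgap : κ ≤ density fun w ↦
        firstHit (l (f x)) (l (f z)) < firstHit (l (f x)) (l w) ∧ firstHit (l (f x)) (l w) ≤
          min (firstHit (l (f x)) (l (f c))) (firstHit (l (f x)) (l (f y))) := by
      rcases min_choice (firstHit (l (f x)) (l (f c))) (firstHit (l (f x)) (l (f y))) with h | h
      · simpa only [h] using hf.le_density_gap x_ne_c z_ne_c hxc
      · simpa only [h] using hf.le_density_gap x_ne_y (Ne.symm y_ne_z) hxy
    exact pow_three_le_density_isTripod_of_le hκ (a := fun i ↦ f (![x, y, c] i)) hgap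
      (hf.le_density_gap y_ne_c z_ne_c hyc)
      (hf.le_density_end (Ne.symm z_ne_c) (hmeets hc hz (Ne.symm z_ne_c)))

lemma IsGeneric.exists_manyTripods {f : Fin 11 → V} (hκ : 0 ≤ κ) (hf : IsGeneric l κ f)
    (hstar : ∀ i ≠ 0, Meets (l (f 0)) (l (f i))) :
    ∃ e : Fin 4 → Fin 11, e.Injective ∧ ManyTripods l κ fun i ↦ f (e i) := by
  let G : SimpleGraph (Fin 11) :=
    SimpleGraph.fromRel fun i j ↦ Meets (l (f i)) (l (f j))
  have hadj (i j : Fin 11) : G.Adj i j ↔ i ≠ j ∧ Meets (l (f i)) (l (f j)) := by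
    simp only [G, SimpleGraph.fromRel_adj, meets_comm (l := l (f j)), or_self]
  obtain ⟨t, ht, hclique, hcard⟩ | ⟨t, ht, hclique, hcard⟩ :=
    exists_isNClique_or_isNClique_compl G 3 2 (univ.erase 0) (by decide)
  · have h0 : (0 : Fin 11) ∉ t := fun h ↦ by simpa using ht h
    refine hf.exists_manyTripods_of_card_eq_five hκ (t := insert 0 t)
      (by rw [card_insert_of_notMem h0, hcard]) ?_
    have hins : G.IsClique (insert 0 t : Finset (Fin 11)) := by
      rw [coe_insert, SimpleGraph.isClique_insert_of_notMem (by simpa)]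
      refine ⟨hclique, fun i hi ↦ (hadj _ _).2 ?_⟩
      have hi0 : i ≠ 0 := ne_of_mem_erase (ht hi)
      exact ⟨hi0.symm, hstar i hi0⟩
    exact fun i hi j hj hij ↦ ((hadj i j).1 (hins hi hj hij)).2
  · refine hf.exists_manyTripods_of_card_eq_three hκ (o := 0) hcard (fun i hi ↦ ?_) ?_
    · have hi0 : i ≠ 0 := ne_of_mem_erase (ht hi)
      exact ⟨hi0, (hstar i hi0).symm⟩
    · intro i hi j hj hij h
      exact ((SimpleGraph.compl_adj _ _ _).1 (hclique hi hj hij)).2 ((hadj i j).2 ⟨hij, h⟩)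

lemma le_density_isTripod_of_manyTripods (hκ : 0 ≤ κ)
    (h : ε ≤ density (ManyTripods l κ)) :
    κ ^ 3 * ε ≤ density fun t : (Fin 3 → V × V) × V ↦ IsTripod l t.1 t.2 := by
  let split : (Fin 4 → V) × (Fin 3 → V) ≃ (Fin 3 → V × V) × V :=
    { toFun := fun t ↦ (fun i ↦ (t.1 i.succ, t.2 i), t.1 0)
      invFun := fun t ↦ (Fin.cons t.2 fun i ↦ (t.1 i).1, fun i ↦ (t.1 i).2)
      left_inv := fun t ↦ Prod.ext (Fin.cons_self_tail t.1) rfl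
      right_inv := fun t ↦ by simp }
  rw [← density_comp_equiv split]
  exact mul_le_density_prod (by positivity) h

theorem le_density_isTripod [Nonempty V] (hε : 0 < ε) (hδ : 0 ≤ δ) (hδε : δ ≤ ε ^ 10 / 10 ^ 4)
    (hl : ¬ HasBiclique (fun x y ↦ Meets (l x) (l y)) (δ * card V))
    (hd : ε ≤ density fun x : V × V ↦ Meets (l x.1) (l x.2)) :
    (ε ^ 10 / 10 ^ 4) ^ 3 * (ε ^ 10 / 2 / 11 ^ 4) ≤
      density fun t : (Fin 3 → V × V) × V ↦ IsTripod l t.1 t.2 := by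
  set κ := ε ^ 10 / 10 ^ 4 with hκε
  have hκ : 0 ≤ κ := by positivity
  have hstar : ε ^ 10 ≤ density fun f : Fin 11 → V ↦ ∀ i ≠ 0, Meets (l (f 0)) (l (f i)) :=
    (pow_le_pow_left₀ hε.le hd 10).trans
      (density_pow_le_density_star 10 fun x y ↦ Meets (l x) (l y))
  have hgeneric := sub_le_density_and_not hstar (density_not_isGeneric_le hκ hδ hl)
  have hhalf : ε ^ 10 / 2 ≤ ε ^ 10 - (card (Fin 11) ^ 3 + card (Fin 11) ^ 2) * (κ + δ) := by
    rw [Fintype.card_fin]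
    norm_num
    linarith
  have hmany (f : Fin 11 → V) (hf : (∀ i ≠ 0, Meets (l (f 0)) (l (f i))) ∧ ¬ ¬ IsGeneric l κ f) :
      ∃ e : Fin 4 → Fin 11, e.Injective ∧ ManyTripods l κ fun i ↦ f (e i) :=
    (not_not.1 hf.2).exists_manyTripods hκ hf.1
  obtain ⟨e, he⟩ := exists_div_card_le_density _ (hhalf.trans hgeneric) hmany
  have hinj : e.Injective := by
    by_contra hn
    have hpos : 0 < ε ^ 10 / 2 / card (Fin 4 → Fin 11) := by positivity
    simp only [hn, false_and] at he
    exact hpos.not_ge (he.trans (by simp [density]))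
  refine le_density_isTripod_of_manyTripods hκ ?_
  rw [← density_comp_injective hinj]
  exact le_of_eq_of_le (by norm_num) (he.trans (density_mono fun f hf ↦ hf.2))

end Tripods

/-! ### Connectors between two disjoint strings -/

section Connectors

open Finset Fintype

variable {l m g₁ g₂ z : List Point}

lemma disjoint_points : Disjoint (points l) (points m) ↔ ¬ Meets l m := by
  simp [Set.disjoint_left, points, Meets]

/-- Two strings share a lattice point or contain neighbouring ones. -/
def Touches (l m : List Point) : Prop := ∃ u ∈ l, ∃ v ∈ m, Near u v

lemma Touches.symm (h : Touches l m) : Touches m l := by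
  obtain ⟨u, hu, v, hv, h⟩ := h
  exact ⟨v, hv, u, hu, h.symm⟩

lemma Meets.touches (h : Meets l m) : Touches l m := by
  obtain ⟨u, hul, hum⟩ := h
  exact ⟨u, hul, u, hum, .refl u⟩

lemma Touches.connectedIn {a b : Point} (h : Touches l m) (hl : l.IsChain Near)
    (hm : m.IsChain Near) (ha : a ∈ l) (hb : b ∈ m) :
    ConnectedIn (points l ∪ points m) a b := by
  obtain ⟨u, hu, v, hv, huv⟩ := h
  have hau := (connectedIn_points hl ha hu).mono (T := points l ∪ points m) Set.subset_union_left
  have hvb := (connectedIn_points hm hv hb).mono (T := points l ∪ points m) Set.subset_union_right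
  exact hau.trans ((ConnectedIn.of_near hau.mem_right hvb.mem_left huv).trans hvb)

/-- `K₅` is not a minor of the square lattice: the branch sets are drawn along the strings `B i`,
which are joined along the strings `L i j`. -/
theorem not_disjoint_minor_K5 {B : Fin 5 → List Point} {L : Fin 5 → Fin 5 → List Point}
    (hB : ∀ i, (B i).IsChain Near) (hL : ∀ i j, i < j → (L i j).IsChain Near)
    (htouch : ∀ i j, i < j → Touches (B i) (L i j) ∧ Touches (L i j) (B j))
    (hBB : Pairwise fun i j ↦ ¬ Meets (B i) (B j))
    (hLB : ∀ i j k, i < j → k ≠ i → k ≠ j → ¬ Meets (L i j) (B k)) :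
    ¬ ∀ i j k l, i < j → k < l → [i, j, k, l].Nodup → ¬ Meets (L i j) (L k l) := by
  intro hLL
  have hne (i : Fin 5) : ∃ p, p ∈ B i := by
    obtain ⟨j, hij⟩ := exists_ne i
    rcases hij.lt_or_gt with h | h
    · obtain ⟨-, u, -, v, hv, -⟩ := htouch j i h
      exact ⟨v, hv⟩
    · obtain ⟨⟨u, hu, -⟩, -⟩ := htouch i j h
      exact ⟨u, hu⟩
  choose v hv using hne
  refine not_disjoint_drawing_K5 (v := v)
    (S := fun i j ↦ points (B i) ∪ points (L i j) ∪ points (B j)) (fun i j hij ↦ ?_) ?_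
  · obtain ⟨hi, ⟨u, hu, w, hw, huw⟩⟩ := htouch i j hij
    have hleft := (hi.connectedIn (hB i) (hL i j hij) (hv i) hu).mono
      (Set.subset_union_left (t := points (B j)))
    have hright := (connectedIn_points (hB j) hw (hv j)).mono
      (Set.subset_union_right (s := points (B i) ∪ points (L i j)))
    exact hleft.trans ((ConnectedIn.of_near hleft.mem_right hright.mem_left huw).trans hright)
  · intro i j k l hij hkl hnodup
    have hdisj := hLL i j k l hij hkl hnodup
    simp only [List.nodup_cons, List.mem_cons, not_or, List.not_mem_nil, not_false_iff,
      List.nodup_nil, and_true] at hnodup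
    obtain ⟨⟨-, hik, hil⟩, ⟨hjk, hjl⟩, -⟩ := hnodup
    have hBL {i k l : Fin 5} (hkl : k < l) (hik : i ≠ k) (hil : i ≠ l) : ¬ Meets (B i) (L k l) :=
      fun h ↦ hLB k l i hkl hik hil h.symm
    simp only [Set.disjoint_union_left, Set.disjoint_union_right, disjoint_points]
    have hik_lower := hLB i j k hij (Ne.symm hik) (Ne.symm hjk)
    have hil_lower := hLB i j l hij (Ne.symm hil) (Ne.symm hjl)
    exact ⟨⟨⟨⟨hBB hik, hik_lower⟩, hBB hjk⟩, ⟨hBL hkl hik hil, hdisj⟩, hBL hkl hjk hjl⟩,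
      ⟨hBB hil, hil_lower⟩, hBB hjl⟩

/-- A string that avoids `g₁` and `g₂`, but touches both of them unless it is empty. -/
structure IsConnector (g₁ g₂ y : List Point) : Prop where
  isChain : y.IsChain Near
  not_meets_left : ¬ Meets y g₁
  not_meets_right : ¬ Meets y g₂
  touches : y ≠ [] → Touches g₁ y ∧ Touches g₂ y

lemma not_three_arcs {y arc : Fin 3 → List Point} (hg₁ : g₁.IsChain Near) (hg₂ : g₂.IsChain Near)
    (hg : ¬ Meets g₁ g₂) (hy : ∀ i, IsConnector g₁ g₂ (y i)) (hz : IsConnector g₁ g₂ z)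
    (hz_ne : z ≠ []) (hyy : Pairwise fun i j ↦ ¬ Meets (y i) (y j)) (hyz : ∀ i, ¬ Meets (y i) z)
    (harc : ∀ i, (arc i).IsChain Near)
    (harc_avoid : ∀ i, ¬ Meets (arc i) g₁ ∧ ¬ Meets (arc i) g₂ ∧ ¬ Meets (arc i) z)
    (hmeets : ∀ i j, i ≠ j → Meets (arc i) (y j)) : ∃ i, Meets (arc i) (y i) := by
  by_contra! harc_y
  have hne (i : Fin 3) : y i ≠ [] := by
    obtain ⟨j, hji⟩ := exists_ne i
    obtain ⟨p, -, hp⟩ := hmeets j i hji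
    exact List.ne_nil_of_mem hp
  have hy_left (i : Fin 3) : ¬ Meets g₁ (y i) := fun h ↦ (hy i).not_meets_left h.symm
  have hy_right (i : Fin 3) : ¬ Meets g₂ (y i) := fun h ↦ (hy i).not_meets_right h.symm
  refine not_disjoint_minor_K5 (B := ![g₁, g₂, y 0, y 1, y 2])
    (L := ![![z, z, y 0, y 1, y 2], ![z, z, y 0, y 1, y 2], ![z, z, z, arc 2, arc 1],
      ![z, z, z, z, arc 0], fun _ ↦ z]) ?_ ?_ ?_ ?_ ?_ ?_
  · simp [Fin.forall_fin_succ, hg₁, hg₂, (hy _).isChain]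
  · simp [Fin.forall_fin_succ, hz.isChain, (hy _).isChain, harc]
  · have hself (i : Fin 3) : Touches (y i) (y i) := by
      obtain ⟨p, hp⟩ := List.exists_mem_of_ne_nil _ (hne i)
      exact ⟨p, hp, p, hp, .refl p⟩
    simp [Fin.forall_fin_succ, hz.touches hz_ne, (hz.touches hz_ne).2.symm,
      (hy _).touches (hne _), hself, (hmeets _ _ _).touches, (hmeets _ _ _).touches.symm]
  · intro i j
    fin_cases i <;> fin_cases j <;>
    simp [hg, meets_comm (l := g₂) (m := g₁),
      (hy _).not_meets_left, (hy _).not_meets_right, hy_left, hy_right, hyy _]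
  · have hz_y (i : Fin 3) : ¬ Meets z (y i) := fun h ↦ hyz i h.symm
    simp [Fin.forall_fin_succ, hz.not_meets_left, hz.not_meets_right, hz_y,
      (hy _).not_meets_left, (hy _).not_meets_right, hyy _, harc_avoid, harc_y]
  · have hz_arc (i : Fin 3) : ¬ Meets z (arc i) := fun h ↦ (harc_avoid i).2.2 h.symm
    have hy_arc (i : Fin 3) : ¬ Meets (y i) (arc i) := fun h ↦ harc_y i h.symm
    simp [Fin.forall_fin_succ, hz_arc, hy_arc, hyy _, harc_avoid, harc_y]

variable {V : Type*} {a y : V → List Point}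

lemma exists_middle {y : Fin 3 → List Point} (hg₁ : g₁.IsChain Near) (hg₂ : g₂.IsChain Near)
    (hg : ¬ Meets g₁ g₂) (ha : ∀ b, (a b).IsChain Near)
    (ha_avoid : ∀ b, ¬ Meets (a b) g₁ ∧ ¬ Meets (a b) g₂) (hy : ∀ i, IsConnector g₁ g₂ (y i))
    (hz : IsConnector g₁ g₂ z) (hz_ne : z ≠ []) (hyy : Pairwise fun i j ↦ ¬ Meets (y i) (y j))
    (hyz : ∀ i, ¬ Meets (y i) z) :
    ∃ k, ∀ b, (∀ i ≠ k, Meets (before (a b) z) (y i)) → Meets (before (a b) z) (y k) := by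
  by_contra! hmiss
  choose b hb hb_miss using hmiss
  obtain ⟨k, hk⟩ := not_three_arcs (arc := fun k ↦ before (a (b k)) z) hg₁ hg₂ hg hy hz hz_ne hyy
    hyz (fun k ↦ (ha _).prefix (before_prefix _ _))
    (fun k ↦ ⟨fun h ↦ (ha_avoid _).1 (h.mono_left (before_subset _ _)),
      fun h ↦ (ha_avoid _).2 (h.mono_left (before_subset _ _)), not_meets_before _ _⟩)
    (fun k i hki ↦ hb k i hki.symm)
  exact hb_miss k hk

/-- The tuple `i` shows that `y (i (j.succAbove k))` lies in the middle: every string which meets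
both of the other two connectors before `y (i j)` has to meet it as well. The string `a b` does. -/
def MiddleWitness (a y : V → List Point) (j : Fin 4) (k : Fin 3) (b : V) (i : Fin 4 → V) : Prop :=
  (∀ m ≠ k, Meets (before (a b) (y (i j))) (y (i (j.succAbove m)))) ∧
    ∀ b', (∀ m ≠ k, Meets (before (a b') (y (i j))) (y (i (j.succAbove m)))) →
      Meets (before (a b') (y (i j))) (y (i (j.succAbove k)))

lemma exists_middleWitness (hg₁ : g₁.IsChain Near) (hg₂ : g₂.IsChain Near)
    (hg : ¬ Meets g₁ g₂) (ha : ∀ b, (a b).IsChain Near)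
    (ha_avoid : ∀ b, ¬ Meets (a b) g₁ ∧ ¬ Meets (a b) g₂) (hy : ∀ v, IsConnector g₁ g₂ (y v))
    {b : V} {i : Fin 4 → V} (hmeets : ∀ j, Meets (a b) (y (i j)))
    (hdisj : Pairwise fun j k ↦ ¬ Meets (y (i j)) (y (i k))) :
    ∃ jk : Fin 4 × Fin 3, MiddleWitness a y jk.1 jk.2 b i := by
  obtain ⟨j, hj⟩ := exists_last_hit hdisj hmeets
  obtain ⟨p, -, hp⟩ := hmeets j
  obtain ⟨k, hk⟩ := exists_middle (y := fun m ↦ y (i (j.succAbove m))) hg₁ hg₂ hg ha ha_avoid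
    (fun m ↦ hy _) (hy (i j)) (List.ne_nil_of_mem hp)
    (fun m m' hm ↦ hdisj (Fin.succAbove_right_injective.ne hm)) (fun m ↦ hdisj (j.succAbove_ne m))
  exact ⟨(j, k), fun m _ ↦ hj _ (j.succAbove_ne m), hk⟩

variable [Fintype V]

lemma HasBiclique.of_density [Nonempty V] {r : V → V → Prop} {P Q : V → Prop} {c : ℝ}
    (h : c ≤ density fun x : V × V ↦ P x.1 ∧ Q x.2) (hr : ∀ u v, P u → Q v → r u v) :
    HasBiclique r (c * card V) := by
  classical
  have hP : c ≤ density P := by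
    rw [← density_fst (Ω' := V) P]
    exact h.trans (density_mono fun x ↦ And.left)
  have hQ : c ≤ density Q := by
    rw [← density_snd (Ω := V) Q]
    exact h.trans (density_mono fun x ↦ And.right)
  exact ⟨({u | P u} : Finset V), ({v | Q v} : Finset V), le_density_iff.1 hP, le_density_iff.1 hQ,
    fun u hu v hv ↦ hr u v (mem_filter.1 hu).2 (mem_filter.1 hv).2⟩

/-- Resampling the middle connector of a witness gives the biclique. -/
lemma MiddleWitness.hasBiclique [Nonempty V] {c : ℝ} {j : Fin 4} {k : Fin 3}
    (h : c ≤ density fun x : V × (Fin 4 → V) ↦ MiddleWitness a y j k x.1 x.2) :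
    HasBiclique (fun b v ↦ Meets (a b) (y v)) (c * card V) := by
  obtain ⟨i, hi⟩ := exists_le_density_update (j.succAbove k) h
  let z := y (i j)
  let A b := ∀ m ≠ k, Meets (before (a b) z) (y (i (j.succAbove m)))
  let B v := ∀ b, A b → Meets (before (a b) z) (y v)
  have hAB : c ≤ density fun x : V × V ↦ A x.1 ∧ B x.2 := by
    refine hi.trans (density_mono fun x hx ↦ ?_)
    have hm (m : Fin 3) (hm : m ≠ k) : j.succAbove m ≠ j.succAbove k :=
      Fin.succAbove_right_injective.ne hm
    have hj : j ≠ j.succAbove k := (j.succAbove_ne k).symm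
    simpa +contextual [MiddleWitness, A, B, z, hm, hj] using hx
  exact .of_density hAB fun b v hb hv ↦ (hv b hb).mono_left (before_subset _ _)

theorem le_density_meets_connectors [Nonempty V] {ε : ℝ} (hε : 0 ≤ ε) (hg₁ : g₁.IsChain Near)
    (hg₂ : g₂.IsChain Near) (hg : ¬ Meets g₁ g₂) (ha : ∀ b, (a b).IsChain Near)
    (ha_avoid : ∀ b, ¬ Meets (a b) g₁ ∧ ¬ Meets (a b) g₂) (hy : ∀ v, IsConnector g₁ g₂ (y v))
    (hd : ε ≤ density fun x : V × V ↦ Meets (a x.1) (y x.2))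
    (hbiclique : ¬ HasBiclique (fun b v ↦ Meets (a b) (y v)) (ε ^ 4 / 24 * card V)) :
    ε ^ 4 / 12 ≤ density fun x : V × V ↦ Meets (y x.1) (y x.2) := by
  by_contra! hlt
  have hall : ε ^ 4 ≤ density fun x : V × (Fin 4 → V) ↦ ∀ j, Meets (a x.1) (y (x.2 j)) :=
    (pow_le_pow_left₀ hε hd 4).trans (density_pow_le_density_forall 4 fun b v ↦ Meets (a b) (y v))
  have hcross : density (fun x : V × (Fin 4 → V) ↦ ∃ p ∈ ({p | p.1 < p.2} : Finset (Fin 4 × Fin 4)),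
      Meets (y (x.2 p.1)) (y (x.2 p.2))) ≤ ε ^ 4 / 2 := by
    refine (density_exists_le _ _).trans
      ((sum_le_card_nsmul _ _ (ε ^ 4 / 12) fun p hp ↦ ?_).trans_eq ?_)
    · rw [density_snd fun f : Fin 4 → V ↦ Meets (y (f p.1)) (y (f p.2)),
        density_pair (by simpa using (mem_filter.1 hp).2.ne) fun u v ↦ Meets (y u) (y v)]
      exact hlt.le
    · rw [show #{p : Fin 4 × Fin 4 | p.1 < p.2} = 6 by decide]
      ring
  have hgood := sub_le_density_and_not hall hcross
  obtain ⟨⟨j, k⟩, hjk⟩ := exists_div_card_le_density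
    (fun jk : Fin 4 × Fin 3 ↦ fun x : V × (Fin 4 → V) ↦ MiddleWitness a y jk.1 jk.2 x.1 x.2)
    hgood fun x hx ↦ exists_middleWitness hg₁ hg₂ hg ha ha_avoid hy hx.1
      fun j k hjk hjk_meets ↦ hx.2 <| by
        rcases hjk.lt_or_gt with h | h
        · exact ⟨(j, k), by simpa using h, hjk_meets⟩
        · exact ⟨(k, j), by simpa using h, hjk_meets.symm⟩
  refine hbiclique (MiddleWitness.hasBiclique (le_of_eq_of_le ?_ hjk))
  norm_num
  ring

end Connectors

/-! ### Webs: many crossing connectors between two strings -/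

section Webs

open Finset Fintype

variable {l g₁ g₂ : List Point}

lemma IsConnector.between (hl : l.IsChain Near) (hg₂ : Meets l g₂)
    (hg₁ : Meets (before l g₂) g₁) : IsConnector g₁ g₂ (between l g₁ g₂) where
  isChain := hl.infix (between_infix l g₁ g₂)
  not_meets_left := fun ⟨_, hp, hpg⟩ ↦ notMem_left_of_mem_between hp hpg
  not_meets_right := fun ⟨_, hp, hpg⟩ ↦ notMem_right_of_mem_between hp hpg
  touches := fun hne ↦ by
    obtain ⟨u, hu, hup⟩ := exists_rel_head_between hl hg₂ hg₁ (List.head_mem_head? hne)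
    obtain ⟨v, hv, hpv⟩ := exists_rel_getLast_between hl hg₂ hg₁ (List.getLast_mem_getLast? hne)
    exact ⟨⟨u, hu, _, List.head_mem hne, hup⟩, v, hv, _, List.getLast_mem hne, hpv.symm⟩

lemma IsConnector.nil : IsConnector g₁ g₂ [] where
  isChain := .nil
  not_meets_left := not_meets_nil_left
  not_meets_right := not_meets_nil_left
  touches := fun h ↦ absurd rfl h

variable {V : Type*} {a l y : V → List Point}

/-- Two disjoint initial pieces `g₁` and `g₂` of strings of `l`, pairwise joined by the connectors
`y v ⊆ l v`, every nonempty one of which meets an initial piece `a b` of a string that avoids `g₁`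
and `g₂`. -/
structure IsWeb (l : V → List Point) (g₁ g₂ : List Point) (a y : V → List Point) : Prop where
  left_prefix : ∃ v, g₁ <+: l v
  right_prefix : ∃ v, g₂ <+: l v
  not_meets : ¬ Meets g₁ g₂
  arc_prefix : ∀ b, a b <+: l b
  arc_avoid : ∀ b, ¬ Meets (a b) g₁ ∧ ¬ Meets (a b) g₂
  connector_infix : ∀ v, y v <:+: l v
  isConnector : ∀ v, IsConnector g₁ g₂ (y v)
  near_head : ∀ v, ∀ p ∈ (y v).head?, ∃ u ∈ g₁, Near u p
  exists_meets : ∀ v, y v ≠ [] → ∃ b, Meets (a b) (y v)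

open scoped Classical in
/-- The part of `l v` between its first visits to `g₁` and `g₂`, if it comes from a run through
`g₁`, `g₂` and some string `a b` in between; otherwise empty. -/
noncomputable def runConnector (l : V → List Point) (g₁ g₂ : List Point) (a : V → List Point)
    (v : V) : List Point :=
  if ∃ b, Runs (l v) g₁ g₂ (a b) then between (l v) g₁ g₂ else []

lemma isWeb_runConnector (hl : ∀ v, (l v).IsChain Near) (hg₁ : ∃ v, g₁ <+: l v)
    (hg₂ : ∃ v, g₂ <+: l v) (hg : ¬ Meets g₁ g₂) (ha : ∀ b, a b <+: l b)
    (ha_avoid : ∀ b, ¬ Meets (a b) g₁ ∧ ¬ Meets (a b) g₂) :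
    IsWeb l g₁ g₂ a (runConnector l g₁ g₂ a) := by
  refine ⟨hg₁, hg₂, hg, ha, ha_avoid, fun v ↦ ?_, fun v ↦ ?_, fun v ↦ ?_, fun v ↦ ?_⟩ <;>
    unfold runConnector <;> split_ifs with h
  · exact between_infix _ _ _
  · exact List.nil_infix
  · obtain ⟨b, hg₂v, hg₁v, -⟩ := h
    exact .between (hl v) hg₂v hg₁v
  · exact .nil
  · obtain ⟨b, hg₂v, hg₁v, -⟩ := h
    exact fun p hp ↦ exists_rel_head_between (hl v) hg₂v hg₁v hp
  · simp
  · obtain ⟨b, -, -, hb⟩ := h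
    exact fun _ ↦ ⟨b, hb.symm⟩
  · exact fun h ↦ absurd rfl h

/-- A tripod whose string runs from the first hair to the second, meeting the third on the way. -/
def IsOrderedTripod (l : V → List Point) (h : Fin 3 → V × V) (z : V) : Prop :=
  (Pairwise fun i j ↦ ¬ Meets (hair l (h i)) (hair l (h j))) ∧
    Runs (l z) (hair l (h 0)) (hair l (h 1)) (hair l (h 2))

open scoped Classical in
/-- The hair of `h`, if it avoids `g₁` and `g₂`; otherwise empty. -/
noncomputable def avoidingHair (l : V → List Point) (g₁ g₂ : List Point) (h : V × V) :
    List Point :=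
  if ¬ Meets (hair l h) g₁ ∧ ¬ Meets (hair l h) g₂ then hair l h else []

lemma avoidingHair_prefix (h : V × V) : avoidingHair l g₁ g₂ h <+: l h.1 := by
  unfold avoidingHair
  split_ifs
  · exact before_prefix _ _
  · exact List.nil_prefix

lemma avoidingHair_avoid (h : V × V) :
    ¬ Meets (avoidingHair l g₁ g₂ h) g₁ ∧ ¬ Meets (avoidingHair l g₁ g₂ h) g₂ := by
  unfold avoidingHair
  split_ifs with h
  · exact h
  · simp

lemma exists_perm_of_isTripod {h : Fin 3 → V × V} {z : V} (ht : IsTripod l h z) :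
    ∃ σ : Equiv.Perm (Fin 3), IsOrderedTripod l (fun i ↦ h (σ i)) z := by
  obtain ⟨σ, hσ⟩ := exists_perm_runs ht.1 ht.2
  exact ⟨σ, fun i j hij ↦ ht.1 (σ.injective.ne hij), hσ⟩

variable [Fintype V] {ε : ℝ}

lemma le_density_runConnector_meets [Nonempty V] (hε : 0 ≤ ε)
    (hweb : IsWeb l g₁ g₂ a (runConnector l g₁ g₂ a)) (hl : ∀ v, (l v).IsChain Near)
    (hd : ε ≤ density fun x : V × V ↦ Runs (l x.2) g₁ g₂ (a x.1))
    (hbiclique : ¬ HasBiclique (fun u v ↦ Meets (l u) (l v)) (ε ^ 4 / 24 * card V)) :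
    ε ^ 4 / 12 ≤ density fun x : V × V ↦
      Meets (runConnector l g₁ g₂ a x.1) (runConnector l g₁ g₂ a x.2) := by
  obtain ⟨u, hu⟩ := hweb.left_prefix
  obtain ⟨v, hv⟩ := hweb.right_prefix
  refine le_density_meets_connectors hε ((hl u).prefix hu) ((hl v).prefix hv) hweb.not_meets
    (fun b ↦ (hl b).prefix (hweb.arc_prefix b)) hweb.arc_avoid hweb.isConnector
    (hd.trans (density_mono fun x hx ↦ ?_)) fun h ↦ hbiclique (h.mono le_rfl fun u v huv ↦
      (huv.mono_left (hweb.arc_prefix u).subset).mono_right (hweb.connector_infix v).subset)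
  rw [runConnector, if_pos ⟨x.1, hx⟩]
  exact hx.2.2.symm

lemma le_density_isOrderedTripod {c : ℝ}
    (hc : c ≤ density fun t : (Fin 3 → V × V) × V ↦ IsTripod l t.1 t.2) :
    c / 6 ≤ density fun t : (Fin 3 → V × V) × V ↦ IsOrderedTripod l t.1 t.2 := by
  obtain ⟨σ, hσ⟩ := exists_div_card_le_density
    (fun (σ : Equiv.Perm (Fin 3)) (t : (Fin 3 → V × V) × V) ↦
      IsOrderedTripod l (fun i ↦ t.1 (σ i)) t.2) hc fun t ↦ exists_perm_of_isTripod
  rw [card_perm, Fintype.card_fin, show Nat.factorial 3 = 6 by rfl, Nat.cast_ofNat] at hσ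
  exact hσ.trans_eq (density_comp_equiv
    ((Equiv.arrowCongr σ.symm (.refl (V × V))).prodCongr (.refl V))
    fun t ↦ IsOrderedTripod l t.1 t.2)

lemma exists_hairs [Nonempty V] {c : ℝ} (hc_pos : 0 < c)
    (hc : c ≤ density fun t : (Fin 3 → V × V) × V ↦ IsOrderedTripod l t.1 t.2) :
    ∃ g₁ g₂ w, ¬ Meets (hair l g₁) (hair l g₂) ∧
      c ≤ density fun x : V × V ↦ Runs (l x.2) (hair l g₁) (hair l g₂)
        (avoidingHair l (hair l g₁) (hair l g₂) (x.1, w)) := by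
  let split : ((V × V) × (V × V) × V) × V × V ≃ (Fin 3 → V × V) × V :=
    { toFun := fun t ↦ (![t.1.1, t.1.2.1, (t.2.1, t.1.2.2)], t.2.2)
      invFun := fun t ↦ ((t.1 0, t.1 1, (t.1 2).2), ((t.1 2).1, t.2))
      right_inv := fun t ↦ by
        refine Prod.ext (funext fun i ↦ ?_) rfl
        fin_cases i <;> rfl }
  obtain ⟨⟨g₁, g₂, w⟩, hw⟩ := exists_le_density_of_prod
    (P := fun t ↦ IsOrderedTripod l (split t).1 (split t).2)
    (hc.trans_eq (density_comp_equiv split fun t ↦ IsOrderedTripod l t.1 t.2).symm)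
  obtain ⟨_, hdisj, -⟩ := exists_of_density_pos (hc_pos.trans_le hw)
  refine ⟨g₁, g₂, w, hdisj (show (0 : Fin 3) ≠ 1 by decide), hw.trans (density_mono ?_)⟩
  rintro x ⟨hdisj, hruns⟩
  have hleft := hdisj (show (2 : Fin 3) ≠ 0 by decide)
  have hright := hdisj (show (2 : Fin 3) ≠ 1 by decide)
  rw [avoidingHair, if_pos ⟨hleft, hright⟩]
  exact hruns

theorem exists_isWeb [Nonempty V] (hl : ∀ v, (l v).IsChain Near) (hε : 0 < ε) (hε_one : ε ≤ 1)
    (hbiclique : ¬ HasBiclique (fun u v ↦ Meets (l u) (l v)) (ε ^ 160 / 10 ^ 75 * card V))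
    (hd : ε ≤ density fun x : V × V ↦ Meets (l x.1) (l x.2)) :
    ∃ g₁ g₂ a y, IsWeb l g₁ g₂ a y ∧
      ε ^ 160 / 10 ^ 75 ≤ density fun x : V × V ↦ Meets (y x.1) (y x.2) := by
  have hpow : ε ^ 160 / 10 ^ 75 ≤ ε ^ 10 / 10 ^ 4 := by
    gcongr ?_ / ?_
    · exact pow_le_pow_of_le_one hε.le hε_one (by norm_num)
    · norm_num
  obtain ⟨g₁, g₂, w, hg, hruns⟩ := exists_hairs (by positivity)
    (le_density_isOrderedTripod (le_density_isTripod hε (by positivity) hpow hbiclique hd))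
  have hc : ε ^ 160 / 10 ^ 75 ≤ ((ε ^ 10 / 10 ^ 4) ^ 3 * (ε ^ 10 / 2 / 11 ^ 4) / 6) ^ 4 / 24 := by
    calc ε ^ 160 / 10 ^ 75 ≤ ε ^ 160 / (12 * 11 ^ 4 * 10 ^ 12) ^ 4 / 24 := by
          rw [div_div]
          gcongr
          norm_num
      _ = _ := by ring
  have hweb : IsWeb l (hair l g₁) (hair l g₂) _ _ :=
    isWeb_runConnector hl ⟨_, before_prefix _ _⟩ ⟨_, before_prefix _ _⟩ hg
      (fun b ↦ avoidingHair_prefix (b, w)) (fun b ↦ avoidingHair_avoid (b, w))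
  refine ⟨_, _, _, _, hweb, hc.trans (le_trans ?_ (le_density_runConnector_meets (by positivity)
    hweb hl hruns fun h ↦ hbiclique (h.mono (by gcongr) fun _ _ ↦ id)))⟩
  gcongr
  norm_num

end Webs

/-! ### Strings grounded on a frame -/

section Grounded

variable {I h₁ h₂ x y z : List Point} {S : Set Point} {p q u v : Point}

/-- Two disjoint strings `h₁` and `h₂`, both touching but not meeting a third string `I`. -/
structure IsFrame (I h₁ h₂ : List Point) : Prop where
  isChain_base : I.IsChain Near
  isChain_left : h₁.IsChain Near
  isChain_right : h₂.IsChain Near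
  not_meets_left : ¬ Meets I h₁
  not_meets_right : ¬ Meets I h₂
  not_meets : ¬ Meets h₁ h₂
  touches_left : Touches I h₁
  touches_right : Touches I h₂

/-- The complement of a frame in the lattice. -/
def frameCompl (I h₁ h₂ : List Point) : Set Point := {p | p ∉ I ∧ p ∉ h₁ ∧ p ∉ h₂}

/-- The points next to the base `I` of a frame from which one can reach `x` off the frame. -/
def landings (I h₁ h₂ x : List Point) : Set Point :=
  {p | (∃ i ∈ I, Near i p) ∧ ∃ u ∈ x, ConnectedIn (frameCompl I h₁ h₂) p u}

/-- A connector between the sides `h₁` and `h₂` of a frame which avoids the base `I`, but can be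
reached from it off the frame. -/
structure IsGrounded (I h₁ h₂ x : List Point) : Prop where
  isConnector : IsConnector h₁ h₂ x
  not_meets_base : ¬ Meets x I
  landings_nonempty : (landings I h₁ h₂ x).Nonempty

/-- A landing point of `x`, chosen so that it depends on the set of all landing points only. -/
noncomputable def landing (I h₁ h₂ x : List Point) : Point :=
  Classical.epsilon (· ∈ landings I h₁ h₂ x)

lemma IsGrounded.landing_mem (hx : IsGrounded I h₁ h₂ x) :
    landing I h₁ h₂ x ∈ landings I h₁ h₂ x :=
  Classical.epsilon_spec hx.landings_nonempty

lemma IsGrounded.ne_nil (hx : IsGrounded I h₁ h₂ x) : x ≠ [] := by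
  obtain ⟨p, -, u, hu, -⟩ := hx.landings_nonempty
  exact List.ne_nil_of_mem hu

lemma IsGrounded.points_subset (hx : IsGrounded I h₁ h₂ x) : points x ⊆ frameCompl I h₁ h₂ :=
  fun p hp ↦ ⟨fun h ↦ hx.not_meets_base ⟨p, hp, h⟩,
    fun h ↦ hx.isConnector.not_meets_left ⟨p, hp, h⟩,
    fun h ↦ hx.isConnector.not_meets_right ⟨p, hp, h⟩⟩

lemma IsGrounded.landings_subset (hx : IsGrounded I h₁ h₂ x) (h : Meets x y) :
    landings I h₁ h₂ x ⊆ landings I h₁ h₂ y := by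
  rintro p ⟨hp, u, hu, hpu⟩
  obtain ⟨v, hvx, hvy⟩ := h
  exact ⟨hp, v, hvy, hpu.trans
    ((connectedIn_points hx.isConnector.isChain hu hvx).mono hx.points_subset)⟩

lemma IsGrounded.landing_eq (hx : IsGrounded I h₁ h₂ x) (hy : IsGrounded I h₁ h₂ y)
    (h : Meets x y) : landing I h₁ h₂ x = landing I h₁ h₂ y := by
  rw [landing, landing, (hx.landings_subset h).antisymm (hy.landings_subset h.symm)]

/-- Otherwise `h₁`, `h₂`, `p` and `y`, `z`, `I` would be the two sides of a planar `K₃,₃`. -/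
theorem IsGrounded.not_reached_both (hframe : IsFrame I h₁ h₂) (hy : IsGrounded I h₁ h₂ y)
    (hz : IsGrounded I h₁ h₂ z) (hyz : ¬ Meets y z) (hp : ∃ i ∈ I, Near i p) (hu : u ∈ y)
    (hv : v ∈ z) (hpu : ConnectedIn (frameCompl I h₁ h₂ \ points z) p u) :
    ¬ ConnectedIn (frameCompl I h₁ h₂ \ points y) p v := by
  intro hpv
  obtain ⟨i, hi, hip⟩ := hp
  obtain ⟨-, -, s, hs, -⟩ := hframe.touches_left
  obtain ⟨-, -, t, ht, -⟩ := hframe.touches_right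
  obtain ⟨hys, hyt⟩ := hy.isConnector.touches hy.ne_nil
  obtain ⟨hzs, hzt⟩ := hz.isConnector.touches hz.ne_nil
  have hpi : Touches [p] I := ⟨p, by simp, i, hi, hip.symm⟩
  refine not_disjoint_drawing_K33 (a := ![s, t, p]) (b := ![u, v, i])
    (S := ![![points h₁ ∪ points y, points h₁ ∪ points z, points h₁ ∪ points I],
      ![points h₂ ∪ points y, points h₂ ∪ points z, points h₂ ∪ points I],
      ![frameCompl I h₁ h₂ \ points z, frameCompl I h₁ h₂ \ points y, points [p] ∪ points I]])
    ?_ ?_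
  · have hy_chain := hy.isConnector.isChain
    have hz_chain := hz.isConnector.isChain
    simp only [Fin.forall_fin_succ, Matrix.cons_val_zero, Matrix.cons_val_succ, IsEmpty.forall_iff,
      and_true]
    exact ⟨⟨hys.connectedIn hframe.isChain_left hy_chain hs hu,
        hzs.connectedIn hframe.isChain_left hz_chain hs hv,
        hframe.touches_left.symm.connectedIn hframe.isChain_left hframe.isChain_base hs hi⟩,
      ⟨hyt.connectedIn hframe.isChain_right hy_chain ht hu,
        hzt.connectedIn hframe.isChain_right hz_chain ht hv,
        hframe.touches_right.symm.connectedIn hframe.isChain_right hframe.isChain_base ht hi⟩,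
      hpu, hpv, hpi.connectedIn (List.isChain_singleton p) hframe.isChain_base (by simp) hi⟩
  · have hyI := hy.not_meets_base
    have hzI := hz.not_meets_base
    obtain ⟨-, hyh₁, hyh₂, -⟩ := hy.isConnector
    obtain ⟨-, hzh₁, hzh₂, -⟩ := hz.isConnector
    obtain ⟨-, -, -, hIh₁, hIh₂, hh, -, -⟩ := hframe
    obtain ⟨⟨-, hph₁, hph₂⟩, (hpz : p ∉ z)⟩ := hpu.mem_left
    have hpy : p ∉ y := hpv.mem_left.2
    simp only [Meets, not_exists, not_and] at *
    intro i j k l hik hjl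
    rw [Set.disjoint_left]
    fin_cases i <;> fin_cases k <;> (try exact absurd rfl hik) <;> fin_cases j <;> fin_cases l <;>
      (try exact absurd rfl hjl) <;> simp [points, frameCompl] <;> grind

lemma ConnectedIn.first_visit (h : ConnectedIn S p q) (hxy : ¬ Meets x y) (hq : q ∈ x ∨ q ∈ y) :
    (∃ u ∈ x, ConnectedIn (S \ points y) p u) ∨ ∃ u ∈ y, ConnectedIn (S \ points x) p u := by
  have hx_of_y {a : Point} (ha : a ∈ y) : a ∉ x := fun hax ↦ hxy ⟨a, hax, ha⟩
  have hy_of_x {a : Point} (ha : a ∈ x) : a ∉ y := fun hay ↦ hxy ⟨a, ha, hay⟩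
  induction h with
  | @refl a ha =>
    rcases hq with h | h
    · exact .inl ⟨a, h, .refl ⟨ha, hy_of_x h⟩⟩
    · exact .inr ⟨a, h, .refl ⟨ha, hx_of_y h⟩⟩
  | @step a b c ha hab _ ih =>
    by_cases hax : a ∈ x
    · exact .inl ⟨a, hax, .refl ⟨ha, hy_of_x hax⟩⟩
    by_cases hay : a ∈ y
    · exact .inr ⟨a, hay, .refl ⟨ha, hx_of_y hay⟩⟩
    exact (ih hq).imp (fun ⟨u, hu, h⟩ ↦ ⟨u, hu, .step ⟨ha, hay⟩ hab h⟩)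
      fun ⟨u, hu, h⟩ ↦ ⟨u, hu, .step ⟨ha, hax⟩ hab h⟩

/-- `x` lies between the base of the frame and `y`: starting from their common landing point, `x` is
reached before `y`. Strings with different landing points are ordered by these. -/
def IsBelow (I h₁ h₂ x y : List Point) : Prop :=
  toLex (landing I h₁ h₂ x) < toLex (landing I h₁ h₂ y) ∨
    landing I h₁ h₂ x = landing I h₁ h₂ y ∧ ¬ Meets x y ∧
      ∃ u ∈ x, ConnectedIn (frameCompl I h₁ h₂ \ points y) (landing I h₁ h₂ x) u

lemma IsBelow.not_meets (h : IsBelow I h₁ h₂ x y) (hx : IsGrounded I h₁ h₂ x)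
    (hy : IsGrounded I h₁ h₂ y) : ¬ Meets x y := by
  rcases h with hlt | ⟨-, h, -⟩
  · exact fun hxy ↦ hlt.ne (congrArg toLex (hx.landing_eq hy hxy))
  · exact h

lemma IsGrounded.not_meets_iff (hx : IsGrounded I h₁ h₂ x) (hy : IsGrounded I h₁ h₂ y) :
    ¬ Meets x y ↔ IsBelow I h₁ h₂ x y ∨ IsBelow I h₁ h₂ y x := by
  refine ⟨fun h ↦ ?_, ?_⟩
  · rcases lt_trichotomy (toLex (landing I h₁ h₂ x)) (toLex (landing I h₁ h₂ y)) with hlt | he | hlt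
    · exact .inl (.inl hlt)
    · obtain ⟨-, u, hu, hpu⟩ := hx.landing_mem
      replace he := toLex.injective he
      rcases hpu.first_visit h (.inl hu) with hfirst | hfirst
      · exact .inl (.inr ⟨he, h, hfirst⟩)
      · exact .inr (.inr ⟨he.symm, fun h' ↦ h h'.symm, he ▸ hfirst⟩)
    · exact .inr (.inl hlt)
  · rintro (h | h)
    · exact h.not_meets hx hy
    · exact fun h' ↦ h.not_meets hy hx h'.symm

lemma IsGrounded.not_isBelow_self (hx : IsGrounded I h₁ h₂ x) : ¬ IsBelow I h₁ h₂ x x := by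
  obtain ⟨p, hp⟩ := List.exists_mem_of_ne_nil x hx.ne_nil
  exact fun h ↦ h.not_meets hx hx ⟨p, hp, hp⟩

lemma IsBelow.trans (hframe : IsFrame I h₁ h₂) (hx : IsGrounded I h₁ h₂ x)
    (hy : IsGrounded I h₁ h₂ y) (hz : IsGrounded I h₁ h₂ z) (hxy : IsBelow I h₁ h₂ x y)
    (hyz : IsBelow I h₁ h₂ y z) : IsBelow I h₁ h₂ x z := by
  rcases hxy with hxy | ⟨hxy, hxy_disj, u, hu, hpu⟩ <;>
    rcases hyz with hyz | ⟨hyz, hyz_disj, v, hv, hpv⟩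
  · exact .inl (hxy.trans hyz)
  · exact .inl (hyz ▸ hxy)
  · exact .inl (hxy ▸ hyz)
  rw [← hxy] at hpv
  have hz_hidden (w : Point) (hw : w ∈ z) :
      ¬ ConnectedIn (frameCompl I h₁ h₂ \ points y) (landing I h₁ h₂ x) w :=
    hy.not_reached_both hframe hz hyz_disj hx.landing_mem.1 hv hw hpv
  have hx_subset : points x ⊆ frameCompl I h₁ h₂ \ points y := fun p hp ↦
    ⟨hx.points_subset hp, fun h ↦ hxy_disj ⟨p, hp, h⟩⟩
  have hxz_disj : ¬ Meets x z := fun ⟨w, hwx, hwz⟩ ↦ hz_hidden w hwz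
    (hpu.trans ((connectedIn_points hx.isConnector.isChain hu hwx).mono hx_subset))
  refine .inr ⟨hxy.trans hyz, hxz_disj, ?_⟩
  rcases hpu.first_visit hxz_disj (.inl hu) with ⟨w, hw, h⟩ | ⟨w, hw, h⟩
  · exact ⟨w, hw, h.mono (Set.sdiff_subset_sdiff_left Set.sdiff_subset)⟩
  · exact absurd (h.mono Set.sdiff_subset) (hz_hidden w hw)

end Grounded

section Order

variable {V : Type*} {l y : V → List Point} {I g₁ g₂ h₁ h₂ : List Point} {a b x : V → List Point}

lemma IsWeb.prefix_near_base (hy : IsWeb l I g₁ a y) {v : V} {g : List Point} (hg : g <+: y v)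
    (hne : g ≠ []) : ∃ p ∈ g, ∃ i ∈ I, Near i p := by
  obtain ⟨p, g, rfl⟩ := List.exists_cons_of_ne_nil hne
  obtain ⟨t, ht⟩ := hg
  exact ⟨p, by simp, hy.near_head v p (by simp [← ht])⟩

lemma IsWeb.touches_prefix (hy : IsWeb l I g₁ a y) {v : V} {g : List Point} (hg : g <+: y v)
    (hne : g ≠ []) : Touches I g := by
  obtain ⟨p, hp, i, hi, h⟩ := hy.prefix_near_base hg hne
  exact ⟨i, hi, p, hp, h⟩

lemma IsWeb.not_meets_base (hy : IsWeb l I g₁ a y) {v : V} {g : List Point} (hg : g ⊆ y v) :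
    ¬ Meets I g :=
  fun h ↦ (hy.isConnector v).not_meets_left (h.symm.mono_left hg)

lemma IsWeb.isFrame (hl : ∀ v, (l v).IsChain Near) (hy : IsWeb l I g₁ a y)
    (hx : IsWeb y h₁ h₂ b x) {v : V} (hv : x v ≠ []) : IsFrame I h₁ h₂ := by
  obtain ⟨v₀, hI⟩ := hy.left_prefix
  obtain ⟨v₁, hh₁⟩ := hx.left_prefix
  obtain ⟨v₂, hh₂⟩ := hx.right_prefix
  obtain ⟨⟨p, hp, -⟩, ⟨q, hq, -⟩⟩ := (hx.isConnector v).touches hv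
  exact {
    isChain_base := (hl v₀).prefix hI
    isChain_left := (hy.isConnector v₁).isChain.prefix hh₁
    isChain_right := (hy.isConnector v₂).isChain.prefix hh₂
    not_meets_left := hy.not_meets_base hh₁.subset
    not_meets_right := hy.not_meets_base hh₂.subset
    not_meets := hx.not_meets
    touches_left := hy.touches_prefix hh₁ (List.ne_nil_of_mem hp)
    touches_right := hy.touches_prefix hh₂ (List.ne_nil_of_mem hq) }

lemma IsWeb.isGrounded (hy : IsWeb l I g₁ a y) (hx : IsWeb y h₁ h₂ b x) {v : V}
    (hv : x v ≠ []) : IsGrounded I h₁ h₂ (x v) := by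
  refine ⟨hx.isConnector v, fun h ↦ hy.not_meets_base (hx.connector_infix v).subset h.symm, ?_⟩
  obtain ⟨w, q, hqw, hqx⟩ := hx.exists_meets v hv
  have hprefix := hx.arc_prefix w
  obtain ⟨p, hp, hpI⟩ := hy.prefix_near_base hprefix (List.ne_nil_of_mem hqw)
  refine ⟨p, hpI, q, hqx, (connectedIn_points
    ((hy.isConnector w).isChain.prefix hprefix) hp hqw).mono fun r hr ↦ ⟨?_, ?_, ?_⟩⟩
  · exact fun hrI ↦ hy.not_meets_base hprefix.subset ⟨r, hrI, hr⟩
  · exact fun h ↦ (hx.arc_avoid w).1 ⟨r, hr, h⟩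
  · exact fun h ↦ (hx.arc_avoid w).2 ⟨r, hr, h⟩

/-- The nonempty strings of `y` are strictly ordered by `lt`, and two of them are comparable
exactly if they do not meet. -/
structure IsOrdered (y : V → List Point) (lt : V → V → Prop) : Prop where
  irrefl : ∀ u, y u ≠ [] → ¬ lt u u
  trans : ∀ u v w, y u ≠ [] → y v ≠ [] → y w ≠ [] → lt u v → lt v w → lt u w
  not_meets_iff : ∀ u v, y u ≠ [] → y v ≠ [] → (¬ Meets (y u) (y v) ↔ lt u v ∨ lt v u)

lemma IsWeb.isOrdered (hl : ∀ v, (l v).IsChain Near) (hy : IsWeb l I g₁ a y)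
    (hx : IsWeb y h₁ h₂ b x) : IsOrdered x fun u v ↦ IsBelow I h₁ h₂ (x u) (x v) where
  irrefl _ hu := (hy.isGrounded hx hu).not_isBelow_self
  trans _ _ _ hu hv hw := IsBelow.trans (hy.isFrame hl hx hu) (hy.isGrounded hx hu)
    (hy.isGrounded hx hv) (hy.isGrounded hx hw)
  not_meets_iff _ _ hu hv := (hy.isGrounded hx hu).not_meets_iff (hy.isGrounded hx hv)

theorem exists_isOrdered [Fintype V] [Nonempty V] {ε ε' : ℝ} (hl : ∀ v, (l v).IsChain Near)
    (hε : 0 < ε) (hε_one : ε ≤ 1) (hε' : ε' = ε ^ 160 / 10 ^ 75)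
    (hbiclique : ¬ HasBiclique (fun u v ↦ Meets (l u) (l v))
      (ε' ^ 160 / 10 ^ 75 * Fintype.card V))
    (hd : ε ≤ density fun x : V × V ↦ Meets (l x.1) (l x.2)) :
    ∃ (x : V → List Point) (lt : V → V → Prop), (∀ v, x v ⊆ l v) ∧ IsOrdered x lt ∧
      ε' ^ 160 / 10 ^ 75 ≤ density fun z : V × V ↦ Meets (x z.1) (x z.2) := by
  have hε'_pos : 0 < ε' := by rw [hε']; positivity
  have hpow_le {δ : ℝ} (h₀ : 0 ≤ δ) (h₁ : δ ≤ 1) : δ ^ 160 / 10 ^ 75 ≤ δ :=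
    (div_le_self (pow_nonneg h₀ _) (one_le_pow₀ (by norm_num))).trans
      (pow_le_of_le_one h₀ h₁ (by norm_num))
  have hε'_one : ε' ≤ 1 := hε' ▸ (hpow_le hε.le hε_one).trans hε_one
  have hmono (δ : ℝ) (hδ : ε' ^ 160 / 10 ^ 75 ≤ δ) {m : V → List Point} (hm : ∀ v, m v ⊆ l v) :
      ¬ HasBiclique (fun u v ↦ Meets (m u) (m v)) (δ * Fintype.card V) := fun h ↦
    hbiclique (h.mono (by gcongr) fun u v h ↦ (h.mono_left (hm u)).mono_right (hm v))
  obtain ⟨I, g₁, a, y, hy, hy_density⟩ := exists_isWeb hl hε hε_one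
    (hε' ▸ hmono ε' (hpow_le hε'_pos.le hε'_one) fun _ ↦ List.Subset.refl _) hd
  rw [← hε'] at hy_density
  have hyl (v : V) : y v ⊆ l v := (hy.connector_infix v).subset
  obtain ⟨h₁, h₂, b, x, hx, hx_density⟩ := exists_isWeb (fun v ↦ (hy.isConnector v).isChain)
    hε'_pos hε'_one (hmono _ le_rfl hyl) hy_density
  exact ⟨x, _, fun v ↦ List.Subset.trans (hx.connector_infix v).subset (hyl v),
    hy.isOrdered hl hx, hx_density⟩

end Order

open Finset Fintype

/-! ### Bicliques in incomparability graphs -/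

section Block

variable {X : Type*} [Fintype X] {n i s : ℕ} {e : X ≃ Fin n}

/-- The elements at positions `i * s, …, i * s + s - 1` of an enumeration `e`. -/
def block (e : X ≃ Fin n) (s i : ℕ) : Finset X := {x | (e x : ℕ) / s = i}

lemma mem_block {x : X} : x ∈ block e s i ↔ (e x : ℕ) / s = i := by simp [block]

lemma card_block_le (hs : 0 < s) : #(block e s i) ≤ s := by
  calc #(block e s i) ≤ #(Ico (i * s) (i * s + s)) := by
        refine card_le_card_of_injOn (fun x ↦ (e x : ℕ)) (fun x hx ↦ ?_) fun x _ y _ hxy ↦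
          e.injective (Fin.ext hxy)
        rw [mem_coe, mem_block] at hx
        rw [mem_coe, mem_Ico, ← hx]
        exact ⟨Nat.div_mul_le_self _ _, Nat.lt_div_mul_add hs⟩
    _ = s := by simp

lemma le_card_block (hs : 0 < s) (hi : i * s + s ≤ n) : s ≤ #(block e s i) := by
  calc s = #(univ : Finset (Fin s)) := by simp
    _ ≤ #(block e s i) := by
        refine card_le_card_of_injOn (fun j : Fin s ↦ e.symm ⟨i * s + j, by omega⟩) (fun j _ ↦ ?_)
          fun j _ j' _ h ↦ by simpa [Fin.ext_iff] using h
        simp [mem_block, Nat.add_div_of_dvd_right, hs.ne', Nat.div_eq_of_lt j.2]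

end Block

section Incomparability

variable {X : Type*} [PartialOrder X]

local notation "Incomp" => IncompRel (fun a b : X ↦ a < b)

lemma exists_lt_or_gt_of_not_hasBiclique {k : ℕ} {A B : Finset X} (hX : ¬ HasBiclique Incomp k)
    (hA : k ≤ #A) (hB : k ≤ #B) : ∃ a ∈ A, ∃ b ∈ B, a < b ∨ b < a := by
  by_contra! h
  exact hX ⟨A, B, by exact_mod_cast hA, by exact_mod_cast hB, h⟩

open scoped Classical in
/-- The elements of `B` above some element of `A`. -/
noncomputable def above (A B : Finset X) : Finset X := {b ∈ B | ∃ a ∈ A, a < b}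

variable {k g s : ℕ} {A B : Finset X}

lemma mem_above {b : X} : b ∈ above A B ↔ b ∈ B ∧ ∃ a ∈ A, a < b := by
  classical exact mem_filter

lemma card_lt_card_above_add (hX : ¬ HasBiclique Incomp k) (hAB : ∀ a ∈ A, ∀ b ∈ B, ¬ b < a)
    (hA : k ≤ #A) : #B < #(above A B) + k := by
  classical
  by_contra! h
  have hcard : k ≤ #(B \ above A B) := (Nat.le_sub_of_add_le' h).trans (le_card_sdiff _ _)
  obtain ⟨a, ha, b, hb, hab | hba⟩ := exists_lt_or_gt_of_not_hasBiclique hX hA hcard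
  · exact (mem_sdiff.1 hb).2 (mem_above.2 ⟨(mem_sdiff.1 hb).1, a, ha, hab⟩)
  · exact hAB a ha b (mem_sdiff.1 hb).1 hba

lemma card_above_le_add (A' : Finset X) [DecidableEq X] :
    #(above A B) ≤ #(above A' B) + #(above (A \ A') B) := by
  refine (card_le_card fun b hb ↦ ?_).trans (card_union_le _ _)
  obtain ⟨hbB, a, ha, hab⟩ := mem_above.1 hb
  by_cases haA' : a ∈ A'
  · exact mem_union_left _ (mem_above.2 ⟨hbB, a, haA', hab⟩)
  · exact mem_union_right _ (mem_above.2 ⟨hbB, a, mem_sdiff.2 ⟨ha, haA'⟩, hab⟩)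

/-- One of two halves of `A` lies below at least `k` elements of `B 0`, and these lie below nearly
all of `B 1`; iterating, `A` shrinks to a single element. -/
lemma exists_card_le_card_above_singleton (hX : ¬ HasBiclique Incomp k) (hk : 0 < k)
    (B : ℕ → Finset X) (hB : ∀ i < g, ∀ a ∈ B i, ∀ b ∈ B (i + 1), ¬ b < a)
    (hcard : ∀ i ≤ g, 3 * k ≤ #(B i)) (hA : #A ≤ 2 ^ g) (hA_above : #(B 0) ≤ #(above A (B 0)) + k) :
    ∃ x ∈ A, #(B g) ≤ #(above {x} (B g)) + k := by
  classical
  induction g generalizing A B with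
  | zero =>
    have hpos : 0 < #(above A (B 0)) := by have := hcard 0 le_rfl; omega
    obtain ⟨b, hb⟩ := card_pos.1 hpos
    obtain ⟨-, x, hx, -⟩ := mem_above.1 hb
    obtain rfl : {x} = A := eq_of_subset_of_card_le (singleton_subset_iff.2 hx) hA
    exact ⟨x, hx, hA_above⟩
  | succ g ih =>
    have of_half (A' : Finset X) (hA' : A' ⊆ A) (hcardA' : #A' ≤ 2 ^ g)
        (hk_le : k ≤ #(above A' (B 0))) :
        ∃ x ∈ A, #(B (g + 1)) ≤ #(above {x} (B (g + 1))) + k := by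
      have hlt := card_lt_card_above_add hX
        (fun a ha ↦ hB 0 g.succ_pos a (mem_above.1 ha).1) hk_le
      have hsub : above (above A' (B 0)) (B 1) ⊆ above A' (B 1) := fun b hb ↦ by
        obtain ⟨hbB, a, ha, hab⟩ := mem_above.1 hb
        obtain ⟨-, a', ha', haa'⟩ := mem_above.1 ha
        exact mem_above.2 ⟨hbB, a', ha', haa'.trans hab⟩
      obtain ⟨x, hx, h⟩ := ih (fun i ↦ B (i + 1)) (fun i hi ↦ hB (i + 1) (by omega))
        (fun i hi ↦ hcard (i + 1) (by omega)) hcardA'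
        (hlt.le.trans (by gcongr))
      exact ⟨x, hA' hx, h⟩
    obtain ⟨A', hA', hcardA'⟩ := exists_subset_card_eq (min_le_left #A (2 ^ g))
    have hsplit := card_above_le_add A' (A := A) (B := B 0)
    by_cases hk_le : k ≤ #(above A' (B 0))
    · exact of_half A' hA' (by omega) hk_le
    · refine of_half (A \ A') sdiff_subset ?_ (by have := hcard 0 (by omega); omega)
      rw [card_sdiff_of_subset hA', hcardA']
      rw [pow_succ] at hA
      omega

open scoped Classical in
lemma card_filter_card_above_lt (hX : ¬ HasBiclique Incomp k) (hk : 0 < k) (hkg : k ≤ 2 ^ g)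
    (B : ℕ → Finset X) (hB : ∀ i < g, ∀ a ∈ B i, ∀ b ∈ B (i + 1), ¬ b < a)
    (hcard : ∀ i ≤ g, 3 * k ≤ #(B i)) {Y : Finset X} (hY : ∀ a ∈ Y, ∀ b ∈ B 0, ¬ b < a) :
    #{x ∈ Y | #{z ∈ B g | x < z} + k < #(B g)} ≤ k := by
  by_contra! h
  obtain ⟨A, hA, hcardA⟩ := exists_subset_card_eq h.le
  have hlt := card_lt_card_above_add hX (fun a ha ↦ hY a (mem_filter.1 (hA ha)).1) hcardA.ge
  obtain ⟨x, hx, hx_le⟩ :=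
    exists_card_le_card_above_singleton hX hk B hB hcard (hcardA.trans_le hkg) hlt.le
  have habove : above {x} (B g) = {z ∈ B g | x < z} := by ext; simp [mem_above]
  rw [habove] at hx_le
  exact (mem_filter.1 (hA hx)).2.not_ge hx_le

open scoped Classical in
lemma card_filter_card_below_lt (hX : ¬ HasBiclique Incomp k) (hk : 0 < k) (hkg : k ≤ 2 ^ g)
    (B : ℕ → Finset X) (hB : ∀ i < g, ∀ a ∈ B i, ∀ b ∈ B (i + 1), ¬ a < b)
    (hcard : ∀ i ≤ g, 3 * k ≤ #(B i)) {Y : Finset X} (hY : ∀ a ∈ Y, ∀ b ∈ B 0, ¬ a < b) :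
    #{y ∈ Y | #{z ∈ B g | z < y} + k < #(B g)} ≤ k :=
  card_filter_card_above_lt (X := Xᵒᵈ) (fun h ↦ hX (h.mono le_rfl fun _ _ h ↦ h.symm)) hk hkg B hB
    hcard hY

section Block

variable [Fintype X] {n i : ℕ} {e : X ≃ Fin n}

lemma not_lt_of_mem_block (he : StrictMono e) {j : ℕ} (hij : i < j) {x y : X}
    (hx : x ∈ block e s i) (hy : y ∈ block e s j) : ¬ y < x := fun h ↦ by
  have hle : (e y : ℕ) / s ≤ e x / s := Nat.div_le_div_right (he h).le
  rw [mem_block.1 hx, mem_block.1 hy] at hle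
  omega

open scoped Classical in
lemma card_exceptional_low_le (hX : ¬ HasBiclique Incomp k) (hk : 0 < k) (hkg : k ≤ 2 ^ g)
    (hks : 3 * k ≤ s) (he : StrictMono e) (hi : i < n / s) :
    #{x | (e x : ℕ) / s + g < i ∧ #{z ∈ block e s i | x < z} + k < #(block e s i)} ≤ k := by
  have hs : 0 < s := by omega
  rcases lt_or_ge i g with hig | hgi
  · simp [show ∀ x, ¬ (e x : ℕ) / s + g < i from
      fun _ ↦ not_lt.2 (hig.le.trans (Nat.le_add_left g _))]
  have hfull : i * s + s ≤ n := by
    rw [← Nat.succ_mul]; exact (Nat.mul_le_mul_right s hi).trans (Nat.div_mul_le_self n s)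
  have h := card_filter_card_above_lt hX hk hkg (fun t ↦ block e s (i - g + t))
    (fun t _ a ha b hb ↦ not_lt_of_mem_block he (by omega) ha hb)
    (fun t ht ↦ hks.trans (le_card_block hs (by nlinarith [Nat.sub_add_cancel hgi])))
    (Y := {x | (e x : ℕ) / s + g < i})
    (fun a ha b hb ↦ not_lt_of_mem_block he (by simp at ha; omega) (mem_block.2 rfl) hb)
  simpa [filter_filter, Nat.sub_add_cancel hgi] using h

open scoped Classical in
lemma card_exceptional_high_le (hX : ¬ HasBiclique Incomp k) (hk : 0 < k) (hkg : k ≤ 2 ^ g)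
    (hks : 3 * k ≤ s) (he : StrictMono e) :
    #{y | i + g < (e y : ℕ) / s ∧ #{z ∈ block e s i | z < y} + k < #(block e s i)} ≤ k := by
  have hs : 0 < s := by omega
  by_cases hY : ∃ y, i + g < (e y : ℕ) / s
  swap
  · simp [not_exists.1 hY]
  obtain ⟨y, hy⟩ := hY
  have hfull : (i + g) * s + s ≤ n := by
    have := Nat.mul_le_mul_right s hy
    have := Nat.div_mul_le_self (e y : ℕ) s
    rw [← Nat.succ_mul]
    omega
  have h := card_filter_card_below_lt hX hk hkg (fun t ↦ block e s (i + g - t))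
    (fun t _ a ha b hb ↦ not_lt_of_mem_block he (by omega) hb ha)
    (fun t ht ↦ hks.trans (le_card_block hs
      (le_trans (by gcongr; omega) hfull)))
    (Y := {y | i + g < (e y : ℕ) / s})
    (fun a ha b hb ↦ not_lt_of_mem_block he (by simp at ha; omega) hb (mem_block.2 rfl))
  simpa [filter_filter] using h

omit [Fintype X] in
/-- Two elements far apart are both comparable to most elements of the block halfway between them,
with few exceptions, and hence to each other. -/
lemma exists_exceptional_set (hX : ¬ HasBiclique Incomp k) (hk : 0 < k) (hkg : k ≤ 2 ^ g)
    (hks : 3 * k ≤ s) (he : StrictMono e) :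
    ∃ S : Finset X, #S ≤ n / s * (2 * k) ∧
      ∀ x ∉ S, ∀ y ∉ S, (e x : ℕ) / s + 2 * (g + 1) ≤ e y / s → x < y := by
  classical
  have := Fintype.ofEquiv _ e.symm
  let low (i : ℕ) : Finset X :=
    {x | (e x : ℕ) / s + g < i ∧ #{z ∈ block e s i | x < z} + k < #(block e s i)}
  let high (i : ℕ) : Finset X :=
    {y | i + g < (e y : ℕ) / s ∧ #{z ∈ block e s i | z < y} + k < #(block e s i)}
  refine ⟨(range (n / s)).biUnion fun i ↦ low i ∪ high i, ?_, fun x hx y hy hxy ↦ ?_⟩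
  · refine (card_biUnion_le_card_mul _ _ (2 * k) fun i hi ↦ ?_).trans_eq (by simp)
    have hlow : #(low i) ≤ k := card_exceptional_low_le hX hk hkg hks he (mem_range.1 hi)
    have hhigh : #(high i) ≤ k := card_exceptional_high_le hX hk hkg hks he
    exact (card_union_le _ _).trans (by omega)
  set i := (e x : ℕ) / s + (g + 1)
  have hi : i < n / s := by
    have : (e y : ℕ) / s ≤ n / s := Nat.div_le_div_right (e y).2.le
    omega
  have hx_above : #(block e s i) ≤ #{z ∈ block e s i | x < z} + k := by
    by_contra! h
    exact hx (mem_biUnion.2 ⟨i, mem_range.2 hi, mem_union_left _ (by simp [low, h]; omega)⟩)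
  have hy_below : #(block e s i) ≤ #{z ∈ block e s i | z < y} + k := by
    by_contra! h
    exact hy (mem_biUnion.2 ⟨i, mem_range.2 hi, mem_union_right _ (by simp [high, h]; omega)⟩)
  have hs_le : s ≤ #(block e s i) := le_card_block (by omega) (by
    rw [← Nat.succ_mul]; exact (Nat.mul_le_mul_right s hi).trans (Nat.div_mul_le_self n s))
  obtain ⟨z, hz⟩ := inter_nonempty_of_card_lt_card_add_card
    (filter_subset (x < ·) (block e s i)) (filter_subset (· < y) (block e s i)) (by omega)
  rw [mem_inter, mem_filter, mem_filter] at hz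
  exact hz.1.2.trans hz.2.2

open scoped Classical in
lemma card_incomp_le (hX : ¬ HasBiclique Incomp k) (hk : 0 < k) (hkg : k ≤ 2 ^ g)
    (hks : 3 * k ≤ s) (he : StrictMono e) :
    #{p : X × X | Incomp p.1 p.2} ≤ n * ((4 * g + 3) * s) + 2 * (n * (n / s * (2 * k))) := by
  have hs : 0 < s := by omega
  have hn : #(univ : Finset X) = n := by rw [card_univ, card_congr e, Fintype.card_fin]
  obtain ⟨S, hS, hlt⟩ := exists_exceptional_set hX hk hkg hks he
  let near (x : X) : Finset X :=
    (Ico ((e x : ℕ) / s - (2 * g + 1)) (e x / s + (2 * g + 2))).biUnion (block e s)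
  have hnear (x : X) : #(near x) ≤ (4 * g + 3) * s :=
    (card_biUnion_le_card_mul _ _ s fun i _ ↦ card_block_le hs).trans
      (Nat.mul_le_mul_right s (by rw [Nat.card_Ico]; omega))
  have hsub : ({p : X × X | Incomp p.1 p.2} : Finset (X × X)) ⊆
      (univ.biUnion fun x ↦ {x} ×ˢ near x) ∪ (S ×ˢ univ ∪ univ ×ˢ S) := by
    rintro ⟨x, y⟩ hxy
    simp only [mem_filter_univ] at hxy
    by_cases hxS : x ∈ S
    · simp [hxS]
    by_cases hyS : y ∈ S
    · simp [hyS]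
    have hxy_le := mt (hlt x hxS y hyS) hxy.1
    have hyx_le := mt (hlt y hyS x hxS) hxy.2
    simp only [mem_union, mem_biUnion, mem_univ, mem_product, mem_singleton, near, mem_block,
      mem_Ico, true_and]
    refine .inl ⟨x, rfl, _, ?_, rfl⟩
    generalize (e x : ℕ) / s = a, (e y : ℕ) / s = b at *
    omega
  refine (card_le_card hsub).trans ((card_union_le _ _).trans (add_le_add ?_ ?_))
  · refine (card_biUnion_le_card_mul _ _ _ fun x _ ↦ ?_).trans_eq (by rw [hn])
    simpa using hnear x
  · refine (card_union_le _ _).trans ?_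
    rw [card_product, card_product, hn, mul_comm (#S), two_mul]
    gcongr

end Block

lemma exists_strictMono_equiv_fin [Fintype X] : ∃ e : X ≃ Fin (card X), StrictMono e := by
  classical
  have : Fintype (LinearExtension X) := inferInstanceAs (Fintype X)
  have hcard : card (LinearExtension X) = card X :=
    card_congr (Equiv.refl X : LinearExtension X ≃ X)
  let e := (orderIsoFinOfCardEq (LinearExtension X) hcard).symm
  exact ⟨e.toEquiv, fun u v h ↦ e.strictMono
    ((toLinearExtension.monotone h.le).lt_of_ne fun heq : u = v ↦ h.ne heq)⟩

lemma density_incomp_le [Fintype X] [Nonempty X] (hX : ¬ HasBiclique Incomp k) (hk : 0 < k)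
    (hkg : k ≤ 2 ^ g) (hks : 3 * k ≤ s) :
    density (fun p : X × X ↦ Incomp p.1 p.2) ≤ (4 * g + 3) * s / card X + 4 * k / s := by
  classical
  obtain ⟨e, he⟩ := exists_strictMono_equiv_fin (X := X)
  have hcount : (#{p : X × X | Incomp p.1 p.2} : ℝ) ≤ card X * ((4 * g + 3) * s) +
      2 * (card X * (((card X / s : ℕ) : ℝ) * (2 * k))) := by
    exact_mod_cast card_incomp_le hX hk hkg hks he
  rw [density_le_iff, card_prod]
  refine hcount.trans ?_
  calc card X * ((4 * g + 3) * s) + 2 * (card X * (((card X / s : ℕ) : ℝ) * (2 * k)))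
      ≤ card X * ((4 * g + 3) * s) + 2 * (card X * ((card X / s : ℝ) * (2 * k))) := by
        gcongr
        exact Nat.cast_div_le
    _ = ((4 * g + 3) * s / card X + 4 * k / s) * (card X * card X : ℕ) := by
        push_cast
        field_simp
        ring

omit [PartialOrder X] in
lemma exists_block_size {N q : ℕ} {δ : ℝ} (hq : 1 ≤ q) (hδ : 0 < δ) (hδ_one : δ ≤ 1)
    (hN : 1 < δ ^ 2 * N / (400 * q)) :
    ∃ k s : ℕ, 0 < k ∧ k ≤ N ∧ 3 * k ≤ s ∧ δ ^ 2 * N / (400 * q) ≤ k ∧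
      (4 * q + 3) * s / N + 4 * k / s < δ := by
  have hN_pos : (0 : ℝ) < N := by
    refine (Nat.cast_nonneg N).lt_of_ne' fun h ↦ ?_
    rw [h] at hN
    norm_num at hN
  set k := ⌈δ ^ 2 * N / (400 * q)⌉₊
  set s := ⌈16 * k / δ⌉₊
  have hk : 1 < k := Nat.lt_ceil.2 (by simpa using hN)
  have hk_pos : (0 : ℝ) < k := by positivity
  have hq_pos : (0 : ℝ) < q := by positivity
  have hq_one : (1 : ℝ) ≤ q := by exact_mod_cast hq
  have hk_upper : k * (200 * q) ≤ δ ^ 2 * N := by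
    have := Nat.ceil_lt_add_one (zero_le_one.trans hN.le)
    calc k * (200 * q) ≤ 2 * (δ ^ 2 * N / (400 * q)) * (200 * q) := by gcongr; linarith
      _ = δ ^ 2 * N := by field_simp; norm_num
  have hk_le : (k : ℝ) ≤ N := by
    calc (k : ℝ) ≤ k * (200 * q) := le_mul_of_one_le_right hk_pos.le (by linarith)
      _ ≤ N := hk_upper.trans (mul_le_of_le_one_left hN_pos.le (pow_le_one₀ hδ.le hδ_one))
  have hs_lower : 16 * k ≤ s * δ := (div_le_iff₀ hδ).1 (Nat.le_ceil _)
  have hs_upper : s * δ ≤ 17 * k := by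
    have := mul_lt_mul_of_pos_right (Nat.ceil_lt_add_one (a := 16 * k / δ) (by positivity)) hδ
    rw [add_mul, div_mul_cancel₀ _ hδ.ne'] at this
    have : (1 : ℝ) < k := by exact_mod_cast hk
    linarith
  have hks : (3 * k : ℝ) ≤ s := by nlinarith
  have hnear : (4 * q + 3) * s / N ≤ 3 / 5 * δ := by
    rw [div_le_iff₀ hN_pos, ← mul_le_mul_iff_left₀ hδ]
    calc (4 * q + 3) * s * δ = (4 * q + 3) * (s * δ) := by ring
      _ ≤ 7 * q * (17 * k) := by gcongr; linarith
      _ ≤ 3 / 5 * (k * (200 * q)) := by nlinarith [mul_pos hk_pos hq_pos]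
      _ ≤ 3 / 5 * (δ ^ 2 * N) := by gcongr
      _ = 3 / 5 * δ * N * δ := by ring
  have hfar : 4 * k / s ≤ δ / 4 := by
    rw [div_le_div_iff₀ (by nlinarith) (by norm_num)]
    linarith
  exact ⟨k, s, hk.pos, by exact_mod_cast hk_le, by exact_mod_cast hks, Nat.le_ceil _, by linarith⟩

theorem hasBiclique_incomp [Fintype X] [Nonempty X] {q : ℕ} {δ : ℝ} (hq : 1 ≤ q)
    (hX : card X ≤ 2 ^ q) (hδ : 0 < δ) (h : δ ≤ density fun p : X × X ↦ Incomp p.1 p.2) :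
    HasBiclique Incomp (δ ^ 2 * card X / (400 * q)) := by
  by_contra hbiclique
  obtain ⟨x⟩ := ‹Nonempty X›
  have hlarge : 1 < δ ^ 2 * card X / (400 * q) := by
    by_contra! hle
    exact hbiclique ⟨{x}, {x}, by simpa using hle, by simpa using hle, by simp [IncompRel]⟩
  obtain ⟨k, s, hk, hk_card, hks, hk_lower, hdensity⟩ :=
    exists_block_size hq hδ (h.trans (density_le_one _)) hlarge
  exact (h.trans (density_incomp_le (fun h ↦ hbiclique (h.mono hk_lower fun _ _ h ↦ h)) hk
    (hk_card.trans hX) hks)).not_gt hdensity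

end Incomparability

section Dense

variable {V : Type*} [Fintype V] {l x : V → List Point} {lt : V → V → Prop}

lemma le_density_subtype_prod [Nonempty V] {p : V → Prop} [DecidablePred p] {r : V → V → Prop}
    {δ : ℝ} (hδ : 0 < δ) (hr : ∀ u v, r u v → p u ∧ p v)
    (h : δ ≤ density fun e : V × V ↦ r e.1 e.2) :
    δ * card V ≤ card {v // p v} ∧
      δ ≤ density fun e : {v // p v} × {v // p v} ↦ r e.1 e.2 := by
  classical
  obtain ⟨⟨u, v⟩, huv⟩ := exists_of_density_pos (hδ.trans_le h)
  have : Nonempty {v // p v} := ⟨u, (hr u v huv).1⟩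
  rw [le_density_iff, card_prod, Nat.cast_mul] at h
  have hpairs : #{e : V × V | r e.1 e.2} ≤ #{e : {v // p v} × {v // p v} | r e.1 e.2} := by
    refine card_le_card_of_surjOn (fun e ↦ (e.1.1, e.2.1)) fun ⟨u, v⟩ huv ↦ ?_
    have huv : r u v := by simpa using huv
    exact ⟨(⟨u, (hr u v huv).1⟩, ⟨v, (hr u v huv).2⟩), by simpa using huv, rfl⟩
  have hsquare : #{e : {v // p v} × {v // p v} | r e.1 e.2} ≤
      card {v // p v} * card {v // p v} := (card_le_univ _).trans_eq (card_prod _ _)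
  have hX : card {v // p v} ≤ card V := card_subtype_le _
  rify at hpairs hsquare hX
  constructor
  · refine le_of_mul_le_mul_right ?_ (Nat.cast_pos.2 (card_pos (α := V)))
    calc δ * card V * card V ≤ card {v // p v} * card {v // p v} := by linarith
      _ ≤ card {v // p v} * card V := by gcongr
  · rw [le_density_iff, card_prod, Nat.cast_mul]
    exact (mul_le_mul_of_nonneg_left (by gcongr) hδ.le).trans (h.trans hpairs)

lemma IsOrdered.hasBiclique (hx : IsOrdered x lt) {q : ℕ} {δ : ℝ} (hq : 1 ≤ q)
    (hV : card V ≤ 2 ^ q) (hδ : 0 < δ) (h : δ ≤ density fun p : V × V ↦ Meets (x p.1) (x p.2)) :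
    HasBiclique (fun u v ↦ Meets (x u) (x v)) (δ ^ 3 * card V / (400 * q)) := by
  classical
  obtain ⟨⟨u, v⟩, p, hpu, -⟩ := exists_of_density_pos (hδ.trans_le h)
  have : Nonempty V := ⟨u⟩
  let X := {v // x v ≠ []}
  have : Nonempty X := ⟨u, List.ne_nil_of_mem hpu⟩
  have : IsStrictOrder X fun u v ↦ lt u v :=
    { irrefl := fun u ↦ hx.irrefl u u.2
      trans := fun u v w ↦ hx.trans u v w u.2 v.2 w.2 }
  let : PartialOrder X := partialOrderOfSO fun u v ↦ lt u v
  have hincomp (u v : X) : IncompRel (· < ·) u v ↔ Meets (x u) (x v) := by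
    rw [← not_iff_not, hx.not_meets_iff u v u.2 v.2, IncompRel, ← not_or, not_not]
    rfl
  have hne (u v : V) (huv : Meets (x u) (x v)) : x u ≠ [] ∧ x v ≠ [] := by
    obtain ⟨p, hpu, hpv⟩ := huv
    exact ⟨List.ne_nil_of_mem hpu, List.ne_nil_of_mem hpv⟩
  obtain ⟨hlarge, hdense⟩ := le_density_subtype_prod hδ hne h
  simp only [← hincomp] at hdense
  obtain ⟨A, B, hA, hB, hAB⟩ := hasBiclique_incomp hq (card_subtype_le _ |>.trans hV) hδ hdense
  have hsize : δ ^ 3 * card V / (400 * q) ≤ δ ^ 2 * card X / (400 * q) := by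
    calc δ ^ 3 * card V / (400 * q) = δ ^ 2 * (δ * card V) / (400 * q) := by ring
      _ ≤ δ ^ 2 * card X / (400 * q) := by gcongr
  refine ⟨A.map (.subtype _), B.map (.subtype _), by simpa using hsize.trans hA,
    by simpa using hsize.trans hB, fun a ha b hb ↦ ?_⟩
  obtain ⟨a, haA, rfl⟩ := mem_map.1 ha
  obtain ⟨b, hbB, rfl⟩ := mem_map.1 hb
  exact (hincomp a b).1 (hAB a haA b hbB)

theorem hasBiclique_of_density [Nonempty V] (hl : ∀ v, (l v).IsChain Near) {q : ℕ}
    (hq : 1000 ≤ q) (hV : card V ≤ 2 ^ q)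
    (hd : 1 / (q : ℝ) ^ 10 ≤ density fun x : V × V ↦ Meets (l x.1) (l x.2)) :
    HasBiclique (fun u v ↦ Meets (l u) (l v)) (card V / (q : ℝ) ^ 800000) := by
  have hq_large : (1000 : ℝ) ≤ q := by exact_mod_cast hq
  have hq_one : (1 : ℝ) ≤ q := by linarith
  have hconst : (10 : ℝ) ^ 75 ≤ (q : ℝ) ^ 25 := by
    calc (10 : ℝ) ^ 75 = (1000 : ℝ) ^ 25 := by norm_num
      _ ≤ (q : ℝ) ^ 25 := by gcongr
  have hloss {δ : ℝ} {m : ℕ} (hδ : 1 / (q : ℝ) ^ m ≤ δ) :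
      1 / (q : ℝ) ^ (160 * m + 25) ≤ δ ^ 160 / 10 ^ 75 := by
    calc 1 / (q : ℝ) ^ (160 * m + 25) = (1 / (q : ℝ) ^ m) ^ 160 / q ^ 25 := by
          rw [div_pow, one_pow, ← pow_mul, div_div, ← pow_add, mul_comm m]
      _ ≤ δ ^ 160 / 10 ^ 75 := by gcongr
  have hδ := hloss (hloss (m := 10) le_rfl)
  by_contra hbiclique
  have hsmall {δ : ℝ} (hδ : 1 / (q : ℝ) ^ 260025 ≤ δ) :
      card V / (q : ℝ) ^ 800000 ≤ δ ^ 3 * card V / (400 * q) := by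
    have hδ_nonneg : 0 ≤ δ := le_trans (by positivity) hδ
    calc card V / (q : ℝ) ^ 800000 ≤ card V / (q : ℝ) ^ (260025 * 3 + 2) := by gcongr; simp
      _ = (1 / (q : ℝ) ^ 260025) ^ 3 * card V / (q * q) := by
          rw [div_pow, one_pow, ← pow_mul, pow_add]
          field_simp
      _ ≤ δ ^ 3 * card V / (400 * q) := by gcongr; linarith
  have hsmall' : card V / (q : ℝ) ^ 800000 ≤
      ((1 / (q : ℝ) ^ 10) ^ 160 / 10 ^ 75) ^ 160 / 10 ^ 75 * card V := by
    calc card V / (q : ℝ) ^ 800000 = 1 / (q : ℝ) ^ 800000 * card V := by ring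
      _ ≤ 1 / (q : ℝ) ^ (160 * (160 * 10 + 25) + 25) * card V := by gcongr; simp
      _ ≤ _ := by gcongr
  obtain ⟨x, lt, hxl, hx, hx_density⟩ := exists_isOrdered hl (by positivity)
    (div_le_one_of_le₀ (one_le_pow₀ hq_one) (by positivity)) rfl
    (fun h ↦ hbiclique (h.mono hsmall' fun _ _ h ↦ h)) hd
  exact hbiclique ((hx.hasBiclique (by omega) hV (by positivity) hx_density).mono (hsmall hδ)
    fun u v h ↦ (h.mono_left (hxl u)).mono_right (hxl v))

end Dense

/-! ### Sparse cuts and expansion -/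

section Expansion

variable {V : Type*} [Fintype V] {G : SimpleGraph V} {q r : ℕ} {A B H Z : Finset V} {u v : V}

/-- There are nonempty sets `A` and `B` without edges between them such that the vertices outside
`A` and `B` number at most a fraction `1 / q` of either. -/
def HasSparseCut (G : SimpleGraph V) (q : ℕ) : Prop :=
  ∃ A B S : Finset V, A.Nonempty ∧ B.Nonempty ∧ Disjoint A B ∧ (∀ v, v ∈ A ∨ v ∈ B ∨ v ∈ S) ∧
    (∀ a ∈ A, ∀ b ∈ B, ¬ G.Adj a b) ∧ q * #S ≤ #A ∧ q * #S ≤ #B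

open Classical in
/-- The outer vertex boundary of `A`. -/
noncomputable def boundary (G : SimpleGraph V) (A : Finset V) : Finset V :=
  {v | v ∉ A ∧ ∃ a ∈ A, G.Adj a v}

lemma mem_boundary : v ∈ boundary G A ↔ v ∉ A ∧ ∃ a ∈ A, G.Adj a v := by simp [boundary]

lemma disjoint_boundary : Disjoint A (boundary G A) :=
  disjoint_left.2 fun _ ha hb ↦ (mem_boundary.1 hb).1 ha

open Classical in
/-- Sets disjoint from `Z` with at most three fifths of all vertices expand by a factor
`1 + 1 / (8 * q)` outside `Z`. -/
def IsExpandingOutside (G : SimpleGraph V) (q : ℕ) (Z : Finset V) : Prop :=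
  ∀ B : Finset V, B.Nonempty → Disjoint B Z → 5 * #B ≤ 3 * card V →
    #B < 8 * q * #(boundary G B \ Z)

lemma card_le_card_boundary (hq : 1000 ≤ q) (h : ¬ HasSparseCut G q)
    (hA : 3 * #A ≤ 2 * card V) : #A ≤ 4 * q * #(boundary G A) := by
  classical
  by_contra! hlt
  have hcard : #(A ∪ boundary G A)ᶜ + (#A + #(boundary G A)) = card V := by
    rw [← card_union_of_disjoint disjoint_boundary, card_compl_add_card]
  have hq' : 1000 * #(boundary G A) ≤ q * #(boundary G A) := by gcongr
  rw [mul_assoc] at hlt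
  refine h ⟨A, (A ∪ boundary G A)ᶜ, boundary G A, card_pos.1 (by omega), card_pos.1 (by omega),
    disjoint_left.2 fun a ha hb ↦ mem_compl.1 hb (mem_union_left _ ha), fun v ↦ ?_,
    fun a ha b hb hab ↦ ?_, by omega, by omega⟩
  · simp only [mem_compl, mem_union]
    tauto
  · rw [mem_compl, mem_union, not_or] at hb
    exact hb.2 (mem_boundary.2 ⟨hb.1, a, ha, hab⟩)

lemma boundary_union_sdiff_subset [DecidableEq V] :
    boundary G (A ∪ B) \ H ⊆ (boundary G A \ H) ∪ (boundary G B \ (A ∪ H)) := by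
  intro v
  simp only [mem_sdiff, mem_union, mem_boundary]
  grind

/-- The vertices that non-expand outside `H`, taken maximal and together with `H`, leave an
expanding remainder. -/
lemma exists_expanding_compl (hq : 1000 ≤ q) (h : ¬ HasSparseCut G q)
    (hH : 4000 * q * #H ≤ card V) :
    ∃ Z, H ⊆ Z ∧ 400 * #Z ≤ card V ∧ IsExpandingOutside G q Z := by
  classical
  set F : Finset (Finset V) :=
    {A | Disjoint A H ∧ 3 * #A ≤ 2 * card V ∧ 8 * q * #(boundary G A \ H) ≤ #A} with hF
  obtain ⟨A, hA, hmax⟩ := exists_max_image F card ⟨∅, by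
    simp [hF, show boundary G ∅ = ∅ by simp [boundary]]⟩
  obtain ⟨hAH, hA_card, hA_boundary⟩ : _ ∧ _ ∧ _ := by simpa [hF] using hA
  have hA_small : 500 * #A ≤ card V := by
    have hexp := card_le_card_boundary hq h hA_card
    have hsplit : 4 * q * #(boundary G A) ≤ 4 * q * (#(boundary G A \ H) + #H) := by
      gcongr
      exact tsub_le_iff_right.1 (le_card_sdiff _ _)
    nlinarith
  refine ⟨A ∪ H, subset_union_right, ?_, fun B hB hBZ hB_card ↦ ?_⟩
  · have := card_union_le A H
    have : 4000 * 1000 * #H ≤ 4000 * q * #H := by gcongr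
    omega
  by_contra! hle
  rw [disjoint_union_right] at hBZ
  have hcard := card_union_of_disjoint hBZ.1.symm
  have hboundary : 8 * q * #(boundary G (A ∪ B) \ H) ≤ #(A ∪ B) := by
    calc 8 * q * #(boundary G (A ∪ B) \ H)
        ≤ 8 * q * (#(boundary G A \ H) + #(boundary G B \ (A ∪ H))) := by
          gcongr
          exact (card_le_card boundary_union_sdiff_subset).trans (card_union_le _ _)
      _ ≤ #(A ∪ B) := by rw [mul_add, hcard]; omega
  have := hmax (A ∪ B) (mem_filter.2 ⟨mem_univ _, disjoint_union_left.2 ⟨hAH, hBZ.2⟩, by omega,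
    hboundary⟩)
  have := hB.card_pos
  omega

open Classical in
/-- The vertices at the end of a walk of length at most `r` from `u` that avoids `Z`. -/
noncomputable def reach (G : SimpleGraph V) (Z : Finset V) (u : V) (r : ℕ) : Finset V :=
  {v | ∃ p : G.Walk u v, p.length ≤ r ∧ ∀ w ∈ p.support, w ∉ Z}

lemma mem_reach : v ∈ reach G Z u r ↔ ∃ p : G.Walk u v, p.length ≤ r ∧ ∀ w ∈ p.support, w ∉ Z := by
  simp [reach]

lemma mem_reach_self (hu : u ∉ Z) : u ∈ reach G Z u r := mem_reach.2 ⟨.nil, by simpa⟩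

lemma disjoint_reach : Disjoint (reach G Z u r) Z :=
  disjoint_left.2 fun v hv ↦ by
    obtain ⟨p, -, hp⟩ := mem_reach.1 hv
    exact hp v p.end_mem_support

lemma card_reach_add_card_boundary_le [DecidableEq V] :
    #(reach G Z u r) + #(boundary G (reach G Z u r) \ Z) ≤ #(reach G Z u (r + 1)) := by
  rw [← card_union_of_disjoint (disjoint_boundary.mono_right sdiff_subset)]
  refine card_le_card (union_subset (fun v hv ↦ ?_) fun v hv ↦ ?_)
  · obtain ⟨p, hr, hp⟩ := mem_reach.1 hv
    exact mem_reach.2 ⟨p, hr.trans r.le_succ, hp⟩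
  · obtain ⟨hv, hvZ⟩ := mem_sdiff.1 hv
    obtain ⟨-, a, ha, hav⟩ := mem_boundary.1 hv
    obtain ⟨p, hr, hp⟩ := mem_reach.1 ha
    refine mem_reach.2 ⟨p.concat hav, by simpa using hr, fun w hw ↦ ?_⟩
    rw [SimpleGraph.Walk.support_concat, List.mem_append] at hw
    obtain hw | hw := hw
    · exact hp w hw
    · rwa [List.mem_singleton.1 hw]

lemma lt_card_reach_or_pow_le_card_reach (hq : 0 < q) (hu : u ∉ Z)
    (hZ : IsExpandingOutside G q Z) (r : ℕ) :
    3 * card V < 5 * #(reach G Z u r) ∨ (1 + 1 / (8 * q : ℝ)) ^ r ≤ #(reach G Z u r) := by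
  classical
  induction r with
  | zero =>
    right
    simpa using card_pos.2 ⟨u, mem_reach_self (G := G) (r := 0) hu⟩
  | succ r ih =>
    have hstep := card_reach_add_card_boundary_le (G := G) (Z := Z) (u := u) (r := r)
    refine or_iff_not_imp_left.2 fun hsmall ↦ ?_
    have hgrowth := hZ (reach G Z u r) ⟨u, mem_reach_self hu⟩ disjoint_reach (by omega)
    have hpow := ih.resolve_left (by omega)
    have : (0 : ℝ) < q := by exact_mod_cast hq
    calc (1 + 1 / (8 * q : ℝ)) ^ (r + 1) = (1 + 1 / (8 * q : ℝ)) ^ r * (1 + 1 / (8 * q)) :=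
          pow_succ _ _
      _ ≤ #(reach G Z u r) * (1 + 1 / (8 * q)) := by gcongr
      _ = #(reach G Z u r) + #(reach G Z u r) / (8 * q) := by ring
      _ ≤ #(reach G Z u r) + #(boundary G (reach G Z u r) \ Z) := by
          gcongr
          rw [div_le_iff₀' (by positivity)]
          exact_mod_cast hgrowth.le
      _ ≤ #(reach G Z u (r + 1)) := by exact_mod_cast hstep

lemma lt_card_reach (hq : 0 < q) (hV : card V ≤ 2 ^ q) (hu : u ∉ Z)
    (hZ : IsExpandingOutside G q Z) :
    3 * card V < 5 * #(reach G Z u (8 * q * q)) := by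
  refine (lt_card_reach_or_pow_le_card_reach hq hu hZ _).elim id fun h ↦ ?_
  have : (0 : ℝ) < q := by exact_mod_cast hq
  have htwo : (2 : ℝ) ≤ (1 + 1 / (8 * q : ℝ)) ^ (8 * q) := by
    calc (2 : ℝ) = 1 + (8 * q : ℕ) * (1 / (8 * q : ℝ)) := by
          push_cast
          field_simp
          norm_num
      _ ≤ _ := one_add_mul_le_pow ((by norm_num : (-2 : ℝ) ≤ 0).trans (by positivity)) _
  have : (2 : ℝ) ^ q ≤ #(reach G Z u (8 * q * q)) := by
    refine le_trans ?_ h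
    rw [pow_mul]
    gcongr
  have : 2 ^ q ≤ #(reach G Z u (8 * q * q)) := by exact_mod_cast this
  have : 0 < card V := card_pos_iff.2 ⟨u⟩
  omega

theorem exists_walk_avoiding (hq : 1000 ≤ q) (hV : card V ≤ 2 ^ q) (h : ¬ HasSparseCut G q)
    (hH : 4000 * q * #H ≤ card V) :
    ∃ Z : Finset V, 400 * #Z ≤ card V ∧ ∀ u v, u ∉ Z → v ∉ Z →
      ∃ p : G.Walk u v, p.length < 17 * q ^ 2 ∧ ∀ w ∈ p.support, w ∉ H := by
  classical
  obtain ⟨Z, hHZ, hZ_card, hZ⟩ := exists_expanding_compl hq h hH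
  refine ⟨Z, hZ_card, fun u v hu hv ↦ ?_⟩
  obtain ⟨w, hw⟩ := inter_nonempty_of_card_lt_card_add_card (subset_univ _) (subset_univ _)
    (s := univ) (t := reach G Z u (8 * q * q)) (u := reach G Z v (8 * q * q)) (by
      have := lt_card_reach (by omega) hV hu hZ
      have := lt_card_reach (by omega) hV hv hZ
      rw [card_univ]
      omega)
  rw [mem_inter] at hw
  obtain ⟨p, hp_length, hp⟩ := mem_reach.1 hw.1
  obtain ⟨p', hp'_length, hp'⟩ := mem_reach.1 hw.2
  refine ⟨p.append p'.reverse, ?_, fun x hx hxH ↦ ?_⟩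
  · rw [SimpleGraph.Walk.length_append, SimpleGraph.Walk.length_reverse]
    nlinarith
  · rw [SimpleGraph.Walk.mem_support_append_iff, SimpleGraph.Walk.support_reverse,
      List.mem_reverse] at hx
    exact hx.elim (hp x · (hHZ hxH)) (hp' x · (hHZ hxH))

end Expansion

/-! ### Routings of small congestion -/

section Routing

variable {V : Type*} [Fintype V] [DecidableEq V] {P : V × V → Finset V} {c d m : ℕ}

lemma sum_card_routes_through (P : V × V → Finset V) :
    ∑ w, #{e | w ∈ P e} = ∑ e, #(P e) := by
  simpa [bipartiteAbove, bipartiteBelow] using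
    sum_card_bipartiteAbove_eq_sum_card_bipartiteBelow (fun w e ↦ w ∈ P e) (s := univ) (t := univ)

lemma mul_card_saturated_le (hm : 0 < m) (hP : ∀ e, #(P e) ≤ m) :
    c * #{w | c * m * card V ≤ #{e | w ∈ P e}} ≤ card V := by
  obtain hV | hV := (card V).eq_zero_or_pos
  · have := card_le_univ {w | c * m * card V ≤ #{e | w ∈ P e}}
    rw [show #{w | c * m * card V ≤ #{e | w ∈ P e}} = 0 by omega]
    simp
  refine le_of_mul_le_mul_left ?_ (Nat.mul_pos hm hV)
  calc m * card V * (c * #{w | c * m * card V ≤ #{e | w ∈ P e}})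
      = ∑ w with c * m * card V ≤ #{e | w ∈ P e}, c * m * card V := by
        rw [sum_const, smul_eq_mul]
        ring
    _ ≤ ∑ w with c * m * card V ≤ #{e | w ∈ P e}, #{e | w ∈ P e} :=
        sum_le_sum fun w hw ↦ (mem_filter.1 hw).2
    _ ≤ ∑ w, #{e | w ∈ P e} := sum_le_sum_of_subset (subset_univ _)
    _ ≤ ∑ _e : V × V, m := (sum_card_routes_through P).trans_le (sum_le_sum fun e _ ↦ hP e)
    _ = m * card V * card V := by
        rw [sum_const, card_univ, card_prod, smul_eq_mul]
        ring

lemma card_routes_through_update_le {e : V × V} {Q : Finset V}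
    (hP : ∀ w, #{e | w ∈ P e} ≤ d) (hQ : ∀ w ∈ Q, #{e | w ∈ P e} < d) (w : V) :
    #{e' | w ∈ Function.update P e Q e'} ≤ d := by
  by_cases hw : w ∈ Q
  · calc #{e' | w ∈ Function.update P e Q e'} ≤ #(insert e ({e' | w ∈ P e'} : Finset (V × V))) := by
          refine card_le_card fun e' he' ↦ ?_
          obtain rfl | hne := eq_or_ne e' e
          · exact mem_insert_self _ _
          · simpa [hne] using he'
      _ ≤ #{e' | w ∈ P e'} + 1 := card_insert_le _ _
      _ ≤ d := hQ w hw
  · refine (card_le_card fun e' he' ↦ ?_).trans (hP w)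
    obtain rfl | hne := eq_or_ne e' e
    · simp [hw] at he'
    · simpa [hne] using he'

/-- A family of routes with as many valid ones as possible is complete up to few vertices, since a
missing route could be added outside the vertices that are already used by many routes. -/
theorem exists_routing (R : V × V → Finset V → Prop) (hm : 0 < m)
    (h : ∀ H : Finset V, c * #H ≤ card V → ∃ Z : Finset V, d * #Z ≤ card V ∧
      ∀ u v, u ∉ Z → v ∉ Z → ∃ Q, #Q ≤ m ∧ Disjoint Q H ∧ R (u, v) Q) :
    ∃ (P : V × V → Finset V) (Z : Finset V), d * #Z ≤ card V ∧
      (∀ w, #{e | w ∈ P e} ≤ c * m * card V) ∧ ∀ u v, u ∉ Z → v ∉ Z → R (u, v) (P (u, v)) := by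
  classical
  obtain ⟨P, hP, hmax⟩ := exists_max_image
    {P : V × V → Finset V | (∀ e, #(P e) ≤ m) ∧ ∀ w, #{e | w ∈ P e} ≤ c * m * card V}
    (fun P ↦ #{e | R e (P e)}) ⟨fun _ ↦ ∅, by simp⟩
  simp only [mem_filter, mem_univ, true_and] at hP hmax
  obtain ⟨hP_card, hP_load⟩ := hP
  obtain ⟨Z, hZ, hroute⟩ := h _ (mul_card_saturated_le (c := c) hm hP_card)
  refine ⟨P, Z, hZ, hP_load, fun u v hu hv ↦ ?_⟩
  obtain ⟨Q, hQ_card, hQ_disj, hQ⟩ := hroute u v hu hv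
  by_contra hR
  refine (hmax (Function.update P (u, v) Q) ⟨fun e ↦ ?_, card_routes_through_update_le hP_load
    fun w hw ↦ ?_⟩).not_gt (card_lt_card ?_)
  · obtain rfl | hne := eq_or_ne e (u, v)
    · simpa using hQ_card
    · simpa [hne] using hP_card e
  · simpa using disjoint_left.1 hQ_disj hw
  · refine (Finset.ssubset_iff_of_subset fun e he ↦ ?_).2
      ⟨(u, v), by simpa using hQ, by simpa using hR⟩
    obtain rfl | hne := eq_or_ne e (u, v)
    · simpa using hQ
    · simpa [hne] using he

lemma density_crossing_le [Nonempty V] {r : V → V → Prop} (hP : ∀ w, #{e | w ∈ P e} ≤ d)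
    {i : Fin 4 → Fin 5} (hi : Function.Injective i) :
    density (fun f : Fin 5 → V ↦
      ∃ w ∈ P (f (i 0), f (i 1)), ∃ w' ∈ P (f (i 2), f (i 3)), r w w') ≤
      density (fun x : V × V ↦ r x.1 x.2) * (d / card V) ^ 2 := by
  classical
  rw [density_comp_injective hi
    (P := fun g : Fin 4 → V ↦ ∃ w ∈ P (g 0, g 1), ∃ w' ∈ P (g 2, g 3), r w w'),
    density_le_iff, density_eq_card_div, Fintype.card_fun, card_prod, Fintype.card_fin]
  let through (x : V × V) : Finset (Fin 4 → V) := {g | x.1 ∈ P (g 0, g 1) ∧ x.2 ∈ P (g 2, g 3)}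
  have hthrough (x : V × V) : #(through x) ≤ d * d := by
    calc #(through x) ≤ #(({e | x.1 ∈ P e} : Finset _) ×ˢ ({e | x.2 ∈ P e} : Finset _)) := by
          refine card_le_card_of_injOn (fun g ↦ ((g 0, g 1), (g 2, g 3)))
            (fun g hg ↦ by simpa [through] using hg) fun g _ g' _ h ↦ ?_
          simp only [Prod.mk.injEq] at h
          ext j
          fin_cases j <;> simp [h]
      _ ≤ d * d := by
          rw [card_product]
          gcongr <;> exact hP _
  have hcount : #{g : Fin 4 → V | ∃ w ∈ P (g 0, g 1), ∃ w' ∈ P (g 2, g 3), r w w'} ≤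
      #{x : V × V | r x.1 x.2} * (d * d) := by
    refine (card_le_card fun g hg ↦ ?_).trans (card_biUnion_le_card_mul _ through _ fun x _ ↦
      hthrough x)
    simp only [mem_filter, mem_univ, true_and] at hg
    obtain ⟨w, hw, w', hw', hr⟩ := hg
    simpa [through] using ⟨w, w', hr, hw, hw'⟩
  have hV : (0 : ℝ) < card V := by positivity
  rify at hcount
  refine hcount.trans_eq ?_
  push_cast
  field_simp

end Routing

section Planarity

variable {V : Type*} [Fintype V] [Nonempty V] {G : SimpleGraph V} {l : V → List Point} {q : ℕ}

omit [Fintype V] [Nonempty V] in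
lemma connectedIn_of_walk (hl : ∀ v, (l v).IsChain Near)
    (hG : ∀ u v, G.Adj u v → Meets (l u) (l v)) {u v : V} (p : G.Walk u v) {a b : Point}
    (ha : a ∈ l u) (hb : b ∈ l v) : ConnectedIn (⋃ w ∈ p.support, points (l w)) a b := by
  induction p generalizing a with
  | nil => exact (connectedIn_points (hl _) ha hb).mono (by simp)
  | @cons u v w huv p ih =>
    obtain ⟨c, hcu, hcv⟩ := hG u v huv
    refine ((connectedIn_points (hl u) ha hcu).mono ?_).trans ((ih hcv hb).mono ?_)
    · exact Set.subset_biUnion_of_mem (u := fun w ↦ points (l w)) List.mem_cons_self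
    · exact Set.biUnion_subset_biUnion_left fun _ ↦ List.mem_cons_of_mem _

omit [Fintype V] [Nonempty V] in
/-- Five vertices that are pairwise joined by routes draw a `K₅`, so that two routes with distinct
ends meet. -/
lemma exists_meets_of_routes {P : V × V → Finset V} {f : Fin 5 → V} {a : Fin 5 → Point}
    (hP : ∀ i j, ConnectedIn (⋃ w ∈ P (f i, f j), points (l w)) (a i) (a j)) :
    ∃ i : Fin 4 → Fin 5, Function.Injective i ∧
      ∃ w ∈ P (f (i 0), f (i 1)), ∃ w' ∈ P (f (i 2), f (i 3)), Meets (l w) (l w') := by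
  have hcross := not_disjoint_drawing_K5 (S := fun i j ↦ ⋃ w ∈ P (f i, f j), points (l w))
    fun i j _ ↦ hP i j
  push Not at hcross
  obtain ⟨i, j, k, m, -, -, hnodup, hcross⟩ := hcross
  refine ⟨![i, j, k, m], List.nodup_ofFn.1 (by simpa using hnodup), ?_⟩
  by_contra! hmeets
  refine hcross ?_
  simp only [Set.disjoint_iUnion_left, Set.disjoint_iUnion_right]
  exact fun w hw w' hw' ↦ disjoint_points.2 (hmeets w' hw' w hw)

lemma exists_forall_notMem_and_not {ι κ : Type*} [Fintype κ] [DecidableEq κ] {s : Finset ι}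
    {Q : ι → (κ → V) → Prop} {Z : Finset V} {a b : ℝ} (hZ : #Z ≤ a * card V)
    (hQ : ∀ i ∈ s, density (Q i) ≤ b) (hab : card κ * a + #s * b < 1) :
    ∃ f : κ → V, (∀ k, f k ∉ Z) ∧ ∀ i ∈ s, ¬ Q i f := by
  classical
  have hmem (k : κ) : density (fun f : κ → V ↦ f k ∈ Z) ≤ a :=
    density_le_of_update k fun f ↦ by
      simpa only [Function.update_self, density_le_iff, filter_univ_mem] using hZ
  have hbad := (density_or_le (fun f : κ → V ↦ ∃ k ∈ univ, f k ∈ Z) fun f ↦ ∃ i ∈ s, Q i f).trans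
    (add_le_add ((density_exists_le _ _).trans (sum_le_sum fun k _ ↦ hmem k))
      ((density_exists_le _ _).trans (sum_le_sum hQ)))
  rw [sum_const, sum_const, nsmul_eq_mul, nsmul_eq_mul, card_univ] at hbad
  obtain ⟨f, hf⟩ := exists_not_of_density_lt_one (hbad.trans_lt hab)
  push Not at hf
  exact ⟨f, fun k ↦ hf.1 k (mem_univ k), hf.2⟩

omit [Nonempty V] in
lemma exists_walk_routing [DecidableEq V] (hq : 1000 ≤ q) (hV : card V ≤ 2 ^ q)
    (h : ¬ HasSparseCut G q) :
    ∃ (P : V × V → Finset V) (Z : Finset V), 400 * #Z ≤ card V ∧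
      (∀ w, #{e | w ∈ P e} ≤ 4000 * q * (17 * q ^ 2) * card V) ∧
      ∀ u v, u ∉ Z → v ∉ Z → ∃ p : G.Walk u v, ∀ w ∈ p.support, w ∈ P (u, v) := by
  refine exists_routing (fun e Q ↦ ∃ p : G.Walk e.1 e.2, ∀ w ∈ p.support, w ∈ Q) (by positivity)
    fun H hH ↦ ?_
  obtain ⟨Z, hZ, hwalk⟩ := exists_walk_avoiding hq hV h hH
  refine ⟨Z, hZ, fun u v hu hv ↦ ?_⟩
  obtain ⟨p, hp_length, hp⟩ := hwalk u v hu hv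
  refine ⟨p.support.toFinset, ?_, ?_, p, by simp⟩
  · have := p.support.toFinset_card_le
    rw [SimpleGraph.Walk.length_support] at this
    omega
  · exact disjoint_left.2 fun w hw ↦ hp w (List.mem_toFinset.1 hw)

lemma mul_congestion_sq_le {δ : ℝ} (hq : 1000 ≤ q) (hδ : δ ≤ 1 / (q : ℝ) ^ 10) :
    δ * ((4000 * q * (17 * q ^ 2) * card V : ℕ) / card V) ^ 2 ≤ 1 / 200 := by
  have hq' : (1000 : ℝ) ≤ q := by exact_mod_cast hq
  push_cast
  calc δ * (4000 * q * (17 * q ^ 2) * card V / card V) ^ 2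
      ≤ 1 / (q : ℝ) ^ 10 * (4000 * q * (17 * q ^ 2) * card V / card V) ^ 2 := by gcongr
    _ = 68000 ^ 2 / (q : ℝ) ^ 4 := by
        field_simp
        norm_num
    _ ≤ 68000 ^ 2 / 1000 ^ 4 := by gcongr
    _ ≤ 1 / 200 := by norm_num

theorem one_div_le_density_of_not_hasSparseCut (hl : ∀ v, (l v).IsChain Near)
    (hl_ne : ∀ v, l v ≠ []) (hG : ∀ u v, G.Adj u v → Meets (l u) (l v)) (hq : 1000 ≤ q)
    (hV : card V ≤ 2 ^ q) (h : ¬ HasSparseCut G q) :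
    1 / (q : ℝ) ^ 10 ≤ density fun x : V × V ↦ Meets (l x.1) (l x.2) := by
  classical
  obtain ⟨P, Z, hZ, hload, hroute⟩ := exists_walk_routing hq hV h
  by_contra! hsparse
  have hcross (i : Fin 4 → Fin 5) (hi : i ∈ ({i | Function.Injective i} : Finset _)) :=
    (density_crossing_le (r := fun u v ↦ Meets (l u) (l v)) hload (by simpa using hi)).trans
      (mul_congestion_sq_le hq hsparse.le)
  obtain ⟨f, hfZ, hf⟩ := exists_forall_notMem_and_not (Z := Z) (a := 1 / 400) (by
    rify at hZ
    linarith) hcross (by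
    rw [← Fintype.card_subtype,
      card_congr (Equiv.subtypeInjectiveEquivEmbedding (Fin 4) (Fin 5)), card_embedding_eq]
    norm_num [Nat.descFactorial])
  choose a ha using fun i ↦ List.exists_mem_of_ne_nil _ (hl_ne (f i))
  obtain ⟨i, hi, hmeets⟩ := exists_meets_of_routes (P := P) (f := f) (a := a) fun i j ↦ by
    obtain ⟨p, hp⟩ := hroute _ _ (hfZ i) (hfZ j)
    exact (connectedIn_of_walk hl hG p (ha i) (ha j)).mono
      (Set.biUnion_subset_biUnion_left fun w hw ↦ hp w hw)
  exact hf i (by simpa using hi) hmeets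

end Planarity

open Real

/-! ### Recursion along sparse cuts and bicliques -/

section Decomposable

variable {V : Type*} {G : SimpleGraph V} {q M : ℕ}

/-- Every induced subgraph on `m ≥ M` vertices has a sparse cut, or a complete pair of vertex sets
of size at least `m / M`. -/
def IsDecomposable (G : SimpleGraph V) (q M : ℕ) : Prop :=
  ∀ U : Finset V, M ≤ #U →
    HasSparseCut (G.induce (U : Set V)) q ∨ HasBiclique (G.induce (U : Set V)).Adj (#U / M)

lemma HasBiclique.adj {R : V → V → Prop} {s : ℝ} (h : HasBiclique R s) (hs : 2 ≤ s)
    (hR : ∀ u v, u ≠ v → R u v → G.Adj u v) : HasBiclique G.Adj (s / 3) := by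
  classical
  obtain ⟨A, B, hA, hB, hAB⟩ := h
  obtain ⟨m, hm⟩ : ∃ m, m = ⌈s⌉₊ := ⟨_, rfl⟩
  have hsm : s ≤ m := hm ▸ Nat.le_ceil s
  have hmA : m ≤ #A := hm ▸ Nat.ceil_le.2 hA
  have hmB : m ≤ #B := hm ▸ Nat.ceil_le.2 hB
  have hm_two : 2 ≤ m := by exact_mod_cast hs.trans hsm
  have hhalf {X : Finset V} (hX : m / 2 ≤ #X) : s / 3 ≤ #X := by
    have hthird : m ≤ 3 * #X := by omega
    rify at hthird
    linarith
  obtain ⟨A', hA', hA'_card⟩ := exists_subset_card_eq (s := A) (n := m / 2) (by omega)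
  have hdiff := le_card_sdiff A' B
  refine ⟨A', B \ A', hhalf hA'_card.ge, hhalf (by omega), fun a ha b hb ↦ ?_⟩
  obtain ⟨hb, hbA⟩ := mem_sdiff.1 hb
  exact hR a b (fun h ↦ hbA (h ▸ ha)) (hAB a (hA' ha) b hb)

lemma hasSparseCut_or_hasBiclique [Fintype V] {l : V → List Point}
    (hl : ∀ v, (l v).IsChain Near) (hl_ne : ∀ v, l v ≠ [])
    (hG : ∀ u v, u ≠ v → (G.Adj u v ↔ Meets (l u) (l v))) (hq : 1000 ≤ q)
    (hV : card V ≤ 2 ^ q) (hlarge : q ^ 800001 ≤ card V) :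
    HasSparseCut G q ∨ HasBiclique G.Adj (card V / (q ^ 800001 : ℕ)) := by
  have : Nonempty V := card_pos_iff.1 (lt_of_lt_of_le (by positivity) hlarge)
  refine or_iff_not_imp_left.2 fun h ↦ ?_
  have hbiclique := hasBiclique_of_density hl hq hV
    (one_div_le_density_of_not_hasSparseCut hl hl_ne (fun u v h ↦ (hG u v h.ne).1 h) hq hV h)
  have hq' : (1000 : ℝ) ≤ q := by exact_mod_cast hq
  have hsize : (2 : ℝ) ≤ card V / (q : ℝ) ^ 800000 := by
    rw [le_div_iff₀ (by positivity)]
    rify at hlarge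
    calc (2 : ℝ) * (q : ℝ) ^ 800000 ≤ q * (q : ℝ) ^ 800000 := by gcongr; linarith
      _ = (q : ℝ) ^ 800001 := (pow_succ' _ _).symm
      _ ≤ card V := hlarge
  refine (hbiclique.adj hsize fun u v huv ↦ (hG u v huv).2).mono ?_ fun _ _ h ↦ h
  rw [div_div, Nat.cast_pow, pow_succ (q : ℝ) 800000]
  gcongr
  linarith

theorem isDecomposable_of_meets [Fintype V] {l : V → List Point}
    (hl : ∀ v, (l v).IsChain Near) (hl_ne : ∀ v, l v ≠ [])
    (hG : ∀ u v, u ≠ v → (G.Adj u v ↔ Meets (l u) (l v))) (hq : 1000 ≤ q)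
    (hV : card V ≤ 2 ^ q) : IsDecomposable G q (q ^ 800001) := by
  intro U hU
  have hU_card : card (U : Set V) = #U := card_coe U
  rw [← hU_card] at hU ⊢
  exact hasSparseCut_or_hasBiclique (l := fun u ↦ l u) (fun u ↦ hl u) (fun u ↦ hl_ne u)
    (fun u v huv ↦ hG u v (Subtype.coe_ne_coe.2 huv)) hq
    ((card_subtype_le _).trans hV) hU

lemma HasSparseCut.of_induce [DecidableEq V] {U : Finset V}
    (h : HasSparseCut (G.induce (U : Set V)) q) :
    ∃ A B : Finset V, A ⊆ U ∧ B ⊆ U ∧ A.Nonempty ∧ B.Nonempty ∧ Disjoint A B ∧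
      (∀ a ∈ A, ∀ b ∈ B, ¬ G.Adj a b) ∧ q * #(U \ (A ∪ B)) ≤ #A ∧ q * #(U \ (A ∪ B)) ≤ #B := by
  obtain ⟨A, B, S, hA, hB, hAB, hcover, hadj, hSA, hSB⟩ := h
  have hS : #(U \ (A.map (.subtype _) ∪ B.map (.subtype _))) ≤ #S := by
    rw [← card_map (.subtype _)]
    refine card_le_card fun x hx ↦ ?_
    obtain ⟨hxU, hx⟩ := mem_sdiff.1 hx
    lift x to (U : Set V) using hxU
    rw [← map_union] at hx
    have hxAB : x ∉ A ∪ B := fun h ↦ hx (mem_map_of_mem (.subtype _) h)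
    exact mem_map_of_mem (.subtype _) (by grind : x ∈ S)
  refine ⟨A.map (.subtype _), B.map (.subtype _), coe_subset.1 (map_subtype_subset A),
    coe_subset.1 (map_subtype_subset B), hA.map, hB.map, (disjoint_map _).2 hAB,
    fun a ha b hb ↦ ?_, ?_, ?_⟩
  · obtain ⟨a', ha', rfl⟩ := mem_map.1 ha
    obtain ⟨b', hb', rfl⟩ := mem_map.1 hb
    exact hadj a' ha' b' hb'
  · rw [card_map]
    exact (Nat.mul_le_mul_left q hS).trans hSA
  · rw [card_map]
    exact (Nat.mul_le_mul_left q hS).trans hSB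

lemma HasBiclique.of_induce {U : Finset V} {s : ℝ}
    (h : HasBiclique (G.induce (U : Set V)).Adj s) :
    ∃ A B : Finset V, A ⊆ U ∧ B ⊆ U ∧ s ≤ #A ∧ s ≤ #B ∧ G.IsCompleteBetween (A : Set V) B := by
  obtain ⟨A, B, hA, hB, hAB⟩ := h
  refine ⟨A.map (.subtype _), B.map (.subtype _), coe_subset.1 (map_subtype_subset A),
    coe_subset.1 (map_subtype_subset B), by rwa [card_map], by rwa [card_map], fun a ha b hb ↦ ?_⟩
  obtain ⟨a', ha', rfl⟩ := mem_map.1 ha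
  obtain ⟨b', hb', rfl⟩ := mem_map.1 hb
  exact hAB a' ha' b' hb'

end Decomposable

section Potential

variable {q a b s x : ℝ}

/-- The potential of a set of size `x` in the recursion. It is subadditive along sparse cuts, as
the logarithmic term pays for the vertices that a cut removes. -/
noncomputable def potential (q x : ℝ) : ℝ := x * (1 - logb 2 x / q)

lemma potential_zero : potential q 0 = 0 := zero_mul _

lemma potential_le_self (hq : 0 < q) (hx : 1 ≤ x) : potential q x ≤ x := by
  have : 0 ≤ logb 2 x := logb_nonneg (by norm_num) hx
  exact mul_le_of_le_one_right (by linarith) (sub_le_self 1 (by positivity))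

lemma half_le_potential (hq : 0 < q) (hx : 0 < x) (hxq : 2 * logb 2 x ≤ q) :
    x / 2 ≤ potential q x := by
  have hlog : logb 2 x / q ≤ 1 / 2 := by
    rw [div_le_iff₀ hq]
    linarith
  unfold potential
  nlinarith

lemma potential_add_le (hq : 0 < q) (ha : 1 ≤ a) (hb : 1 ≤ b) (hs : 0 ≤ s) (hsa : q * s ≤ a)
    (hsb : q * s ≤ b) : potential q (a + b + s) ≤ potential q a + potential q b := by
  wlog hab : a ≤ b generalizing a b
  · rw [add_comm a b, add_comm (potential q a)]
    exact this hb ha hsb hsa (not_le.1 hab).le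
  obtain ⟨L, hL⟩ : ∃ L, L = logb 2 (a + b + s) := ⟨_, rfl⟩
  have hL_nonneg : 0 ≤ L := hL ▸ logb_nonneg (by norm_num) (by linarith)
  have hloga : logb 2 a ≤ L - 1 := by
    have : logb 2 (2 * a) ≤ L :=
      hL ▸ logb_le_logb_of_le (by norm_num) (by linarith) (by linarith)
    rw [logb_mul (by norm_num) (by linarith), logb_self_eq_one (by norm_num)] at this
    linarith
  have hlogb : logb 2 b ≤ L := hL ▸ logb_le_logb_of_le (by norm_num) (by linarith) (by linarith)
  have hgain : s ≤ a / q := by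
    rw [le_div_iff₀ hq]
    linarith
  have hgain_s : s * (1 - L / q) ≤ s := mul_le_of_le_one_right hs (sub_le_self 1 (by positivity))
  unfold potential
  rw [← hL]
  calc (a + b + s) * (1 - L / q) = (a + b) * (1 - L / q) + s * (1 - L / q) := by ring
    _ ≤ (a + b) * (1 - L / q) + a / q := by linarith
    _ = a * (1 - (L - 1) / q) + b * (1 - L / q) := by ring
    _ ≤ a * (1 - logb 2 a / q) + b * (1 - logb 2 b / q) := by gcongr

end Potential

section IndependentSet

variable {V : Type*} {G : SimpleGraph V} {q M : ℕ} {U A B : Finset V}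

lemma isClique_union_of_isCompleteBetween {S T : Set V} (hS : G.IsClique S) (hT : G.IsClique T)
    (hST : G.IsCompleteBetween S T) : G.IsClique (S ∪ T) := by
  have : Std.Symm G.Adj := ⟨fun _ _ h ↦ h.symm⟩
  rw [SimpleGraph.IsClique, Set.pairwise_union_of_symm]
  exact ⟨hS, hT, fun a ha b hb _ ↦ hST ha hb⟩

lemma cliqueFreeOn_or_of_isCompleteBetween {m n : ℕ} (hAU : A ⊆ U) (hBU : B ⊆ U)
    (hAB : G.IsCompleteBetween (A : Set V) B) (hU : G.CliqueFreeOn (U : Set V) (m + n)) :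
    G.CliqueFreeOn (A : Set V) m ∨ G.CliqueFreeOn (B : Set V) n := by
  classical
  unfold SimpleGraph.CliqueFreeOn at *
  by_contra! h
  obtain ⟨⟨S, hSA, hS⟩, ⟨T, hTB, hT⟩⟩ := h
  rw [coe_subset] at hSA hTB
  refine hU (t := S ∪ T) (mod_cast union_subset (hSA.trans hAU) (hTB.trans hBU)) ⟨?_, ?_⟩
  · rw [coe_union]
    exact isClique_union_of_isCompleteBetween hS.isClique hT.isClique
      fun a ha b hb ↦ hAB (hSA ha) (hTB hb)
  · have hST : Disjoint S T := (disjoint_coe.1 hAB.disjoint).mono hSA hTB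
    rw [card_union_of_disjoint hST, hS.card_eq, hT.card_eq]

lemma exists_isIndepSet_potential_of_hasSparseCut {N : ℝ} (hq : 0 < q)
    (hU : HasSparseCut (G.induce (U : Set V)) q)
    (ih : ∀ A ⊂ U, ∃ I ⊆ A, G.IsIndepSet (I : Set V) ∧ potential q #A ≤ N * #I) :
    ∃ I ⊆ U, G.IsIndepSet (I : Set V) ∧ potential q #U ≤ N * #I := by
  classical
  obtain ⟨A, B, hAU, hBU, hA, hB, hAB, hadj, hSA, hSB⟩ := hU.of_induce
  have hcard : #(U \ (A ∪ B)) + (#A + #B) = #U := by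
    rw [← card_union_of_disjoint hAB]
    exact card_sdiff_add_card_eq_card (union_subset hAU hBU)
  have hA_pos : 1 ≤ #A := hA.card_pos
  have hB_pos : 1 ≤ #B := hB.card_pos
  obtain ⟨I, hIA, hI, hI_card⟩ := ih A (hAU.ssubset_of_ne (by rintro rfl; omega))
  obtain ⟨J, hJB, hJ, hJ_card⟩ := ih B (hBU.ssubset_of_ne (by rintro rfl; omega))
  refine ⟨I ∪ J, union_subset (hIA.trans hAU) (hJB.trans hBU), ?_, ?_⟩
  · rw [← SimpleGraph.isClique_compl] at hI hJ ⊢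
    rw [coe_union]
    refine isClique_union_of_isCompleteBetween hI hJ fun a ha b hb ↦ ?_
    exact (SimpleGraph.compl_adj ..).2
      ⟨disjoint_left.1 hAB (hIA ha) |>.imp (· ▸ hJB hb), hadj a (hIA ha) b (hJB hb)⟩
  · rw [card_union_of_disjoint (hAB.mono hIA hJB)]
    calc potential q #U = potential q (#A + #B + #(U \ (A ∪ B)) : ℝ) := by
          rw [← hcard]
          push_cast
          ring_nf
      _ ≤ potential q #A + potential q #B :=
          potential_add_le (by positivity) (by exact_mod_cast hA_pos) (by exact_mod_cast hB_pos)
            (by positivity) (by exact_mod_cast hSA) (by exact_mod_cast hSB)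
      _ ≤ N * #I + N * #J := by gcongr
      _ = N * (#I + #J : ℕ) := by push_cast; ring

lemma exists_isIndepSet_potential {m n N : ℕ} (hq : 0 < q) (hM : 0 < M) (hN : 0 < N)
    (hG : IsDecomposable G q M)
    (hleft : ∀ U : Finset V, G.CliqueFreeOn (U : Set V) m →
      ∃ I ⊆ U, G.IsIndepSet (I : Set V) ∧ #U ≤ N * #I)
    (hright : ∀ U : Finset V, G.CliqueFreeOn (U : Set V) n →
      ∃ I ⊆ U, G.IsIndepSet (I : Set V) ∧ #U ≤ N * #I)
    (hU : G.CliqueFreeOn (U : Set V) (m + n)) :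
    ∃ I ⊆ U, G.IsIndepSet (I : Set V) ∧ potential q #U ≤ M * N * #I := by
  induction U using Finset.strongInduction with
  | H U ih =>
  obtain rfl | ⟨x, hx⟩ := U.eq_empty_or_nonempty
  · exact ⟨∅, by simp, by simp, by simp [potential_zero]⟩
  have hpotential : potential q #U ≤ #U :=
    potential_le_self (by positivity) (by exact_mod_cast card_pos.2 ⟨x, hx⟩)
  obtain hsmall | hlarge := lt_or_ge #U M
  · refine ⟨{x}, by simpa, by simp, hpotential.trans ?_⟩
    rw [card_singleton]
    exact_mod_cast hsmall.le.trans (by nlinarith)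
  have hbiclique {A : Finset V} (hA : (#U / M : ℝ) ≤ #A)
      (h : ∃ I ⊆ A, G.IsIndepSet (I : Set V) ∧ #A ≤ N * #I) (hAU : A ⊆ U) :
      ∃ I ⊆ U, G.IsIndepSet (I : Set V) ∧ potential q #U ≤ M * N * #I := by
    obtain ⟨I, hIA, hI, hI_card⟩ := h
    refine ⟨I, hIA.trans hAU, hI, hpotential.trans ?_⟩
    rw [div_le_iff₀' (by positivity)] at hA
    rify at hI_card
    rw [mul_assoc]
    exact hA.trans (by gcongr)
  obtain hcut | hU_biclique := hG U hlarge
  · exact exists_isIndepSet_potential_of_hasSparseCut hq hcut fun A hA ↦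
      ih A hA (hU.subset _ (coe_subset.2 hA.subset))
  · obtain ⟨A, B, hAU, hBU, hA, hB, hAB⟩ := hU_biclique.of_induce
    obtain h | h := cliqueFreeOn_or_of_isCompleteBetween hAU hBU hAB hU
    · exact hbiclique hA (hleft A h) hAU
    · exact hbiclique hB (hright B h) hBU

lemma exists_isIndepSet_of_cliqueFreeOn [Fintype V] (hq : 0 < q) (hM : 0 < M)
    (hG : IsDecomposable G q M) (hV : 2 * logb 2 (card V) ≤ q) (k : ℕ) :
    ∀ U : Finset V, G.CliqueFreeOn (U : Set V) (2 ^ k) →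
      ∃ I ⊆ U, G.IsIndepSet (I : Set V) ∧ #U ≤ (2 * M) ^ k * #I := by
  induction k with
  | zero =>
    intro U hU
    obtain rfl | ⟨x, hx⟩ := U.eq_empty_or_nonempty
    · exact ⟨∅, by simp, by simp, by simp⟩
    · exact absurd (hU.subset _ (Set.singleton_subset_iff.2 hx)) (by simp)
  | succ k ih =>
    intro U hU
    rw [pow_succ, mul_two] at hU
    obtain ⟨I, hIU, hI, hI_card⟩ :=
      exists_isIndepSet_potential (N := (2 * M) ^ k) hq hM (by positivity) hG ih ih hU
    refine ⟨I, hIU, hI, ?_⟩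
    obtain rfl | hU_ne := U.eq_empty_or_nonempty
    · simp
    have hU_pos : (0 : ℝ) < #U := by exact_mod_cast hU_ne.card_pos
    have hlog : logb 2 #U ≤ logb 2 (card V) :=
      logb_le_logb_of_le (by norm_num) hU_pos (by exact_mod_cast card_le_univ U)
    have hhalf := half_le_potential (by positivity) hU_pos ((by linarith : 2 * logb 2 #U ≤ q))
    rify
    calc (#U : ℝ) ≤ 2 * potential q #U := by linarith
      _ ≤ 2 * (M * ((2 * M) ^ k : ℕ) * #I) := by gcongr
      _ = (2 * M) ^ (k + 1) * #I := by push_cast; ring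

end IndependentSet

section Greedy

variable {V : Type*} {G : SimpleGraph V} {c : ℕ} {K : ℝ} {U I : Finset V}

lemma colorable_induce_succ [DecidableEq V] (hI : G.IsIndepSet (I : Set V))
    (h : (G.induce ((U \ I : Finset V) : Set V)).Colorable c) :
    (G.induce (U : Set V)).Colorable (c + 1) := by
  obtain ⟨f⟩ := h
  let g (u : (U : Set V)) : Option (Fin c) :=
    if h : (u : V) ∈ I then none else some (f ⟨u, mem_sdiff.2 ⟨u.2, h⟩⟩)
  have hg {u v : (U : Set V)} (huv : (G.induce (U : Set V)).Adj u v) : g u ≠ g v := by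
    by_cases hu : (u : V) ∈ I <;> by_cases hv : (v : V) ∈ I
    · exact absurd huv (hI hu hv (Subtype.coe_ne_coe.2 huv.ne))
    · simp [g, hu, hv]
    · simp [g, hu, hv]
    · simpa [g, hu, hv] using f.valid (v := ⟨u, mem_sdiff.2 ⟨u.2, hu⟩⟩)
        (w := ⟨v, mem_sdiff.2 ⟨v.2, hv⟩⟩) huv
  simpa using (SimpleGraph.Coloring.mk g hg).colorable

lemma mul_log_le_mul_log_sub_one {x u i : ℝ} (hK : 0 < K) (hx : 0 < x) (hu_pos : 0 < u)
    (hu : x + i = u) (hi : u ≤ K * i) : K * log x ≤ K * log u - 1 := by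
  have hratio : K * (x / u) ≤ K - 1 := by
    rw [← mul_div_assoc, div_le_iff₀ hu_pos]
    linear_combination hi + K * hu
  have hlog := log_le_sub_one_of_pos (div_pos hx hu_pos)
  rw [log_div hx.ne' hu_pos.ne'] at hlog
  nlinarith

theorem exists_colorable_induce (hK : 0 < K)
    (h : ∀ U : Finset V, ∃ I ⊆ U, G.IsIndepSet (I : Set V) ∧ #U ≤ K * #I) (hU : U.Nonempty) :
    ∃ c : ℕ, (G.induce (U : Set V)).Colorable c ∧ c ≤ 1 + K * log #U := by
  classical
  induction U using Finset.strongInduction with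
  | H U ih =>
  obtain ⟨I, hIU, hI, hI_card⟩ := h U
  have hU_pos : (0 : ℝ) < #U := by exact_mod_cast hU.card_pos
  have hI_ne : I.Nonempty := by
    rw [← card_pos]
    exact_mod_cast pos_of_mul_pos_right (hU_pos.trans_le hI_card) hK.le
  obtain ⟨c, hc, hc_le⟩ : ∃ c : ℕ, (G.induce ((U \ I : Finset V) : Set V)).Colorable c ∧
      c ≤ K * log #U := by
    obtain hempty | hne := (U \ I).eq_empty_or_nonempty
    · have : IsEmpty ((U \ I : Finset V) : Set V) := by simp [hempty]
      exact ⟨0, .of_isEmpty 0, by simpa using mul_nonneg hK.le (log_natCast_nonneg _)⟩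
    · obtain ⟨c, hc, hc_le⟩ := ih _ (sdiff_ssubset hIU hI_ne) hne
      refine ⟨c, hc, hc_le.trans ?_⟩
      linarith [mul_log_le_mul_log_sub_one (x := #(U \ I)) (u := #U) (i := #I) hK
        (by exact_mod_cast hne.card_pos) hU_pos
        (by exact_mod_cast card_sdiff_add_card_eq_card hIU) hI_card]
  refine ⟨c + 1, colorable_induce_succ hI hc, ?_⟩
  push_cast
  linarith

end Greedy

open Topology

/-! ### Discretization -/

lemma ConnectedIn.exists_isChain_cons {S : Set Point} {a b : Point} (h : ConnectedIn S a b) :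
    ∀ l : List Point, (b :: l).IsChain Near → (∀ x ∈ b :: l, x ∈ S) →
      ∃ l' : List Point, (a :: l').IsChain Near ∧ (∀ x ∈ a :: l', x ∈ S) ∧ b :: l ⊆ a :: l' := by
  induction h with
  | refl _ => exact fun l hl hlS ↦ ⟨l, hl, hlS, List.Subset.refl _⟩
  | @step a b c ha hab _ ih =>
    intro l hl hlS
    obtain ⟨l', hl', hlS', hsub⟩ := ih l hl hlS
    exact ⟨b :: l', hl'.cons_cons hab, List.forall_mem_cons.2 ⟨ha, hlS'⟩,
      List.subset_cons_of_subset a hsub⟩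

lemma exists_isChain_of_connectedIn {S : Set Point} {a : Point} (ha : a ∈ S) (T : Finset Point)
    (hT : ∀ b ∈ T, ConnectedIn S a b) :
    ∃ l : List Point, (a :: l).IsChain Near ∧ (∀ x ∈ a :: l, x ∈ S) ∧ ∀ b ∈ T, b ∈ a :: l := by
  induction T using Finset.induction_on with
  | empty => exact ⟨[], by simp, by simpa using ha, by simp⟩
  | insert b T _ ih =>
    rw [forall_mem_insert] at hT
    obtain ⟨l, hl, hlS, hTl⟩ := ih hT.2
    obtain ⟨m, hm, hmS, hlm⟩ := hT.1.symm.exists_isChain_cons l hl hlS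
    obtain ⟨r, hr, hrS, hmr⟩ := hT.1.exists_isChain_cons m hm hmS
    exact ⟨r, hr, hrS, (forall_mem_insert ..).2
      ⟨hmr List.mem_cons_self, fun x hx ↦ hmr (hlm (hTl x hx))⟩⟩

section Cells

variable {s : ℝ} {c : Set (ℝ × ℝ)} {x y : ℝ × ℝ} {p : Point}

/-- The lattice point at the lower left corner of the cell of side `s` that contains `x`. -/
noncomputable def cell (s : ℝ) (x : ℝ × ℝ) : Point := (⌊x.1 / s⌋, ⌊x.2 / s⌋)

/-- The position of a lattice point when the lattice is drawn with cells of side `s`. -/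
def position (s : ℝ) (p : Point) : ℝ × ℝ := (p.1 * s, p.2 * s)

/-- The lattice points whose position is within `2 * s` of the set `c`, in the sup distance. -/
def cellsNear (s : ℝ) (c : Set (ℝ × ℝ)) : Set Point :=
  {p | ∃ x ∈ c, dist (position s p) x ≤ 2 * s}

lemma dist_floor_div_mul_le (hs : 0 < s) (t : ℝ) : dist (⌊t / s⌋ * s) t ≤ s := by
  have hle := Int.floor_le (t / s)
  have hlt := Int.lt_floor_add_one (t / s)
  rw [le_div_iff₀ hs] at hle
  rw [div_lt_iff₀ hs] at hlt
  rw [dist_eq, abs_le]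
  constructor <;> linarith

lemma floor_div_le_floor_div_add_one (hs : 0 < s) {t u : ℝ} (h : dist t u ≤ s) :
    ⌊t / s⌋ ≤ ⌊u / s⌋ + 1 := by
  rw [← Int.floor_add_one, div_add_one hs.ne']
  gcongr
  linarith [(abs_le.1 (dist_eq t u ▸ h)).2]

lemma connectedIn_cellsNear_of_dist_le (hs : 0 < s) (hx : x ∈ c) (hy : y ∈ c)
    (h : dist x y ≤ s) : ConnectedIn (cellsNear s c) (cell s x) (cell s y) := by
  obtain ⟨h₁, h₂⟩ : dist x.1 y.1 ≤ s ∧ dist x.2 y.2 ≤ s := max_le_iff.1 h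
  have hcell {z : ℝ × ℝ} (hz : z ∈ c) : cell s z ∈ cellsNear s c :=
    ⟨z, hz, max_le ((dist_floor_div_mul_le hs _).trans (by linarith))
      ((dist_floor_div_mul_le hs _).trans (by linarith))⟩
  have hcorner : (⌊y.1 / s⌋, ⌊x.2 / s⌋) ∈ cellsNear s c := by
    refine ⟨x, hx, max_le ?_ ((dist_floor_div_mul_le hs _).trans (by linarith))⟩
    calc dist (⌊y.1 / s⌋ * s) x.1 ≤ dist (⌊y.1 / s⌋ * s) y.1 + dist y.1 x.1 := dist_triangle ..
      _ ≤ 2 * s := by linarith [dist_floor_div_mul_le hs y.1, dist_comm y.1 x.1]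
  have := floor_div_le_floor_div_add_one hs h₁
  have := floor_div_le_floor_div_add_one hs h₂
  have := floor_div_le_floor_div_add_one hs (dist_comm x.1 y.1 ▸ h₁)
  have := floor_div_le_floor_div_add_one hs (dist_comm x.2 y.2 ▸ h₂)
  refine .step (hcell hx) ?_ (.of_near hcorner (hcell hy) ?_) <;>
    simp only [Near, cell] <;> omega

lemma connectedIn_cellsNear_of_isPreconnected (hc : IsPreconnected c) (hs : 0 < s) (hx : x ∈ c)
    (hy : y ∈ c) : ConnectedIn (cellsNear s c) (cell s x) (cell s y) := by
  refine hc.induction₂ (fun x y ↦ ConnectedIn (cellsNear s c) (cell s x) (cell s y))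
    (fun x hx ↦ ?_) (fun _ _ _ _ _ _ ↦ .trans) (fun _ _ _ _ ↦ .symm) hx hy
  filter_upwards [self_mem_nhdsWithin, nhdsWithin_le_nhds (Metric.closedBall_mem_nhds x hs)]
    with y hy hyx
  exact connectedIn_cellsNear_of_dist_le hs hx hy (dist_comm x y ▸ hyx)

end Cells

section Strings

variable {V : Type*} [Finite V] {γ : V → Set (ℝ × ℝ)}

lemma exists_pos_forall_le_dist (hγ : ∀ v, IsCompact (γ v)) :
    ∃ d > 0, ∀ u v, Disjoint (γ u) (γ v) → ∀ x ∈ γ u, ∀ y ∈ γ v, d ≤ dist x y := by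
  have hpair (e : V × V) : ∀ᶠ d in 𝓝[>] (0 : ℝ),
      Disjoint (γ e.1) (γ e.2) → ∀ x ∈ γ e.1, ∀ y ∈ γ e.2, d ≤ dist x y := by
    by_cases h : Disjoint (γ e.1) (γ e.2)
    · obtain ⟨r, hr, hdist⟩ :=
        Metric.exists_pos_forall_lt_edist (hγ e.1) (hγ e.2).isClosed h
      filter_upwards [Ioc_mem_nhdsGT (NNReal.coe_pos.2 hr)] with d hd _ x hx y hy
      have := hdist x hx y hy
      rw [edist_nndist, ENNReal.coe_lt_coe, ← NNReal.coe_lt_coe, coe_nndist] at this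
      exact hd.2.trans this.le
    · exact .of_forall fun _ h' ↦ absurd h' h
  obtain ⟨d, hd, hd_pos⟩ := ((Filter.eventually_all.2 hpair).and self_mem_nhdsWithin).exists
  exact ⟨d, hd_pos, fun u v ↦ hd (u, v)⟩

lemma exists_finset_forall_inter_nonempty (γ : V → Set (ℝ × ℝ)) :
    ∃ P : Finset (ℝ × ℝ), ∀ u v, (γ u ∩ γ v).Nonempty → ∃ p ∈ P, p ∈ γ u ∧ p ∈ γ v := by
  classical
  have := Fintype.ofFinite V
  choose p hp using fun e : {e : V × V // (γ e.1 ∩ γ e.2).Nonempty} ↦ e.2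
  exact ⟨univ.image p, fun u v h ↦
    ⟨p ⟨(u, v), h⟩, mem_image_of_mem p (mem_univ _), hp ⟨(u, v), h⟩⟩⟩

theorem exists_isChain_near_meets_iff (hγ : ∀ v, IsCompact (γ v))
    (hγ' : ∀ v, IsConnected (γ v)) :
    ∃ l : V → List Point, (∀ v, (l v).IsChain Near) ∧ (∀ v, l v ≠ []) ∧
      ∀ u v, Meets (l u) (l v) ↔ (γ u ∩ γ v).Nonempty := by
  classical
  obtain ⟨d, hd, hdist⟩ := exists_pos_forall_le_dist hγ
  obtain ⟨P, hP⟩ := exists_finset_forall_inter_nonempty γ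
  obtain ⟨s, hs, hsd⟩ : ∃ s > 0, 4 * s < d := ⟨d / 5, by positivity, by linarith⟩
  have hlist (v : V) : ∃ l : List Point, l.IsChain Near ∧ l ≠ [] ∧
      (∀ a ∈ l, a ∈ cellsNear s (γ v)) ∧ ∀ p ∈ P, p ∈ γ v → cell s p ∈ l := by
    obtain ⟨x, hx⟩ := (hγ' v).nonempty
    have hconn {y : ℝ × ℝ} (hy : y ∈ γ v) :=
      connectedIn_cellsNear_of_isPreconnected (hγ' v).isPreconnected hs hx hy
    obtain ⟨l, hl, hl_near, hl_mem⟩ := exists_isChain_of_connectedIn (hconn hx).mem_left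
      ({p ∈ P | p ∈ γ v}.image (cell s)) (by
        simp only [forall_mem_image, mem_filter]
        exact fun p hp ↦ hconn hp.2)
    exact ⟨_, hl, List.cons_ne_nil _ _, hl_near, fun p hp hpv ↦
      hl_mem _ (mem_image_of_mem _ (mem_filter.2 ⟨hp, hpv⟩))⟩
  choose l hl hl_ne hl_near hl_mem using hlist
  refine ⟨l, hl, hl_ne, fun u v ↦ ⟨fun ⟨a, hau, hav⟩ ↦ ?_, fun h ↦ ?_⟩⟩
  · by_contra hempty
    obtain ⟨x, hx, hax⟩ := hl_near u a hau
    obtain ⟨y, hy, hay⟩ := hl_near v a hav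
    rw [← Set.not_disjoint_iff_nonempty_inter, not_not] at hempty
    linarith [hdist u v hempty x hx y hy, dist_triangle_left x y (position s a)]
  · obtain ⟨p, hp, hpu, hpv⟩ := hP u v h
    exact ⟨cell s p, hl_mem u p hp hpu, hl_mem v p hp hpv⟩

end Strings

/-! ### Numerical estimates -/

section Numerics

variable {n t q E k : ℕ} {L : ℝ}

lemma three_halves_le_logb (hn : 2 < n) : 3 / 2 ≤ logb 2 n := by
  have hpow : logb 2 (2 ^ 3) ≤ logb 2 ((n : ℝ) ^ 2) := by
    refine logb_le_logb_of_le (by norm_num) (by norm_num) ?_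
    have : (3 : ℝ) ≤ n := by exact_mod_cast hn
    nlinarith
  rw [logb_pow, logb_pow, logb_self_eq_one (by norm_num)] at hpow
  push_cast at hpow
  linarith

lemma log_natCast_le_logb (n : ℕ) : log n ≤ logb 2 n := by
  rw [logb, le_div_iff₀ (log_pos (by norm_num))]
  have := log_natCast_nonneg n
  nlinarith [log_two_lt_d9]

lemma le_two_pow_of_logb_le (h : logb 2 n ≤ q) : n ≤ 2 ^ q := by
  rw [← Nat.clog_le_iff_le_pow (by norm_num), ← natCeil_logb_natCast, Nat.ceil_le]
  exact_mod_cast h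

lemma clog_le_two_mul_logb (ht : 2 ≤ t) : (Nat.clog 2 t : ℝ) ≤ 2 * logb 2 t := by
  have hone : 1 ≤ logb 2 t := by
    rw [le_logb_iff_rpow_le (by norm_num) (by positivity), rpow_one]
    exact_mod_cast ht
  have := Nat.ceil_lt_add_one (a := logb 2 t) (by linarith)
  rw [← natCeil_logb_natCast, Nat.cast_ofNat]
  linarith

lemma one_add_pow_mul_le_pow (hL : 3 / 2 ≤ L) (hq : 1 ≤ q) (hqL : q ≤ 1001 * L) (hk : 1 ≤ k) :
    1 + (2 * (q : ℝ) ^ E) ^ k * L ≤ L ^ ((19 * E + 5) * k) := by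
  have hL_one : 1 ≤ L := by linarith
  have hq_one : (1 : ℝ) ≤ q := by exact_mod_cast hq
  have hqL' : q ≤ L ^ 19 := by
    calc (q : ℝ) ≤ 1001 * L := hqL
      _ ≤ (3 / 2) ^ 18 * L := by gcongr; norm_num
      _ ≤ L ^ 18 * L := by gcongr
      _ = L ^ 19 := (pow_succ _ _).symm
  have htwo : 2 ≤ L ^ 2 := by nlinarith
  have hprod : 1 ≤ (2 * (q : ℝ) ^ E) ^ k * L :=
    one_le_mul_of_one_le_of_one_le
      (one_le_pow₀ (by linarith [one_le_pow₀ hq_one (n := E)])) hL_one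
  calc 1 + (2 * (q : ℝ) ^ E) ^ k * L ≤ 2 * ((2 * (q : ℝ) ^ E) ^ k * L) := by linarith
    _ ≤ L ^ 2 * ((L ^ 2 * (L ^ 19) ^ E) ^ k * L) := by gcongr
    _ = L ^ ((19 * E + 2) * k + 3) := by ring
    _ ≤ L ^ ((19 * E + 5) * k) := pow_le_pow_right₀ hL_one (by nlinarith)

lemma one_add_pow_mul_log_le_rpow (hn : 2 < n) (ht : 2 ≤ t) (hqn : q = ⌈1000 * logb 2 n⌉₊) :
    1 + (2 * (q : ℝ) ^ E) ^ Nat.clog 2 t * log n ≤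
      logb 2 n ^ ((2 * (19 * E + 5)) * logb 2 t) := by
  have hL := three_halves_le_logb hn
  have hq : (q : ℝ) ≤ 1001 * logb 2 n := by
    have := Nat.ceil_lt_add_one (a := 1000 * logb 2 n) (by linarith)
    rw [hqn]
    linarith
  have hq_one : 1 ≤ q := hqn ▸ Nat.one_le_ceil_iff.2 (by linarith)
  calc 1 + (2 * (q : ℝ) ^ E) ^ Nat.clog 2 t * log n
      ≤ 1 + (2 * (q : ℝ) ^ E) ^ Nat.clog 2 t * logb 2 n := by
        gcongr
        exact log_natCast_le_logb n
    _ ≤ logb 2 n ^ ((19 * E + 5) * Nat.clog 2 t) :=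
        one_add_pow_mul_le_pow hL hq_one hq (Nat.clog_pos (by norm_num) ht)
    _ = logb 2 n ^ (((19 * E + 5) * Nat.clog 2 t : ℕ) : ℝ) := (rpow_natCast _ _).symm
    _ ≤ logb 2 n ^ ((2 * (19 * E + 5)) * logb 2 t) := by
        gcongr
        · linarith
        · push_cast
          nlinarith [clog_le_two_mul_logb ht]

end Numerics

section Coloring

variable {V : Type*} [Fintype V] {G : SimpleGraph V} {l : V → List Point} {q : ℕ}

theorem exists_colorable_of_cliqueFree [Nonempty V] (hl : ∀ v, (l v).IsChain Near)
    (hl_ne : ∀ v, l v ≠ []) (hG : ∀ u v, u ≠ v → (G.Adj u v ↔ Meets (l u) (l v)))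
    (hq : 1000 ≤ q) (hV : 2 * logb 2 (card V) ≤ q) {k : ℕ} (hfree : G.CliqueFree (2 ^ k)) :
    ∃ c : ℕ, G.Colorable c ∧ c ≤ 1 + (2 * (q : ℝ) ^ 800001) ^ k * log (card V) := by
  have hV_card : card V ≤ 2 ^ q := by
    refine le_two_pow_of_logb_le ?_
    have : 0 ≤ logb 2 (card V) :=
      logb_nonneg (by norm_num) (by exact_mod_cast Fintype.card_pos (α := V))
    linarith
  have hind (U : Finset V) := exists_isIndepSet_of_cliqueFreeOn (by omega) (by positivity)
    (isDecomposable_of_meets hl hl_ne hG hq hV_card) hV k U hfree.cliqueFreeOn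
  obtain ⟨c, hc, hc_le⟩ := exists_colorable_induce (G := G) (U := univ)
    (K := (2 * (q : ℝ) ^ 800001) ^ k) (by positivity)
    (fun U ↦ (hind U).imp fun I hI ↦ ⟨hI.1, hI.2.1, by exact_mod_cast hI.2.2⟩) univ_nonempty
  rw [coe_univ] at hc
  exact ⟨c, SimpleGraph.Colorable.of_hom (SimpleGraph.induceUnivIso G).symm.toHom hc, hc_le⟩

end Coloring

end StringGraph

open StringGraph in
theorem string_graph_chromatic_number_general :
    ∃ C : ℝ, 0 < C ∧
      ∀ (t : ℕ), 2 ≤ t →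
        ∀ (V : Type*) [Fintype V] (G : SimpleGraph V) (γ : V → Set (ℝ × ℝ)),
          (∀ v, IsCompact (γ v)) → (∀ v, IsConnected (γ v)) →
          (∀ u v, u ≠ v → (G.Adj u v ↔ (γ u ∩ γ v).Nonempty)) →
          G.CliqueFree t → 2 < Fintype.card V →
          ∃ k : ℕ, G.Colorable k ∧
            (k : ℝ) ≤ (Real.logb 2 (Fintype.card V)) ^ (C * Real.logb 2 t) := by
  refine ⟨2 * (19 * (800001 : ℕ) + 5), by positivity, ?_⟩
  intro t ht V _ G γ hcompact hconn hG hfree hn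
  obtain ⟨l, hl, hl_ne, hmeets⟩ := exists_isChain_near_meets_iff hcompact hconn
  obtain ⟨q, hq⟩ : ∃ q, q = ⌈1000 * Real.logb 2 (Fintype.card V)⌉₊ := ⟨_, rfl⟩
  have hlog := three_halves_le_logb hn
  have hq_log : 1000 * Real.logb 2 (Fintype.card V) ≤ q := hq ▸ Nat.le_ceil _
  have hq_large : 1000 ≤ q := by
    rify
    linarith
  have : Nonempty V := Fintype.card_pos_iff.1 (by omega)
  obtain ⟨c, hc, hc_le⟩ := exists_colorable_of_cliqueFree hl hl_ne
    (fun u v huv ↦ (hG u v huv).trans (hmeets u v).symm) hq_large (by linarith)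
    (hfree.mono (Nat.le_pow_clog one_lt_two t))
  exact ⟨c, hc, hc_le.trans (one_add_pow_mul_log_le_rpow hn ht hq)⟩

lemma IsCurve.isCompact {c : Set (ℝ × ℝ)} (h : IsCurve c) : IsCompact c := by
  obtain ⟨f, hf, rfl⟩ := h
  exact isCompact_Icc.image_of_continuousOn hf

lemma IsCurve.isConnected {c : Set (ℝ × ℝ)} (h : IsCurve c) : IsConnected c := by
  obtain ⟨f, hf, rfl⟩ := h
  exact (isConnected_Icc zero_le_one).image f hf

/-- There is an absolute constant `C > 0` such that for every integer `t ≥ 2`, every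
`K_t`-free string graph on `n > 2` vertices has chromatic number at most
`(log₂ n)^(C·log₂ t)`. -/
theorem string_graph_chromatic_number :
    ∃ C : ℝ, 0 < C ∧
      ∀ (t : ℕ), 2 ≤ t →
        ∀ (V : Type) [Fintype V] (G : SimpleGraph V),
          IsStringGraph G → G.CliqueFree t → 2 < Fintype.card V →
          ∃ k : ℕ, G.Colorable k ∧
            (k : ℝ) ≤ (Real.logb 2 (Fintype.card V)) ^ (C * Real.logb 2 t) := by
  obtain ⟨C, hC, h⟩ := string_graph_chromatic_number_general
  exact ⟨C, hC, fun t ht V _ G ⟨γ, hγ, hG⟩ hfree hn ↦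
    h t ht V G γ (fun v ↦ (hγ v).isCompact) (fun v ↦ (hγ v).isConnected) hG hfree hn⟩
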